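/- arXiv:1307.1013 — 2 statements merged into one kernel-verified Lean document; each statement's English description precedes it below -/
import Mathlib

section
/- There is no bipartite almost planar simple graph H with v(H) ≥ 5 vertices, exactly 3·v(H) − 8 edges, and minimum degree at most 3 (i.e., containing a vertex of degree ≤ 3). -/
/-!
The theorem is the equality case of the bound `m ≤ 3n - 8` for bipartite 1-planar graphs, proved
here by turning a drawing into a combinatorial map and discharging on its faces.

**From drawings to permutations.** A small initial piece of every edge is attached to its end
vertex, and the middle parts of edges that cross are glued together. This gives finitely many
compact connected sets (one for every vertex, and one for every crossing pair or uncrossed edge)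
joined by disjoint links, one for each dart. Replacing these sets by their neighbouring points in a
fine square grid (`hypermap_of_sets`) gives disjoint connected sets of grid points. The grid is
planar in the homological sense that every mod 2 cycle bounds (`grid_planar`), a property that
survives contraction of edges (`PlanarMap.contract`). The result (`hypermap_of_drawing`) is a pair
of permutations `σ`, `q` of the darts, whose cycles are the vertices and the edges or crossing
pairs, and which satisfies `HPlanar`. No form of the Jordan curve theorem is needed. By linear
algebra over `ZMod 2`, `HPlanar` yields the Euler inequality (`euler`), the faces being the cycles
of `φ = σ⁻¹ * τ`.

**Clean crossings.** If two crossing edges share an end, or if their ends do not alternate around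
the crossing, the crossing is removed by rerouting, which does not change the graph (`resolve`).
Afterwards each crossing has four distinct ends.

**Discharging.** A dart `d` is given weight `1` if it is uncrossed; otherwise `2` or `3` according
to whether the next dart around the crossing starts at a vertex of the same colour. By parity every
face has even weight, and simplicity makes it at least `4`. A corner of a face of weight `4` gets
charge `4` minus the weights of its two sides, other corners get `4`. At a vertex all of whose
faces have weight `4`, charge plus degree is three times the number of uncrossed darts, and there
are at least two of these (`two_uncrossed`); at any other vertex of degree at least `3` it is at
least `7`. So it is at least `6` in all cases, which together with the Euler inequality gives
`m + 8 ≤ 3n` when the minimum degree is at least three (`discharge`, `core`). Equality forces all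
faces to have weight `4` and each vertex to have exactly two uncrossed darts, and a vertex of
degree three then leads to two parallel edges (`no_three`).

**Conclusion.** Deleting vertices of degree at most two extends the bound to all bipartite 1-planar
graphs with at least four vertices (`bound`). If the given graph has a vertex of degree at most
two, deleting it leaves at least `3 (v - 1) - 8 + 1` edges on `v - 1 ≥ 4` vertices, against the
bound; otherwise a vertex of degree three contradicts the equality case.
-/

open Set

/-- A drawing of a simple graph `G` in the plane: an injective placement of vertices
together with, for each edge, a continuous injective curve between the points of its
endpoints, whose interior avoids all vertex points; any two distinct edge curves meet in
finitely many points, and no point lies in the interiors of three distinct edge curves. -/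
structure Drawing {V : Type*} (G : SimpleGraph V) where
  pos : V → ℝ × ℝ
  pos_inj : Function.Injective pos
  curve : G.edgeSet → ℝ → ℝ × ℝ
  curve_cont : ∀ e, ContinuousOn (curve e) (Icc 0 1)
  curve_inj : ∀ e, InjOn (curve e) (Icc 0 1)
  curve_ends : ∀ e : G.edgeSet, ∃ a b : V, (e : Sym2 V) = s(a, b) ∧
      curve e 0 = pos a ∧ curve e 1 = pos b
  interior_no_vertex : ∀ e, ∀ t ∈ Ioo (0 : ℝ) 1, ∀ v, curve e t ≠ pos v
  finite_meet : ∀ e f, e ≠ f → (curve e '' Icc 0 1 ∩ curve f '' Icc 0 1).Finite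
  no_triple_point : ∀ p : ℝ × ℝ, ∀ e f g, e ≠ f → e ≠ g → f ≠ g →
      p ∈ curve e '' Ioo 0 1 → p ∈ curve f '' Ioo 0 1 → p ∈ curve g '' Ioo 0 1 → False

/-- Two edges cross in a drawing if some point lies in the interiors of both curves. -/
def Drawing.Crosses {V : Type*} {G : SimpleGraph V} (D : Drawing G) (e f : G.edgeSet) : Prop :=
  e ≠ f ∧ ∃ p : ℝ × ℝ, p ∈ D.curve e '' Ioo 0 1 ∧ p ∈ D.curve f '' Ioo 0 1

/-- A drawing is almost planar (1-planar) if every edge crosses at most one other edge. -/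
def Drawing.IsAlmostPlanar {V : Type*} {G : SimpleGraph V} (D : Drawing G) : Prop :=
  ∀ e f g, D.Crosses e f → D.Crosses e g → f = g

/-- A graph is almost planar if it admits a drawing in which every edge crosses at most
one other edge. -/
def SimpleGraph.AlmostPlanar {V : Type*} (G : SimpleGraph V) : Prop :=
  ∃ D : Drawing G, D.IsAlmostPlanar

namespace AP
open Equiv Equiv.Perm

/-! ### Homological planarity of combinatorial maps -/

/-- The mod 2 chain `c` has even sum over each cycle of `σ`: its sum against every function that is
constant on the cycles vanishes. -/
def Bal {G : Type*} [Fintype G] (σ : Perm G) (c : G → ZMod 2) : Prop :=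
  ∀ χ : G → ZMod 2, (∀ d, χ (σ d) = χ d) → ∑ d, χ d * c d = 0

/-- Planarity, in homological form, of the map with darts `G`, dart reversal `α`, rotation `σ` and
edges the `α`-orbits contained in `T`: every mod 2 cycle `c` is a boundary. The label `ℓ d` is the
value on the face at the corner that follows `d` in the rotation; it changes by `c` whenever an
edge is passed. Darts outside `T` are dangling half-edges. -/
def PlanarMap {G : Type*} [Fintype G] (α : G → G) (σ : Perm G) (T : Set G) : Prop :=
  ∀ c : G → ZMod 2, (∀ d, d ∉ T → c d = 0) → (∀ d, c (α d) = c d) → Bal σ c →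
    ∃ ℓ : G → ZMod 2, (∀ d ∈ T, ℓ (α d) = ℓ d + c d) ∧ ∀ d, ℓ (σ d) = ℓ d + c (σ d)

/-- Planarity, in homological form, of the hypermap `(σ, τ)`. The elements of `D` are the edges of a
bipartite map whose black and white vertices are the cycles of `σ` and of `τ`, with `σ` running
counterclockwise and `τ` clockwise, so that both pass from a link to the link on the same side of
it; the faces are the cycles of `σ⁻¹ * τ`. As in `PlanarMap`, every mod 2 cycle is required to be
the boundary of some labelling `ℓ` of the faces. -/
def HPlanar {D : Type*} [Fintype D] (σ τ : Perm D) : Prop :=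
  ∀ c : D → ZMod 2, Bal σ c → Bal τ c →
    ∃ ℓ : D → ZMod 2, (∀ d, ℓ (σ d) = ℓ d + c (σ d)) ∧ ∀ d, ℓ (τ d) = ℓ d + c (τ d)

lemma sameCycle_step {G : Type*} (σ : Perm G) (x : G) : σ.SameCycle x (σ x) :=
  sameCycle_apply_right.2 (SameCycle.refl _ _)

/-- A relation that is an equivalence and contains one step of `σ` contains `SameCycle σ`. -/
lemma sameCycle_induct {G : Type*} [Finite G] {σ : Perm G} {r : G → G → Prop}
    (hr : Equivalence r) (h : ∀ x, r x (σ x)) {x y : G} (hxy : σ.SameCycle x y) : r x y := by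
  obtain ⟨n, rfl⟩ := hxy.exists_nat_pow_eq
  induction n with
  | zero => simpa using hr.refl x
  | succ n ih =>
    rw [pow_succ', Perm.mul_apply]
    exact hr.trans (ih ⟨n, by simp⟩) (h _)

lemma sameCycle_equivalence {G : Type*} (σ : Perm G) : Equivalence σ.SameCycle :=
  ⟨SameCycle.refl _, fun h => h.symm, fun h h' => h.trans h'⟩

/-- Multiplying by a transposition of elements of different cycles merges these two cycles. -/
lemma merge_sameCycle {G : Type*} [Finite G] [DecidableEq G] {σ : Perm G} {a b : G}
    (hab : ¬ σ.SameCycle a b) (x y : G) :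
    (σ * swap a b).SameCycle x y ↔
      Relation.EqvGen (fun u v => σ.SameCycle u v ∨ (u = a ∧ v = b)) x y := by
  set σ' := σ * swap a b with hσ'
  have hne : a ≠ b := fun h => hab (h ▸ SameCycle.refl _ _)
  constructor
  · refine sameCycle_induct (Relation.EqvGen.is_equivalence _) fun x => ?_
    have hE := Relation.EqvGen.is_equivalence (fun u v => σ.SameCycle u v ∨ (u = a ∧ v = b))
    have hs : ∀ x, Relation.EqvGen (fun u v => σ.SameCycle u v ∨ (u = a ∧ v = b)) x (σ x) :=
      fun x => Relation.EqvGen.rel _ _ (Or.inl (sameCycle_step _ _))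
    have hj := Relation.EqvGen.rel (r := fun u v => σ.SameCycle u v ∨ (u = a ∧ v = b)) a b
      (Or.inr ⟨rfl, rfl⟩)
    by_cases h1 : x = a
    · subst h1
      simp only [hσ', Perm.mul_apply, swap_apply_left]
      exact hE.trans hj (hs _)
    by_cases h2 : x = b
    · subst h2
      simp only [hσ', Perm.mul_apply, swap_apply_right]
      exact hE.trans (hE.symm hj) (hs _)
    simp only [hσ', Perm.mul_apply, swap_apply_of_ne_of_ne h1 h2]
    exact hs _
  · have hE := sameCycle_equivalence σ'
    -- walking along `σ` from `σ e` meets neither `a` nor `b` until it is back at `e`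
    have key : ∀ e e', ¬ σ.SameCycle e e' → (∀ y, y ≠ e → y ≠ e' → σ' y = σ y) →
        σ'.SameCycle (σ e) e := by
      intro e e' hee hs
      have Q : ∀ n : ℕ, σ'.SameCycle (σ e) ((σ ^ n) (σ e)) ∨ σ'.SameCycle (σ e) e := by
        intro n
        induction n with
        | zero => left; simp [SameCycle.refl]
        | succ n ih =>
          rcases ih with ih | ih
          · by_cases h : (σ ^ n) (σ e) = e
            · right; rw [h] at ih; exact ih
            · left
              have h' : (σ ^ n) (σ e) ≠ e' := by
                intro h'
                apply hee
                rw [← h']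
                exact (sameCycle_step σ e).trans ⟨n, by simp⟩
              rw [pow_succ', Perm.mul_apply, ← hs _ h h']
              exact ih.trans (sameCycle_step _ _)
          · right; exact ih
      obtain ⟨n, hn⟩ := (sameCycle_step σ e).symm.exists_nat_pow_eq
      rcases Q n with h | h
      · rwa [hn] at h
      · exact h
    have h0 : ∀ y, y ≠ a → y ≠ b → σ' y = σ y := by
      intro y h1 h2
      simp only [hσ', Perm.mul_apply, swap_apply_of_ne_of_ne h1 h2]
    have ka := key a b hab h0
    have kb := key b a (fun h => hab h.symm) (fun y h1 h2 => h0 y h2 h1)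
    have hstep : ∀ x, σ'.SameCycle x (σ x) := by
      intro x
      by_cases h1 : x = a
      · subst h1; exact ka.symm
      by_cases h2 : x = b
      · subst h2; exact kb.symm
      rw [← h0 x h1 h2]; exact sameCycle_step _ _
    have hjoin : σ'.SameCycle a b := by
      have : σ' a = σ b := by simp [hσ']
      exact (sameCycle_step σ' a).trans (this ▸ kb)
    intro h
    induction h with
    | rel u v h =>
      rcases h with h | ⟨rfl, rfl⟩
      · exact sameCycle_induct hE hstep h
      · exact hjoin
    | refl => exact hE.refl _
    | symm _ _ _ ih => exact hE.symm ih
    | trans _ _ _ _ _ ih1 ih2 => exact hE.trans ih1 ih2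

lemma z2_add_self (a : ZMod 2) : a + a = 0 := CharTwo.add_self_eq_zero a

/-- Contracting the edge `{a, α a}`, whose ends are different vertices, preserves planarity. The
darts `a` and `α a` stay in the rotation, but no longer carry an edge. -/
lemma PlanarMap.contract {G : Type*} [Fintype G] [DecidableEq G] {α : G → G} {σ : Perm G}
    {T : Set G} (hα : Function.Involutive α) (hP : PlanarMap α σ T) {a : G} (ha : a ∈ T)
    (ha' : α a ∈ T) (hab : ¬ σ.SameCycle a (α a)) {T' : Set G}
    (hT' : ∀ d ∈ T', d ∈ T ∧ d ≠ a ∧ d ≠ α a) : PlanarMap α (σ * swap a (α a)) T' := by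
  classical
  set b := α a with hb
  have hba : α b = a := hα a
  have hne : a ≠ b := fun h => hab (h ▸ SameCycle.refl _ _)
  intro c hcT hcα hbal
  have hca : c a = 0 := hcT a fun h => (hT' a h).2.1 rfl
  have hcb : c b = 0 := hcT b fun h => (hT' b h).2.2 rfl
  -- the value forced on the contracted edge
  set t : ZMod 2 := ∑ d, (if σ.SameCycle a d then 1 else 0) * c d with ht
  set δ : G → ZMod 2 := fun d => if d = a ∨ d = b then t else 0 with hδ
  have hδs : ∀ χ : G → ZMod 2, ∑ d, χ d * δ d = (χ a + χ b) * t := by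
    intro χ
    have : ∀ d, χ d * δ d = (if d = a then χ a * t else 0) + (if d = b then χ b * t else 0) := by
      intro d
      by_cases h1 : d = a
      · subst h1; simp [hδ, hne]
      by_cases h2 : d = b
      · subst h2; simp [hδ, h1]
      simp [hδ, h1, h2]
    rw [Finset.sum_congr rfl fun d _ => this d, Finset.sum_add_distrib]
    simp [add_mul]
  obtain ⟨ℓ, hℓ1, hℓ2⟩ := hP (fun d => c d + δ d) (by
      intro d hd
      have h1 : d ≠ a := fun h => hd (h ▸ ha)
      have h2 : d ≠ b := fun h => hd (h ▸ ha')
      have : d ∉ T' := fun h => hd (hT' d h).1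
      simp [hδ, h1, h2, hcT d this]) (by
      intro d
      have e1 : α d = a ↔ d = b := ⟨fun h => by rw [← hα d, h], fun h => by rw [h, hba]⟩
      have e2 : α d = b ↔ d = a := ⟨fun h => hα.injective h, fun h => by rw [h]⟩
      simp only [hδ, e1, e2, hcα, or_comm]) (by
      intro χ hχ
      -- make `χ` constant on the merged cycle by subtracting a multiple of a cycle indicator
      set ψ : G → ZMod 2 := fun d => χ d + (χ a + χ b) * (if σ.SameCycle a d then 1 else 0) with hψ
      have hχ' : ∀ x y, σ.SameCycle x y → χ x = χ y := fun x y h =>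
        sameCycle_induct (r := fun x y => χ x = χ y) ⟨fun _ => rfl, fun h => h.symm,
          fun h h' => h.trans h'⟩ (fun x => (hχ x).symm) h
      have hψs : ∀ d, ψ (σ d) = ψ d := by
        intro d
        simp only [hψ, hχ, sameCycle_apply_right]
      have hψab : ψ a = ψ b := by
        simp only [hψ, SameCycle.refl, if_true, hab, if_false]
        linear_combination z2_add_self (χ a)
      have h0 := hbal ψ (by
        intro d
        rw [Perm.mul_apply, hψs]
        by_cases h1 : d = a
        · subst h1; rw [swap_apply_left, hψab]
        by_cases h2 : d = b
        · subst h2; rw [swap_apply_right, hψab]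
        rw [swap_apply_of_ne_of_ne h1 h2])
      have h1 : ∑ d, ψ d * c d = ∑ d, χ d * c d + (χ a + χ b) * t := by
        rw [ht, Finset.mul_sum, ← Finset.sum_add_distrib]
        refine Finset.sum_congr rfl fun d _ => ?_
        simp only [hψ]; ring
      simp only [mul_add, Finset.sum_add_distrib, hδs]
      rw [← h1, h0])
  have hδab : ℓ b = ℓ a + t := by
    have := hℓ1 a ha
    simpa [hca, hδ, ← hb] using this
  refine ⟨fun d => ℓ d + δ d, ?_, ?_⟩
  · intro d hd
    obtain ⟨h1, h2, h3⟩ := hT' d hd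
    have e1 : α d ≠ a := fun h => h3 (by rw [hb, ← h, hα d])
    have e2 : α d ≠ b := fun h => h2 (hα.injective h)
    have := hℓ1 d h1
    simpa [hδ, h2, h3, e1, e2] using this
  · intro y
    have h := hℓ2 (swap a b y)
    simp only [Perm.mul_apply]
    rw [h]
    have h2 := z2_add_self (δ (σ (swap a b y)))
    have h3 : ℓ (swap a b y) = ℓ y + δ y := by
      by_cases h1 : y = a
      · subst h1; simp [hδ, hδab]
      by_cases h2 : y = b
      · subst h2
        simp only [swap_apply_right, hδ, or_true, if_true, hδab]
        linear_combination - z2_add_self t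
      simp [swap_apply_of_ne_of_ne h1 h2, hδ, h1, h2]
    rw [h3]
    linear_combination h2

/-- The edges in `I` are contracted one after the other; an edge that has become a loop is deleted
instead. In both cases the vertices of the result are the classes joined by the edges in `I`. -/
lemma contract_all {G : Type*} [Fintype G] [DecidableEq G] {α : G → G} {σ : Perm G}
    {T : Set G} (hα : Function.Involutive α) (hT : ∀ d ∈ T, α d ∈ T) (hP : PlanarMap α σ T)
    (I : Finset G) (hI : ∀ d ∈ I, d ∈ T) :
    ∃ σ' : Perm G, PlanarMap α σ' {d | d ∈ T ∧ d ∉ I ∧ α d ∉ I} ∧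
      ∀ x y, σ'.SameCycle x y ↔
        Relation.EqvGen (fun u v => σ.SameCycle u v ∨ (u ∈ I ∧ v = α u)) x y := by
  induction I using Finset.induction_on with
  | empty =>
    refine ⟨σ, by simpa using hP, fun x y => ?_⟩
    simp only [Finset.notMem_empty, false_and, or_false]
    exact ((sameCycle_equivalence σ).eqvGen_iff).symm
  | insert a I haI ih =>
    obtain ⟨σ₁, hP₁, h₁⟩ := ih fun d hd => hI d (Finset.mem_insert_of_mem hd)
    have haT : a ∈ T := hI a (Finset.mem_insert_self _ _)
    have mono : ∀ x y, σ₁.SameCycle x y → Relation.EqvGen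
        (fun u v => σ.SameCycle u v ∨ (u ∈ insert a I ∧ v = α u)) x y := by
      intro x y h
      replace h := (h₁ x y).1 h
      induction h with
      | rel u v h =>
        rcases h with h | ⟨h, h'⟩
        · exact Relation.EqvGen.rel _ _ (Or.inl h)
        · exact Relation.EqvGen.rel _ _ (Or.inr ⟨Finset.mem_insert_of_mem h, h'⟩)
      | refl => exact Relation.EqvGen.refl _
      | symm _ _ _ ih => exact Relation.EqvGen.symm _ _ ih
      | trans _ _ _ _ _ ih1 ih2 => exact Relation.EqvGen.trans _ _ _ ih1 ih2
    have hja : Relation.EqvGen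
        (fun u v => σ.SameCycle u v ∨ (u ∈ insert a I ∧ v = α u)) a (α a) :=
      Relation.EqvGen.rel _ _ (Or.inr ⟨Finset.mem_insert_self _ _, rfl⟩)
    have back : ∀ (r : G → G → Prop), Equivalence r → (∀ x y, σ₁.SameCycle x y → r x y) →
        r a (α a) → ∀ x y, Relation.EqvGen
        (fun u v => σ.SameCycle u v ∨ (u ∈ insert a I ∧ v = α u)) x y → r x y := by
      intro r hr hs hra x y h
      induction h with
      | rel u v h =>
        rcases h with h | ⟨h, rfl⟩
        · exact hs _ _ ((h₁ _ _).2 (Relation.EqvGen.rel _ _ (Or.inl h)))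
        · rcases Finset.mem_insert.1 h with rfl | h
          · exact hra
          · exact hs _ _ ((h₁ _ _).2 (Relation.EqvGen.rel _ _ (Or.inr ⟨h, rfl⟩)))
      | refl => exact hr.refl _
      | symm _ _ _ ih => exact hr.symm ih
      | trans _ _ _ _ _ ih1 ih2 => exact hr.trans ih1 ih2
    by_cases hs : σ₁.SameCycle a (α a)
    · refine ⟨σ₁, ?_, fun x y => ⟨mono x y, back _ (sameCycle_equivalence _) (fun _ _ h => h) hs x y⟩⟩
      intro c hc hcα hb
      obtain ⟨ℓ, h1, h2⟩ := hP₁ c (fun d hd => hc d fun h => hd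
        ⟨h.1, fun h' => h.2.1 (Finset.mem_insert_of_mem h'),
          fun h' => h.2.2 (Finset.mem_insert_of_mem h')⟩) hcα hb
      exact ⟨ℓ, fun d hd => h1 d ⟨hd.1, fun h' => hd.2.1 (Finset.mem_insert_of_mem h'),
          fun h' => hd.2.2 (Finset.mem_insert_of_mem h')⟩, h2⟩
    · have hαI : α a ∉ I := fun h => hs ((h₁ _ _).2 (Relation.EqvGen.symm _ _
        (Relation.EqvGen.rel _ _ (Or.inr ⟨h, (hα a).symm⟩))))
      refine ⟨σ₁ * swap a (α a), hP₁.contract hα ⟨haT, haI, hαI⟩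
        ⟨hT a haT, hαI, by rwa [hα a]⟩ hs ?_, fun x y => ?_⟩
      · rintro d ⟨h1, h2, h3⟩
        refine ⟨⟨h1, fun h => h2 (Finset.mem_insert_of_mem h),
          fun h => h3 (Finset.mem_insert_of_mem h)⟩, ?_, ?_⟩
        · rintro rfl; exact h2 (Finset.mem_insert_self _ _)
        · rintro rfl; rw [hα a] at h3; exact h3 (Finset.mem_insert_self _ _)
      · rw [merge_sameCycle hs]
        constructor
        · intro h
          induction h with
          | rel u v h =>
            rcases h with h | ⟨rfl, rfl⟩
            · exact mono _ _ h
            · exact hja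
          | refl => exact Relation.EqvGen.refl _
          | symm _ _ _ ih => exact Relation.EqvGen.symm _ _ ih
          | trans _ _ _ _ _ ih1 ih2 => exact Relation.EqvGen.trans _ _ _ ih1 ih2
        · exact back _ (Relation.EqvGen.is_equivalence _)
            (fun _ _ h => Relation.EqvGen.rel _ _ (Or.inl h))
            (Relation.EqvGen.rel _ _ (Or.inr ⟨rfl, rfl⟩)) x y

/-- The darts of `R` are removed from the cyclic orders of `σ` by turning them into fixed points. -/
lemma clean {G : Type*} [Fintype G] [DecidableEq G] (σ : Perm G) (R : Finset G) :
    ∃ σ' : Perm G, (∀ d ∈ R, σ' d = d) ∧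
      (∀ x y, x ∉ R → y ∉ R → (σ'.SameCycle x y ↔ σ.SameCycle x y)) ∧
      ∀ c ℓ : G → ZMod 2, (∀ d ∈ R, c d = 0) → (∀ d, ℓ (σ d) = ℓ d + c (σ d)) →
        ∀ d, ℓ (σ' d) = ℓ d + c (σ' d) := by
  induction R using Finset.induction_on with
  | empty => exact ⟨σ, by simp, by simp, fun c ℓ _ h => h⟩
  | insert a R ha ih =>
    obtain ⟨σ₁, h1, h2, h3⟩ := ih
    have hval : ∀ y, (swap a (σ₁ a) * σ₁) y = if σ₁ y = a then σ₁ a else if y = a then a else σ₁ y := by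
      intro y
      rw [Perm.mul_apply]
      by_cases e1 : σ₁ y = a
      · simp [e1]
      by_cases e2 : y = a
      · subst e2; simp [e1]
      rw [swap_apply_of_ne_of_ne e1 (fun h => e2 (σ₁.injective h))]
      simp [e1, e2]
    refine ⟨swap a (σ₁ a) * σ₁, ?_, ?_, ?_⟩
    · intro d hd
      rw [hval]
      rcases Finset.mem_insert.1 hd with rfl | hd'
      · by_cases e : σ₁ d = d <;> simp [e]
      · have : d ≠ a := by rintro rfl; exact ha hd'
        simp [h1 d hd', this]
    · intro x y hx hy
      simp only [Finset.mem_insert, not_or] at hx hy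
      rw [← h2 x y hx.2 hy.2]
      set σ' := swap a (σ₁ a) * σ₁ with hσ'
      constructor
      · refine sameCycle_induct (sameCycle_equivalence _) fun x => ?_
        rw [hval]
        split_ifs with e1 e2
        · rw [← e1]; exact (sameCycle_step _ _).trans (sameCycle_step _ _)
        · rw [e2]
        · exact sameCycle_step _ _
      · intro h
        obtain ⟨n, hn⟩ := h.exists_nat_pow_eq
        have Q : ∀ n : ℕ, ((σ₁ ^ n) x ≠ a ∧ σ'.SameCycle x ((σ₁ ^ n) x)) ∨
            ((σ₁ ^ n) x = a ∧ σ'.SameCycle x (σ₁ a)) := by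
          intro n
          induction n with
          | zero => left; exact ⟨hx.1, by simp [SameCycle.refl]⟩
          | succ n ih =>
            rw [pow_succ', Perm.mul_apply]
            rcases ih with ⟨e, ih⟩ | ⟨e, ih⟩
            · have hs := ih.trans (sameCycle_step σ' _)
              by_cases e1 : σ₁ ((σ₁ ^ n) x) = a
              · right
                refine ⟨e1, ?_⟩
                rwa [hval, if_pos e1] at hs
              · left
                refine ⟨e1, ?_⟩
                rwa [hval, if_neg e1, if_neg e] at hs
            · rw [e]
              by_cases e1 : σ₁ a = a
              · right; exact ⟨e1, ih⟩
              · left; exact ⟨e1, ih⟩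
        rcases Q n with h | h
        · rw [← hn]; exact h.2
        · exact absurd (hn.symm.trans h.1) hy.1
    · intro c ℓ hc hℓ d
      have h4 := h3 c ℓ (fun d hd => hc d (Finset.mem_insert_of_mem hd)) hℓ
      have hca := hc a (Finset.mem_insert_self _ _)
      rw [hval]
      split_ifs with e1 e2
      · rw [h4 a, ← e1, h4 d, e1, hca, add_zero]
      · rw [e2, hca, add_zero]
      · exact h4 d

/-- A permutation preserving the range of `f` restricts to the domain of `f`. -/
lemma restrict_perm {G D : Type*} [Fintype G] [Fintype D] (σ : Perm G) (f : D → G)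
    (hf : Function.Injective f) (h : ∀ d, ∃ d', σ (f d) = f d') :
    ∃ σD : Perm D, (∀ d, f (σD d) = σ (f d)) ∧
      ∀ x y, σD.SameCycle x y ↔ σ.SameCycle (f x) (f y) := by
  choose g hg using h
  have hinj : Function.Injective g := by
    intro x y hxy
    apply hf; apply σ.injective; rw [hg, hg, hxy]
  let σD : Perm D := Equiv.ofBijective g (Finite.injective_iff_bijective.1 hinj)
  have h1 : ∀ d, f (σD d) = σ (f d) := fun d => (hg d).symm
  have hpow : ∀ (n : ℕ) d, f ((σD ^ n) d) = (σ ^ n) (f d) := by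
    intro n
    induction n with
    | zero => simp
    | succ n ih => intro d; rw [pow_succ', pow_succ', Perm.mul_apply, Perm.mul_apply, h1, ih]
  refine ⟨σD, h1, fun x y => ⟨fun h => ?_, fun h => ?_⟩⟩
  · obtain ⟨n, rfl⟩ := h.exists_nat_pow_eq
    exact ⟨n, by simp [hpow]⟩
  · obtain ⟨n, hn⟩ := h.exists_nat_pow_eq
    exact ⟨n, hf (by rw [zpow_natCast, hpow, hn])⟩

/-- A planar hypermap is obtained from a planar map as a minor. Contracting the edges in `I` merges
the darts into the classes of `r`; the edges `{f d, α (f d)}` survive and join a class labelled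
`s d` to one labelled `w d`, and no class is of both kinds. -/
theorem hypermap_of_minor {G D A B : Type*} [Fintype G] [DecidableEq G] [Fintype D]
    {α : G → G} {σ : Perm G} {T : Set G} (hα : Function.Involutive α)
    (hT : ∀ d ∈ T, α d ∈ T) (hP : PlanarMap α σ T) (I : Finset G) (hI : ∀ d ∈ I, d ∈ T)
    (r : G → G → Prop)
    (hr : r = Relation.EqvGen (fun u v => σ.SameCycle u v ∨ (u ∈ I ∧ v = α u)))
    (f : D → G) (hf : Function.Injective f) (hfT : ∀ d, f d ∈ T) (s : D → A) (w : D → B)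
    (hs : ∀ d d', r (f d) (f d') ↔ s d = s d') (hw : ∀ d d', r (α (f d)) (α (f d')) ↔ w d = w d')
    (hsw : ∀ d d', ¬ r (f d) (α (f d'))) :
    ∃ σD τD : Perm D, (∀ d d', σD.SameCycle d d' ↔ s d = s d') ∧
      (∀ d d', τD.SameCycle d d' ↔ w d = w d') ∧ HPlanar σD τD := by
  classical
  obtain ⟨σ₁, hP₁, h₁⟩ := contract_all hα hT hP I hI
  rw [← hr] at h₁
  have hre : Equivalence r := by rw [hr]; exact Relation.EqvGen.is_equivalence _
  have hrI : ∀ x ∈ I, r x (α x) := fun x hx => by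
    rw [hr]; exact Relation.EqvGen.rel _ _ (Or.inr ⟨hx, rfl⟩)
  let R : Finset G := Finset.univ.filter fun x => ¬ ∃ d, x = f d ∨ x = α (f d)
  have hR : ∀ x, x ∉ R ↔ ∃ d, x = f d ∨ x = α (f d) := by
    intro x; simp only [R, Finset.mem_filter, Finset.mem_univ, true_and, not_not]
  obtain ⟨σ₂, hfix, hsc, hℓ⟩ := clean σ₁ R
  have hout : ∀ x, x ∉ R → σ₂ x ∉ R := by
    intro x hx h
    have := σ₂.injective (hfix _ h)
    exact hx (this ▸ h)
  have hsc' : ∀ x y, x ∉ R → y ∉ R → (σ₂.SameCycle x y ↔ r x y) := fun x y hx hy => by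
    rw [hsc x y hx hy, h₁]
  have hfR : ∀ d, f d ∉ R := fun d => (hR _).2 ⟨d, Or.inl rfl⟩
  have hgR : ∀ d, α (f d) ∉ R := fun d => (hR _).2 ⟨d, Or.inr rfl⟩
  obtain ⟨σD, hσD, hσDs⟩ := restrict_perm σ₂ f hf (by
    intro d
    obtain ⟨d', h | h⟩ := (hR _).1 (hout _ (hfR d))
    · exact ⟨d', h⟩
    · exact absurd ((hsc' _ _ (hfR d) (hgR d')).1 (h ▸ sameCycle_step _ _)) (hsw d d'))
  obtain ⟨τD, hτD, hτDs⟩ := restrict_perm σ₂ (fun d => α (f d)) (hα.injective.comp hf) (by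
    intro d
    obtain ⟨d', h | h⟩ := (hR _).1 (hout _ (hgR d))
    · exact absurd (hre.symm ((hsc' _ _ (hgR d) (hfR d')).1 (h ▸ sameCycle_step _ _))) (hsw d' d)
    · exact ⟨d', h⟩)
  have hsD : ∀ d d', σD.SameCycle d d' ↔ s d = s d' := fun d d' => by
    rw [hσDs, hsc' _ _ (hfR d) (hfR d'), hs]
  have hwD : ∀ d d', τD.SameCycle d d' ↔ w d = w d' := fun d d' => by
    rw [hτDs, hsc' _ _ (hgR d) (hgR d'), hw]
  -- seen from the far ends the cyclic orders are reversed, hence the inverse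
  refine ⟨σD, τD⁻¹, hsD, fun d d' => by rw [sameCycle_inv, hwD], ?_⟩
  intro c hbσ hbτ
  have hne : ∀ d d', f d ≠ α (f d') := fun d d' h => hsw d d' (h ▸ hre.refl _)
  let c' : G → ZMod 2 := fun x => ∑ d, ((if x = f d then c d else 0) + if x = α (f d) then c d else 0)
  have hc'f : ∀ d, c' (f d) = c d := by
    intro d
    simp only [c', hf.eq_iff, hne, if_false, add_zero]
    simp
  have hc'α : ∀ x, c' (α x) = c' x := by
    intro x
    refine Finset.sum_congr rfl fun d _ => ?_
    have e1 : α x = f d ↔ x = α (f d) := ⟨fun h => by rw [← h, hα x], fun h => by rw [h, hα]⟩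
    have e2 : α x = α (f d) ↔ x = f d := hα.injective.eq_iff
    simp only [e1, e2]; rw [add_comm]
  have hc'R : ∀ x ∈ R, c' x = 0 := by
    intro x hx
    have : ∀ d, x ≠ f d ∧ x ≠ α (f d) := fun d =>
      ⟨fun h => hfR d (h ▸ hx), fun h => hgR d (h ▸ hx)⟩
    simp [c', this]
  obtain ⟨ℓ, hℓ1, hℓ2⟩ := hP₁ c' (by
      intro x hx
      apply hc'R
      by_contra hxR
      apply hx
      obtain ⟨d, rfl | rfl⟩ := (hR x).1 hxR
      · refine ⟨hfT d, fun h => hsw d d (hrI _ h), fun h => hsw d d (hre.symm ?_)⟩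
        have := hrI _ h
        rwa [hα] at this
      · refine ⟨hT _ (hfT d), fun h => hsw d d (hre.symm ?_), fun h => hsw d d ?_⟩
        · have := hrI _ h
          rwa [hα] at this
        · rw [hα] at h; exact hrI _ h) hc'α (by
      intro χ hχ
      have hχr : ∀ x y, r x y → χ x = χ y := fun x y h =>
        sameCycle_induct (r := fun x y => χ x = χ y) ⟨fun _ => rfl, fun h => h.symm,
          fun h h' => h.trans h'⟩ (fun x => (hχ x).symm) ((h₁ x y).2 h)
      have hs1 := hbσ (fun d => χ (f d)) (fun d => hχr _ _ ((hs _ _).2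
        ((hsD _ _).1 (sameCycle_step _ _)).symm))
      have hs2 := hbτ (fun d => χ (α (f d))) (fun d => hχr _ _ ((hw _ _).2
        ((hwD _ _).1 (by rw [← sameCycle_inv]; exact (sameCycle_step _ _).symm))))
      have : ∑ x, χ x * c' x = ∑ d, χ (f d) * c d + ∑ d, χ (α (f d)) * c d := by
        simp only [c', Finset.mul_sum]
        rw [Finset.sum_comm, ← Finset.sum_add_distrib]
        refine Finset.sum_congr rfl fun d _ => ?_
        simp only [mul_add, Finset.sum_add_distrib, mul_ite, mul_zero, Finset.sum_ite_eq',
          Finset.mem_univ, if_true]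
      rw [this, hs1, hs2, add_zero])
  have h2 := hℓ c' ℓ hc'R hℓ2
  have hin : ∀ d, f d ∈ {d | d ∈ T ∧ d ∉ I ∧ α d ∉ I} := fun d =>
    ⟨hfT d, fun h => hsw d d (hrI _ h), fun h => hsw d d (hre.symm (by
      have := hrI _ h
      rwa [hα] at this))⟩
  have h1 : ∀ d, ℓ (α (f d)) = ℓ (f d) + c d := fun d => by rw [hℓ1 _ (hin d), hc'f]
  refine ⟨fun d => ℓ (f d), fun d => ?_, fun d => ?_⟩
  · simp only [hσD]; rw [h2, ← hσD, hc'f]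
  · obtain ⟨e, rfl⟩ : ∃ e, d = τD e := ⟨τD⁻¹ d, by simp⟩
    have := h2 (α (f e))
    rw [← hτD, hc'α, hc'f, h1, h1] at this
    have he : τD⁻¹ (τD e) = e := by simp
    simp only [he]
    linear_combination -this - z2_add_self (c e)

/-! ### The square grid -/

/-- The four unit steps of the grid `ℤ × ℤ`, in counterclockwise order: east, north, west, south. -/
def vec : Fin 4 → ℤ × ℤ := ![(1, 0), (0, 1), (-1, 0), (0, -1)]

lemma vec_add_two (k : Fin 4) : vec (k + 2) = -vec k := by
  fin_cases k <;> simp [vec]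

/-- Darts of the subgraph of the grid induced on `S` (together with dangling half-edges). -/
abbrev GDart (S : Finset (ℤ × ℤ)) := S × Fin 4

/-- Counterclockwise rotation of darts about their base point. -/
def grot (S : Finset (ℤ × ℤ)) : Perm (GDart S) :=
  Equiv.prodCongr (Equiv.refl _) (Equiv.addRight 1)

/-- The far end of a grid dart. -/
def gtgt {S : Finset (ℤ × ℤ)} (d : GDart S) : ℤ × ℤ := d.1.1 + vec d.2

/-- Reversal of grid darts; dangling half-edges are fixed. -/
def grev {S : Finset (ℤ × ℤ)} (d : GDart S) : GDart S :=
  if h : gtgt d ∈ S then (⟨gtgt d, h⟩, d.2 + 2) else d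

lemma grev_of_mem {S : Finset (ℤ × ℤ)} {d : GDart S} (h : gtgt d ∈ S) :
    grev d = (⟨gtgt d, h⟩, d.2 + 2) := dif_pos h

lemma gtgt_grev {S : Finset (ℤ × ℤ)} {d : GDart S} (h : gtgt d ∈ S) : gtgt (grev d) = d.1.1 := by
  rw [grev_of_mem h]; simp [gtgt, vec_add_two]

lemma grev_involutive {S : Finset (ℤ × ℤ)} : Function.Involutive (grev (S := S)) := by
  intro d
  by_cases h : gtgt d ∈ S
  · have h2 : gtgt (grev d) ∈ S := by rw [gtgt_grev h]; exact d.1.2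
    have h4 : d.2 + 2 + 2 = d.2 := by generalize d.2 = k; revert k; decide
    rw [grev_of_mem h2]
    refine Prod.ext (Subtype.ext (gtgt_grev h)) ?_
    show (grev d).2 + 2 = d.2
    rw [grev_of_mem h]; exact h4
  · have : grev d = d := dif_neg h
    rw [this, this]

/-- A closed even subgraph of the grid is the boundary of a set of unit squares. The function `f`
below is the indicator (mod 2) of that set; the square north-east of `p` has index `p`. -/
lemma grid_planar (S : Finset (ℤ × ℤ)) :
    PlanarMap (grev (S := S)) (grot S) {d | gtgt d ∈ S} := by
  classical
  intro c hc hcα hbal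
  -- values on eastward and northward edges, extended by zero
  let h : ℤ × ℤ → ZMod 2 := fun p => if hp : p ∈ S then c (⟨p, hp⟩, 0) else 0
  let n : ℤ × ℤ → ZMod 2 := fun p => if hp : p ∈ S then c (⟨p, hp⟩, 1) else 0
  have hh0 : ∀ p, p ∉ S → h p = 0 := fun p hp => by simp only [h, dif_neg hp]
  have hn0 : ∀ p, p ∉ S → n p = 0 := fun p hp => by simp only [n, dif_neg hp]
  have hE : ∀ p (hp : p ∈ S), c (⟨p, hp⟩, 0) = h p := fun p hp => by simp only [h, dif_pos hp]
  have hN : ∀ p (hp : p ∈ S), c (⟨p, hp⟩, 1) = n p := fun p hp => by simp only [n, dif_pos hp]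
  have hW : ∀ p (hp : p ∈ S), c (⟨p, hp⟩, 2) = h (p - (1, 0)) := by
    intro p hp
    have ht : gtgt ((⟨p, hp⟩, 2) : GDart S) = p - (1, 0) := by
      simp [gtgt, vec, sub_eq_add_neg]
    by_cases hq : p - (1, 0) ∈ S
    · rw [← hcα, grev_of_mem (by rw [ht]; exact hq), ← hE _ hq]
      congr 2
    · rw [hc _ (by simpa [ht] using hq)]; exact (hh0 _ hq).symm
  have hS : ∀ p (hp : p ∈ S), c (⟨p, hp⟩, 3) = n (p - (0, 1)) := by
    intro p hp
    have ht : gtgt ((⟨p, hp⟩, 3) : GDart S) = p - (0, 1) := by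
      simp [gtgt, vec, sub_eq_add_neg]
    by_cases hq : p - (0, 1) ∈ S
    · rw [← hcα, grev_of_mem (by rw [ht]; exact hq), ← hN _ hq]
      congr 2
    · rw [hc _ (by simpa [ht] using hq)]; exact (hn0 _ hq).symm
  have hvert : ∀ p, h p + n p + h (p - (1, 0)) + n (p - (0, 1)) = 0 := by
    intro p
    by_cases hp : p ∈ S
    · have := hbal (fun d => if d.1 = ⟨p, hp⟩ then 1 else 0) (fun d => rfl)
      rw [Fintype.sum_prod_type] at this
      simp only [ite_mul, one_mul, zero_mul] at this
      rw [Finset.sum_eq_single ⟨p, hp⟩ (by intro b _ hb; simp [hb]) (by simp)] at this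
      simp only [if_true, Fin.sum_univ_four] at this
      rw [hE, hN, hW, hS] at this
      exact this
    · have h1 : h (p - (1, 0)) = 0 := by
        by_cases hq : p - (1, 0) ∈ S
        · rw [← hE _ hq]; apply hc; simpa [gtgt, vec] using hp
        · exact hh0 _ hq
      have h2 : n (p - (0, 1)) = 0 := by
        by_cases hq : p - (0, 1) ∈ S
        · rw [← hN _ hq]; apply hc; simpa [gtgt, vec] using hp
        · exact hn0 _ hq
      rw [h1, h2, hh0 p hp, hn0 p hp]; simp
  let f : ℤ × ℤ → ZMod 2 := fun p => ∑ q ∈ S, if q.2 = p.2 ∧ q.1 ≤ p.1 then n q else 0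
  have hV : ∀ p, f p = f (p - (1, 0)) + n p := by
    intro p
    have : n p = ∑ q ∈ S, if q = p then n q else 0 := by
      rw [Finset.sum_ite_eq']
      split_ifs with hp
      · rfl
      · exact hn0 p hp
    rw [this, ← Finset.sum_add_distrib]
    refine Finset.sum_congr rfl fun q _ => ?_
    obtain ⟨a, b⟩ := q
    obtain ⟨i, j⟩ := p
    simp only [Prod.mk_sub_mk, sub_zero, Prod.mk.injEq]
    by_cases hb : b = j
    · rcases lt_trichotomy a i with hlt | rfl | hlt
      · simp [hb, hlt.le, hlt.ne, Int.le_sub_one_of_lt hlt]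
      · simp [hb]
      · have : ¬ a ≤ i - 1 := by omega
        simp [hb, not_le.2 hlt, hlt.ne', this]
    · simp [hb]
  obtain ⟨m, hm⟩ : ∃ m : ℤ, ∀ q ∈ S, m < q.1 := by
    obtain ⟨m, hm⟩ := (S.image Prod.fst).bddBelow
    refine ⟨m - 1, fun q hq => ?_⟩
    have := hm (Finset.mem_coe.2 (Finset.mem_image_of_mem Prod.fst hq))
    omega
  have hlow : ∀ i j, i ≤ m → f (i, j) = 0 := by
    intro i j hi
    refine Finset.sum_eq_zero fun q hq => ?_
    have := hm q hq
    rw [if_neg]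
    rintro ⟨_, h⟩
    simp only at h
    omega
  have hH : ∀ p, f p = f (p - (0, 1)) + h p := by
    rintro ⟨i, j⟩
    have hlow' : ∀ i, i ≤ m → f (i, j) = f ((i, j) - (0, 1)) + h (i, j) := by
      intro i hi
      have : (i, j) ∉ S := fun hh => by have := hm _ hh; simp only at this; omega
      rw [hh0 _ this, Prod.mk_sub_mk, sub_zero, hlow _ _ hi, hlow _ _ hi]; simp
    rcases le_total i m with hi | hi
    · exact hlow' i hi
    · induction i, hi using Int.leInduction with
      | base => exact hlow' m le_rfl
      | succ i hi ih =>
        have e1 := hV (i + 1, j)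
        have e2 := hV (i + 1, j - 1)
        have e3 := hvert (i + 1, j)
        simp only [Prod.mk_sub_mk, sub_zero, add_sub_cancel_right] at e1 e2 e3 ih ⊢
        rw [e1, e2, ih]
        linear_combination e3 - z2_add_self (h (i + 1, j)) - z2_add_self (n (i + 1, j - 1))
  let ℓ : GDart S → ZMod 2 := fun d =>
    ![f d.1.1, f (d.1.1 - (1, 0)), f (d.1.1 - (1, 0) - (0, 1)), f (d.1.1 - (0, 1))] d.2
  refine ⟨ℓ, ?_, ?_⟩
  · rintro ⟨⟨p, hp⟩, k⟩ hd
    simp only [mem_ofPred_eq] at hd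
    rw [grev_of_mem hd]
    have t2 : ∀ a b c : ZMod 2, a = b + c → b = a + c := by decide
    fin_cases k
    · show f (p + vec 0 - (1, 0) - (0, 1)) = f p + c (⟨p, hp⟩, 0)
      rw [hE, show p + vec 0 - (1, 0) = p by simp [vec]]
      exact t2 _ _ _ (hH p)
    · show f (p + vec 1 - (0, 1)) = f (p - (1, 0)) + c (⟨p, hp⟩, 1)
      rw [hN, show p + vec 1 - (0, 1) = p by simp [vec]]
      exact hV p
    · show f (p + vec 2) = f (p - (1, 0) - (0, 1)) + c (⟨p, hp⟩, 2)
      rw [hW, show p + vec 2 = p - (1, 0) by simp [vec, sub_eq_add_neg]]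
      exact hH _
    · show f (p + vec 3 - (1, 0)) = f (p - (0, 1)) + c (⟨p, hp⟩, 3)
      rw [hS, show p + vec 3 = p - (0, 1) by simp [vec, sub_eq_add_neg]]
      exact t2 _ _ _ (hV _)
  · rintro ⟨⟨p, hp⟩, k⟩
    have t2 : ∀ a b c : ZMod 2, a = b + c → b = a + c := by decide
    fin_cases k
    · show f (p - (1, 0)) = f p + c (⟨p, hp⟩, 1)
      rw [hN]; exact t2 _ _ _ (hV p)
    · show f (p - (1, 0) - (0, 1)) = f (p - (1, 0)) + c (⟨p, hp⟩, 2)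
      rw [hW]; exact t2 _ _ _ (hH _)
    · show f (p - (0, 1)) = f (p - (1, 0) - (0, 1)) + c (⟨p, hp⟩, 3)
      rw [hS, hV (p - (0, 1)), sub_right_comm]
    · show f p = f (p - (0, 1)) + c (⟨p, hp⟩, 0)
      rw [hE]; exact hH p

/-- Adjacency in the grid. -/
def GAdj (a b : ℤ × ℤ) : Prop := ∃ k, b = a + vec k

lemma GAdj.symm {a b : ℤ × ℤ} (h : GAdj a b) : GAdj b a := by
  obtain ⟨k, rfl⟩ := h
  exact ⟨k + 2, by rw [vec_add_two]; abel⟩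

/-- Connectedness of a set of grid points, phrased as an induction principle. -/
def GConn (P : Set (ℤ × ℤ)) : Prop :=
  ∀ Q : Set (ℤ × ℤ), (∀ a ∈ P, ∀ b ∈ P, GAdj a b → a ∈ Q → b ∈ Q) →
    ∀ p ∈ P, ∀ q ∈ P, p ∈ Q → q ∈ Q

/-- Disjoint finite connected sets `P c` of grid points, of which `P (s d)` and `P (w d)` are joined
by the grid edge from `y d` to `z d`, form a planar hypermap: contract each set to a point. -/
theorem hypermap_of_blobs {D C : Type*} [Fintype D] [Finite C] (P : C → Set (ℤ × ℤ))
    (hfin : ∀ c, (P c).Finite) (hconn : ∀ c, GConn (P c))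
    (hdisj : ∀ c c', c ≠ c' → Disjoint (P c) (P c')) (s w : D → C) (hsw : ∀ d d', s d ≠ w d')
    (y z : D → ℤ × ℤ) (hy : ∀ d, y d ∈ P (s d)) (hz : ∀ d, z d ∈ P (w d))
    (hyz : ∀ d, GAdj (y d) (z d)) (hinj : Function.Injective y) :
    ∃ σ τ : Perm D, (∀ d d', σ.SameCycle d d' ↔ s d = s d') ∧
      (∀ d d', τ.SameCycle d d' ↔ w d = w d') ∧ HPlanar σ τ := by
  classical
  let S : Finset (ℤ × ℤ) := (Set.finite_iUnion hfin).toFinset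
  have hS : ∀ p, p ∈ S ↔ ∃ c, p ∈ P c := by intro p; simp [S]
  have huniq : ∀ p c c', p ∈ P c → p ∈ P c' → c = c' := by
    intro p c c' h h'
    by_contra hne
    exact Set.disjoint_left.1 (hdisj c c' hne) h h'
  choose lab hlab using fun x : GDart S => (hS x.1.1).1 x.1.2
  have hlabu : ∀ (x : GDart S) c, x.1.1 ∈ P c → lab x = c := fun x c h =>
    huniq _ _ _ (hlab x) h
  let I : Finset (GDart S) := Finset.univ.filter fun x => gtgt x ∈ P (lab x)
  have hmemI : ∀ x, x ∈ I ↔ gtgt x ∈ P (lab x) := by intro x; simp [I]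
  have hIT : ∀ x ∈ I, x ∈ {d : GDart S | gtgt d ∈ S} := fun x hx =>
    (hS _).2 ⟨_, (hmemI x).1 hx⟩
  let r := Relation.EqvGen (fun u v => (grot S).SameCycle u v ∨ (u ∈ I ∧ v = grev u))
  have hre : Equivalence r := Relation.EqvGen.is_equivalence _
  have r1 : ∀ u v, r u v → lab u = lab v := by
    intro u v h
    induction h with
    | rel u v h =>
      rcases h with h | ⟨h, rfl⟩
      · refine sameCycle_induct (r := fun u v => lab u = lab v) ⟨fun _ => rfl, fun h => h.symm,
          fun h h' => h.trans h'⟩ (fun x => ?_) h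
        exact (hlabu (grot S x) _ (hlab x)).symm
      · refine (hlabu _ _ ?_).symm
        rw [grev_of_mem (hIT u h)]
        exact (hmemI u).1 h
    | refl => rfl
    | symm _ _ _ ih => exact ih.symm
    | trans _ _ _ _ _ ih1 ih2 => exact ih1.trans ih2
  have rrot : ∀ p k k', r (p, k) (p, k') := by
    intro p k k'
    have step : ∀ k, r (p, k) (p, k + 1) := fun k =>
      Relation.EqvGen.rel _ _ (Or.inl (sameCycle_step (grot S) (p, k)))
    have all : ∀ k, r (p, 0) (p, k) := by
      have h1 := step 0
      have h2 := hre.trans h1 (step 1)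
      have h3 := hre.trans h2 (step 2)
      intro k
      fin_cases k
      · exact hre.refl _
      · exact h1
      · exact h2
      · exact h3
    exact hre.trans (hre.symm (all k)) (all k')
  have r2 : ∀ u v, lab u = lab v → r u v := by
    intro u v h
    have := hconn (lab u) {q | ∀ (hq : q ∈ S) k, r u (⟨q, hq⟩, k)} (by
      rintro a ha b hb ⟨k, rfl⟩ haQ hq k'
      have haS : a ∈ S := (hS a).2 ⟨_, ha⟩
      have h1 := haQ haS k
      have hl : lab (⟨a, haS⟩, k) = lab u := hlabu _ _ ha
      have hI : ((⟨a, haS⟩, k) : GDart S) ∈ I := (hmemI _).2 (by rw [hl]; exact hb)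
      have h2 : r (⟨a, haS⟩, k) (grev (⟨a, haS⟩, k)) :=
        Relation.EqvGen.rel _ _ (Or.inr ⟨hI, rfl⟩)
      rw [grev_of_mem (hIT _ hI)] at h2
      exact hre.trans h1 (hre.trans h2 (rrot _ _ _))) u.1.1 (hlab u) v.1.1 (h ▸ hlab v)
      (fun _ k => rrot _ _ _)
    exact this v.1.2 v.2
  choose k hk using hyz
  have hyS : ∀ d, y d ∈ S := fun d => (hS _).2 ⟨_, hy d⟩
  have hzS : ∀ d, z d ∈ S := fun d => (hS _).2 ⟨_, hz d⟩
  let f : D → GDart S := fun d => (⟨y d, hyS d⟩, k d)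
  have hft : ∀ d, gtgt (f d) = z d := fun d => (hk d).symm
  have hfT : ∀ d, gtgt (f d) ∈ S := fun d => by rw [hft]; exact hzS d
  have l1 : ∀ d, lab (f d) = s d := fun d => hlabu _ _ (hy d)
  have l2 : ∀ d, lab (grev (f d)) = w d := fun d => hlabu _ _ (by
    rw [grev_of_mem (hfT d)]; simp only [hft]; exact hz d)
  have hr : ∀ u v, r u v ↔ lab u = lab v := fun u v => ⟨r1 u v, r2 u v⟩
  exact hypermap_of_minor grev_involutive (fun d hd => by
      simp only [mem_ofPred_eq] at hd ⊢; rw [gtgt_grev hd]; exact d.1.2)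
    (grid_planar S) I hIT r rfl f (fun d d' h => hinj (by
      have := congrArg (fun x : GDart S => x.1.1) h; exact this)) hfT s w
    (fun d d' => by rw [hr, l1, l1]) (fun d d' => by rw [hr, l2, l2])
    (fun d d' => by rw [hr, l1, l2]; exact hsw d d')

/-! ### Approximating plane sets by grid points -/

/-- Grid points at distance at most one (in the sup norm) from the set `K` scaled by `M`. -/
def pix (M : ℝ) (K : Set (ℝ × ℝ)) : Set (ℤ × ℤ) :=
  {g | ∃ k ∈ K, |M * k.1 - g.1| ≤ 1 ∧ |M * k.2 - g.2| ≤ 1}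

lemma pix_nonempty_inter (M : ℝ) {K K' : Set (ℝ × ℝ)} (h : (K ∩ K').Nonempty) :
    (pix M K ∩ pix M K').Nonempty := by
  obtain ⟨k, h1, h2⟩ := h
  have e : ∀ x : ℝ, |x - ⌊x⌋| ≤ 1 := fun x => by
    rw [abs_le]; constructor <;> linarith [Int.floor_le x, Int.lt_floor_add_one x]
  exact ⟨(⌊M * k.1⌋, ⌊M * k.2⌋), ⟨k, h1, e _, e _⟩, ⟨k, h2, e _, e _⟩⟩

lemma pix_disjoint {M ε : ℝ} (hM : 2 < M * ε) (hM0 : 0 < M) {K K' : Set (ℝ × ℝ)}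
    (h : ∀ x ∈ K, ∀ y ∈ K', ε ≤ dist x y) : Disjoint (pix M K) (pix M K') := by
  rw [Set.disjoint_left]
  rintro g ⟨k, hk, h1, h2⟩ ⟨k', hk', h1', h2'⟩
  have h3 := h k hk k' hk'
  rw [Prod.dist_eq, le_max_iff, Real.dist_eq, Real.dist_eq] at h3
  have aux : ∀ a b g : ℝ, |M * a - g| ≤ 1 → |M * b - g| ≤ 1 → ¬ ε ≤ |a - b| := by
    intro a b g ha hb hab
    have : M * ε ≤ M * |a - b| := by gcongr
    rw [← abs_of_pos hM0, ← abs_mul, abs_of_pos hM0, mul_sub] at this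
    have h4 : |M * a - M * b| ≤ 2 := by
      rw [abs_le] at *; constructor <;> linarith [ha.1, ha.2, hb.1, hb.2]
    linarith
  rcases h3 with h3 | h3
  · exact aux _ _ _ h1 h1' h3
  · exact aux _ _ _ h2 h2' h3

lemma pix_finite {M : ℝ} {K : Set (ℝ × ℝ)} (hK : IsCompact K) : (pix M K).Finite := by
  obtain ⟨R, hR⟩ := hK.isBounded.exists_norm_le
  let N : ℤ := ⌈|M| * R + 1⌉
  refine (Set.finite_Icc ((-N, -N) : ℤ × ℤ) (N, N)).subset ?_
  rintro g ⟨k, hk, h1, h2⟩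
  have h3 := hR k hk
  rw [Prod.norm_def, max_le_iff, Real.norm_eq_abs, Real.norm_eq_abs] at h3
  have aux : ∀ (a : ℝ) (g : ℤ), |M * a - g| ≤ 1 → |a| ≤ R → -N ≤ g ∧ g ≤ N := by
    intro a g h h'
    have h4 : |M * a| ≤ |M| * R := by rw [abs_mul]; gcongr
    have h5 : |M| * R + 1 ≤ N := Int.le_ceil _
    rw [abs_le] at h h4
    constructor
    · have : (-(N : ℝ)) ≤ g := by linarith [h.1, h.2, h4.1, h4.2]
      exact_mod_cast this
    · have : (g : ℝ) ≤ N := by linarith [h.1, h.2, h4.1, h4.2]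
      exact_mod_cast this
  have a1 := aux _ _ h1 h3.1
  have a2 := aux _ _ h2 h3.2
  exact ⟨Prod.mk_le_mk.2 ⟨a1.1, a2.1⟩, Prod.mk_le_mk.2 ⟨a1.2, a2.2⟩⟩

lemma near_floor {x : ℝ} {g : ℤ} (h : |x - g| ≤ 1) : g = ⌊x⌋ ∨ g = ⌊x⌋ + 1 ∨ g = ⌊x⌋ - 1 := by
  rw [abs_le] at h
  have h1 := Int.floor_le x
  have h2 := Int.lt_floor_add_one x
  have h3 : g < ⌊x⌋ + 2 := by
    have : (g : ℝ) < ⌊x⌋ + 2 := by linarith [h.1, h.2]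
    exact_mod_cast this
  have h4 : ⌊x⌋ - 1 ≤ g := by
    have : ((⌊x⌋ - 1 : ℤ) : ℝ) ≤ g := by push_cast; linarith [h.1, h.2]
    exact_mod_cast this
  omega

lemma gadj_left {a b c : ℤ} (h : b = a + 1 ∨ b = a - 1) : GAdj (a, c) (b, c) := by
  rcases h with rfl | rfl
  · exact ⟨0, by simp [vec]⟩
  · exact ⟨2, by simp [vec, sub_eq_add_neg]⟩

lemma gadj_right {a b c : ℤ} (h : b = a + 1 ∨ b = a - 1) : GAdj (c, a) (c, b) := by
  rcases h with rfl | rfl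
  · exact ⟨1, by simp [vec]⟩
  · exact ⟨3, by simp [vec, sub_eq_add_neg]⟩

lemma pix_conn {M : ℝ} (hM : 0 < M) {K : Set (ℝ × ℝ)} (hK : IsPreconnected K) :
    GConn (pix M K) := by
  intro Q hQ
  have e : ∀ x : ℝ, |x - ⌊x⌋| ≤ 1 := fun x => by
    rw [abs_le]; constructor <;> linarith [Int.floor_le x, Int.lt_floor_add_one x]
  -- every grid point near `k` is joined to the floor of `k`
  have blk : ∀ k ∈ K, ∀ g : ℤ × ℤ, |M * k.1 - g.1| ≤ 1 → |M * k.2 - g.2| ≤ 1 →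
      (g ∈ Q ↔ (⌊M * k.1⌋, ⌊M * k.2⌋) ∈ Q) := by
    rintro k hk ⟨g1, g2⟩ h1 h2
    have m0 : (g1, g2) ∈ pix M K := ⟨k, hk, h1, h2⟩
    have m1 : (⌊M * k.1⌋, g2) ∈ pix M K := ⟨k, hk, e _, h2⟩
    have m2 : (⌊M * k.1⌋, ⌊M * k.2⌋) ∈ pix M K := ⟨k, hk, e _, e _⟩
    have s1 : ((g1, g2) ∈ Q ↔ (⌊M * k.1⌋, g2) ∈ Q) := by
      rcases near_floor h1 with h | h
      · simp only at h; rw [h]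
      · have := gadj_left (c := g2) h
        exact ⟨hQ _ m0 _ m1 this.symm, hQ _ m1 _ m0 this⟩
    have s2 : ((⌊M * k.1⌋, g2) ∈ Q ↔ (⌊M * k.1⌋, ⌊M * k.2⌋) ∈ Q) := by
      rcases near_floor h2 with h | h
      · simp only at h; rw [h]
      · have := gadj_right (c := ⌊M * k.1⌋) h
        exact ⟨hQ _ m1 _ m2 this.symm, hQ _ m2 _ m1 this⟩
    exact s1.trans s2
  have common : ∀ x y : ℝ, |x - y| ≤ 1 → |x - ⌊max x y⌋| ≤ 1 ∧ |y - ⌊max x y⌋| ≤ 1 := by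
    intro x y h
    have h1 := Int.floor_le (max x y)
    have h2 := Int.lt_floor_add_one (max x y)
    rw [abs_le] at h
    rw [abs_le, abs_le]
    rcases max_cases x y with ⟨h3, h4⟩ | ⟨h3, h4⟩ <;> rw [h3] at h1 h2 ⊢ <;>
      refine ⟨⟨?_, ?_⟩, ?_, ?_⟩ <;> linarith [h.1, h.2]
  have main : ∀ k ∈ K, ∀ k' ∈ K,
      ((⌊M * k.1⌋, ⌊M * k.2⌋) ∈ Q ↔ (⌊M * k'.1⌋, ⌊M * k'.2⌋) ∈ Q) := by
    intro k hk k' hk'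
    refine hK.induction₂ (fun k k' : ℝ × ℝ =>
      ((⌊M * k.1⌋, ⌊M * k.2⌋) ∈ Q ↔ (⌊M * k'.1⌋, ⌊M * k'.2⌋) ∈ Q)) ?_ ?_ ?_ hk hk'
    · intro x hx
      have hb : Metric.ball x (1 / M) ∈ nhds x := Metric.ball_mem_nhds _ (by positivity)
      filter_upwards [self_mem_nhdsWithin, mem_nhdsWithin_of_mem_nhds hb] with y hy hxy
      rw [Metric.mem_ball, Prod.dist_eq, max_lt_iff, Real.dist_eq, Real.dist_eq] at hxy
      have aux : ∀ a b : ℝ, |b - a| < 1 / M → |M * a - M * b| ≤ 1 := by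
        intro a b h
        rw [← mul_sub, abs_mul, abs_of_pos hM, abs_sub_comm]
        rw [lt_div_iff₀ hM] at h; linarith
      obtain ⟨a1, a2⟩ := common _ _ (aux _ _ hxy.1)
      obtain ⟨b1, b2⟩ := common _ _ (aux _ _ hxy.2)
      exact (blk x hx (_, _) a1 b1).symm.trans (blk y hy (_, _) a2 b2)
    · intro x y z _ _ _ h h'; exact h.trans h'
    · intro x y _ _ h; exact h.symm
  rintro p ⟨k, hk, h1, h2⟩ q ⟨k', hk', h1', h2'⟩ hp
  rw [blk k' hk' q h1' h2', ← main k hk k' hk', ← blk k hk p h1 h2]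
  exact hp

lemma exists_sep {J : Type*} [Finite J] (K : J → Set (ℝ × ℝ)) (hK : ∀ j, IsCompact (K j)) :
    ∃ ε > 0, ∀ j j', Disjoint (K j) (K j') → ∀ x ∈ K j, ∀ y ∈ K j', ε ≤ dist x y := by
  have h1 : ∀ p : J × J, ∃ ε > 0, Disjoint (K p.1) (K p.2) →
      ∀ x ∈ K p.1, ∀ y ∈ K p.2, ε ≤ dist x y := by
    rintro ⟨j, j'⟩
    by_cases h : Disjoint (K j) (K j')
    · obtain ⟨δ, hδ, h2⟩ := h.exists_thickenings (hK j) (hK j').isClosed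
      refine ⟨δ, hδ, fun _ x hx y hy => ?_⟩
      by_contra hlt
      rw [not_le] at hlt
      refine Set.disjoint_left.1 h2 (Metric.mem_thickening_iff.2 ⟨x, hx, ?_⟩)
        (Metric.self_subset_thickening hδ _ hy)
      rwa [dist_comm]
    · exact ⟨1, one_pos, fun h' => absurd h' h⟩
  choose ε hε h2 using h1
  rcases isEmpty_or_nonempty J with hJ | hJ
  · exact ⟨1, one_pos, fun j => (hJ.false j).elim⟩
  · obtain ⟨p, hp⟩ := Finite.exists_min ε
    exact ⟨ε p, hε p, fun j j' h x hx y hy => (hp (j, j')).trans (h2 (j, j') h x hx y hy)⟩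

/-- Compact connected sets `KA a` and `KB b`, all pairwise disjoint, and pairwise disjoint compact
connected links `L d` touching exactly `KA (s d)` and `KB (w d)`, form a planar hypermap. In the
grid approximation, the part of a link that is connected to `KA (s d)` outside `KB (w d)` is added
to `KA (s d)`; some grid edge then leads from it to `KB (w d)`. -/
theorem hypermap_of_sets {D A B : Type*} [Fintype D] [Finite A] [Finite B]
    (KA : A → Set (ℝ × ℝ)) (KB : B → Set (ℝ × ℝ)) (L : D → Set (ℝ × ℝ)) (s : D → A) (w : D → B)
    (cA : ∀ a, IsCompact (KA a)) (cB : ∀ b, IsCompact (KB b)) (cL : ∀ d, IsCompact (L d))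
    (pA : ∀ a, IsPreconnected (KA a)) (pB : ∀ b, IsPreconnected (KB b))
    (pL : ∀ d, IsPreconnected (L d))
    (dAA : ∀ a a', a ≠ a' → Disjoint (KA a) (KA a')) (dAB : ∀ a b, Disjoint (KA a) (KB b))
    (dBB : ∀ b b', b ≠ b' → Disjoint (KB b) (KB b'))
    (dLL : ∀ d d', d ≠ d' → Disjoint (L d) (L d'))
    (dLA : ∀ d a, s d ≠ a → Disjoint (L d) (KA a))
    (dLB : ∀ d b, w d ≠ b → Disjoint (L d) (KB b))
    (mA : ∀ d, (L d ∩ KA (s d)).Nonempty) (mB : ∀ d, (L d ∩ KB (w d)).Nonempty) :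
    ∃ σ τ : Perm D, (∀ d d', σ.SameCycle d d' ↔ s d = s d') ∧
      (∀ d d', τ.SameCycle d d' ↔ w d = w d') ∧ HPlanar σ τ := by
  classical
  obtain ⟨ε, hε, hsep⟩ := exists_sep (Sum.elim (Sum.elim KA KB) L)
    (by rintro ((a | b) | d) <;> simp only [Sum.elim_inl, Sum.elim_inr, cA, cB, cL])
  obtain ⟨M, hM0, hM⟩ : ∃ M : ℝ, 0 < M ∧ 2 < M * ε :=
    ⟨3 / ε, by positivity, by rw [div_mul_cancel₀ _ hε.ne']; norm_num⟩
  have gAA : ∀ a a', a ≠ a' → Disjoint (pix M (KA a)) (pix M (KA a')) := fun a a' h =>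
    pix_disjoint hM hM0 (hsep (.inl (.inl a)) (.inl (.inl a')) (dAA a a' h))
  have gAB : ∀ a b, Disjoint (pix M (KA a)) (pix M (KB b)) := fun a b =>
    pix_disjoint hM hM0 (hsep (.inl (.inl a)) (.inl (.inr b)) (dAB a b))
  have gBB : ∀ b b', b ≠ b' → Disjoint (pix M (KB b)) (pix M (KB b')) := fun b b' h =>
    pix_disjoint hM hM0 (hsep (.inl (.inr b)) (.inl (.inr b')) (dBB b b' h))
  have gLL : ∀ d d', d ≠ d' → Disjoint (pix M (L d)) (pix M (L d')) := fun d d' h =>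
    pix_disjoint hM hM0 (hsep (.inr d) (.inr d') (dLL d d' h))
  have gLA : ∀ d a, s d ≠ a → Disjoint (pix M (L d)) (pix M (KA a)) := fun d a h =>
    pix_disjoint hM hM0 (hsep (.inr d) (.inl (.inl a)) (dLA d a h))
  have gLB : ∀ d b, w d ≠ b → Disjoint (pix M (L d)) (pix M (KB b)) := fun d b h =>
    pix_disjoint hM hM0 (hsep (.inr d) (.inl (.inr b)) (dLB d b h))
  -- `R d` is the part of the link `L d` outside the white set that is attached to the black set
  let W : D → Set (ℤ × ℤ) := fun d => pix M (L d) \ pix M (KB (w d))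
  let R : D → Set (ℤ × ℤ) := fun d => {g | g ∈ W d ∧ ∀ Q : Set (ℤ × ℤ),
    (∀ a ∈ W d, ∀ b ∈ W d, GAdj a b → a ∈ Q → b ∈ Q) → W d ∩ pix M (KA (s d)) ⊆ Q → g ∈ Q}
  have Rstep : ∀ d, ∀ a ∈ W d, ∀ b ∈ W d, GAdj a b → a ∈ R d → b ∈ R d :=
    fun d a ha b hb hab haR => ⟨hb, fun Q h1 h2 => h1 a ha b hb hab (haR.2 Q h1 h2)⟩
  have Rbase : ∀ d, W d ∩ pix M (KA (s d)) ⊆ R d := fun d g hg => ⟨hg.1, fun Q _ h2 => h2 hg⟩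
  have RL : ∀ d, R d ⊆ pix M (L d) := fun d g hg => hg.1.1
  have hit : ∀ d, ∃ y ∈ R d, ∃ z ∈ pix M (KB (w d)), GAdj y z := by
    intro d
    by_contra hno
    push Not at hno
    obtain ⟨p, hp1, hp2⟩ := pix_nonempty_inter M (mA d)
    obtain ⟨q, hq1, hq2⟩ := pix_nonempty_inter M (mB d)
    have := pix_conn hM0 (pL d) (R d) (by
      intro a ha b hb hab haR
      by_cases hbB : b ∈ pix M (KB (w d))
      · exact absurd hab (hno a haR b hbB)
      · exact Rstep d a haR.1 b ⟨hb, hbB⟩ hab haR) p hp1 q hq1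
      (Rbase d ⟨⟨hp1, Set.disjoint_left.1 (gAB _ _) hp2⟩, hp2⟩)
    exact this.1.2 hq2
  choose y hyR z hzB hyz using hit
  let P : A ⊕ B → Set (ℤ × ℤ) := Sum.elim
    (fun a => pix M (KA a) ∪ ⋃ d, ⋃ (_ : s d = a), R d) (fun b => pix M (KB b))
  have hPl : ∀ a g, g ∈ P (.inl a) ↔ g ∈ pix M (KA a) ∨ ∃ d, s d = a ∧ g ∈ R d := by
    intro a g; simp [P]
  have dis : ∀ c c', c ≠ c' → ∀ g ∈ P c, g ∈ P c' → False := by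
    have hRB : ∀ d b g, g ∈ R d → g ∈ pix M (KB b) → False := by
      intro d b g hg hb
      by_cases h : w d = b
      · subst h; exact hg.1.2 hb
      · exact Set.disjoint_left.1 (gLB d b h) (RL d hg) hb
    have hRA : ∀ d a g, s d ≠ a → g ∈ R d → g ∈ pix M (KA a) → False :=
      fun d a g h hg ha => Set.disjoint_left.1 (gLA d a h) (RL d hg) ha
    rintro (a | b) (a' | b') hne g hg hg'
    · have hne' : a ≠ a' := fun h => hne (h ▸ rfl)
      rcases (hPl _ _).1 hg with h | ⟨d, rfl, h⟩ <;> rcases (hPl _ _).1 hg' with h' | ⟨d', rfl, h'⟩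
      · exact Set.disjoint_left.1 (gAA _ _ hne') h h'
      · exact hRA d' a g hne'.symm h' h
      · exact hRA d a' g hne' h h'
      · exact Set.disjoint_left.1 (gLL d d' fun h => hne' (h ▸ rfl)) (RL d h) (RL d' h')
    · rcases (hPl _ _).1 hg with h | ⟨d, rfl, h⟩
      · exact Set.disjoint_left.1 (gAB _ _) h hg'
      · exact hRB _ _ _ h hg'
    · rcases (hPl _ _).1 hg' with h | ⟨d, rfl, h⟩
      · exact Set.disjoint_left.1 (gAB _ _) h hg
      · exact hRB _ _ _ h hg
    · exact Set.disjoint_left.1 (gBB b b' fun h => hne (h ▸ rfl)) hg hg'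
  have conn : ∀ c, GConn (P c) := by
    rintro (a | b)
    · have sub : ∀ Q : Set (ℤ × ℤ),
          (∀ u ∈ P (.inl a), ∀ v ∈ P (.inl a), GAdj u v → u ∈ Q → v ∈ Q) →
          pix M (KA a) ⊆ Q → P (.inl a) ⊆ Q := by
        intro Q hQ hsub g hg
        rcases (hPl _ _).1 hg with h | ⟨d, rfl, h⟩
        · exact hsub h
        · refine h.2 {g | g ∈ R d → g ∈ Q} ?_ (fun g hg _ => hsub hg.2) h
          intro u hu v hv huv huQ hvR
          have huR := Rstep d v hv u hu huv.symm hvR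
          exact hQ u ((hPl _ _).2 (Or.inr ⟨d, rfl, huR⟩)) v ((hPl _ _).2 (Or.inr ⟨d, rfl, hvR⟩))
            huv (huQ huR)
      intro Q hQ p hp q hq hpQ
      by_cases hmeet : ∃ g ∈ pix M (KA a), g ∈ Q
      · obtain ⟨g, hg, hgQ⟩ := hmeet
        refine sub Q hQ (fun g' hg' => ?_) hq
        exact pix_conn hM0 (pA a) Q (fun u hu v hv => hQ u ((hPl _ _).2 (Or.inl hu)) v
          ((hPl _ _).2 (Or.inl hv))) g hg g' hg' hgQ
      · push Not at hmeet
        exact absurd hpQ (sub Qᶜ (fun u hu v hv huv huQ hvQ => huQ (hQ v hv u hu huv.symm hvQ))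
          hmeet hp)
    · exact pix_conn hM0 (pB b)
  have fin : ∀ c, (P c).Finite := by
    rintro (a | b)
    · refine (pix_finite (cA a)).union (Set.finite_iUnion fun d => Set.finite_iUnion fun _ => ?_)
      exact (pix_finite (cL d)).subset (RL d)
    · exact pix_finite (cB b)
  obtain ⟨σ, τ, h1, h2, h3⟩ := hypermap_of_blobs P fin conn
    (fun c c' h => Set.disjoint_left.2 (dis c c' h)) (fun d => Sum.inl (s d)) (fun d => Sum.inr (w d))
    (fun d d' => by simp) y z (fun d => (hPl _ _).2 (Or.inr ⟨d, rfl, hyR d⟩)) hzB hyz (by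
      intro d d' h
      by_contra hne
      exact Set.disjoint_left.1 (gLL d d' hne) (RL d (hyR d)) (h ▸ RL d' (hyR d')))
  exact ⟨σ, τ, fun d d' => by rw [h1]; simp, fun d d' => by rw [h2]; simp, h3⟩

/-! ### The hypermap of a drawing -/

/-- The edge underlying a dart, as an index of the curves of a drawing. -/
def dedge {V : Type*} {G : SimpleGraph V} (d : G.Dart) : G.edgeSet := ⟨d.edge, d.edge_mem⟩

lemma dedge_eq_iff {V : Type*} {G : SimpleGraph V} {d d' : G.Dart} :
    dedge d = dedge d' ↔ d' = d ∨ d' = d.symm := by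
  rw [dedge, dedge, Subtype.mk.injEq, eq_comm, SimpleGraph.dart_edge_eq_iff]

lemma dedge_symm {V : Type*} {G : SimpleGraph V} (d : G.Dart) : dedge d.symm = dedge d :=
  Subtype.ext d.edge_symm

/-- The curves of a drawing can be parametrised from the starting vertex of each dart. -/
lemma oriented_curves {V : Type*} {G : SimpleGraph V} (Dr : Drawing G) :
    ∃ γ : G.Dart → ℝ → ℝ × ℝ, (∀ d, ContinuousOn (γ d) (Icc 0 1)) ∧
      (∀ d, InjOn (γ d) (Icc 0 1)) ∧ (∀ d, γ d 0 = Dr.pos d.fst) ∧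
      (∀ d t, γ d.symm t = γ d (1 - t)) ∧
      (∀ d, γ d '' Ioo 0 1 = Dr.curve (dedge d) '' Ioo 0 1) ∧
      (∀ d, γ d '' Icc 0 1 = Dr.curve (dedge d) '' Icc 0 1) := by
  classical
  let γ : G.Dart → ℝ → ℝ × ℝ := fun d t =>
    if Dr.curve (dedge d) 0 = Dr.pos d.fst then Dr.curve (dedge d) t
    else Dr.curve (dedge d) (1 - t)
  have h0 : ∀ d : G.Dart,
      (Dr.curve (dedge d) 0 = Dr.pos d.fst ∧ Dr.curve (dedge d) 1 = Dr.pos d.snd) ∨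
      (Dr.curve (dedge d) 0 = Dr.pos d.snd ∧ Dr.curve (dedge d) 1 = Dr.pos d.fst) := by
    intro d
    obtain ⟨a, b, hab, ha, hb⟩ := Dr.curve_ends (dedge d)
    have h1 : s(d.fst, d.snd) = s(a, b) := hab
    rcases Sym2.eq_iff.1 h1 with ⟨h1, h2⟩ | ⟨h1, h2⟩
    · left; rw [h1, h2]; exact ⟨ha, hb⟩
    · right; rw [h1, h2]; exact ⟨ha, hb⟩
  have hne : ∀ d : G.Dart, Dr.pos d.fst ≠ Dr.pos d.snd := fun d h =>
    d.adj.ne (Dr.pos_inj h)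
  have hform : ∀ d, γ d = Dr.curve (dedge d) ∨ γ d = fun t => Dr.curve (dedge d) (1 - t) := by
    intro d
    by_cases h : Dr.curve (dedge d) 0 = Dr.pos d.fst
    · left; funext t; simp only [γ, if_pos h]
    · right; funext t; simp only [γ, if_neg h]
  have fIcc : (fun t : ℝ => 1 - t) '' Icc 0 1 = Icc 0 1 := by simp
  have fIoo : (fun t : ℝ => 1 - t) '' Ioo 0 1 = Ioo 0 1 := by simp
  have mIcc : MapsTo (fun t : ℝ => 1 - t) (Icc 0 1) (Icc 0 1) := fun t ht =>
    ⟨by linarith [ht.2], by linarith [ht.1]⟩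
  refine ⟨γ, fun d => ?_, fun d => ?_, fun d => ?_, fun d t => ?_, fun d => ?_, fun d => ?_⟩
  · rcases hform d with h | h <;> rw [h]
    · exact Dr.curve_cont _
    · exact (Dr.curve_cont _).comp (by fun_prop) mIcc
  · rcases hform d with h | h <;> rw [h]
    · exact Dr.curve_inj _
    · exact (Dr.curve_inj _).comp (fun a _ b _ h => by simpa using h) mIcc
  · rcases h0 d with ⟨h1, h2⟩ | ⟨h1, h2⟩
    · simp only [γ, if_pos h1, h1]
    · have : ¬ Dr.curve (dedge d) 0 = Dr.pos d.fst := by rw [h1]; exact (hne d).symm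
      simp only [γ, if_neg this, sub_zero, h2]
  · rcases h0 d with ⟨h1, h2⟩ | ⟨h1, h2⟩
    · simp [γ, dedge_symm, h1, hne d]
    · simp [γ, dedge_symm, h1, (hne d).symm]
  · rcases hform d with h | h <;> rw [h]
    rw [← image_image (Dr.curve (dedge d)) (fun t => 1 - t), fIoo]
  · rcases hform d with h | h <;> rw [h]
    rw [← image_image (Dr.curve (dedge d)) (fun t => 1 - t), fIcc]

/-- The hypermap of an almost planar drawing: the cycles of `σ` are the vertices, and those of `q`
are the edges, where an edge is lumped together with the edge crossing it (if any), irrespective of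
the number of crossing points. -/
theorem hypermap_of_drawing {V : Type*} [Finite V] {G : SimpleGraph V} [Fintype G.Dart]
    (Dr : Drawing G) (hDr : Dr.IsAlmostPlanar) :
    ∃ σ q : Perm G.Dart, (∀ d d', σ.SameCycle d d' ↔ d.fst = d'.fst) ∧
      (∀ d, q.SameCycle d d.symm) ∧
      (∀ d d₁ d₂, q.SameCycle d d₁ → q.SameCycle d d₂ → dedge d ≠ dedge d₁ →
        dedge d ≠ dedge d₂ → dedge d₁ = dedge d₂) ∧ HPlanar σ q := by
  classical
  obtain ⟨γ, gcont, ginj, g0, gsymm, gIoo, gIcc⟩ := oriented_curves Dr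
  have gint : ∀ d, ∀ t ∈ Ioo (0 : ℝ) 1, ∀ v, γ d t ≠ Dr.pos v := by
    intro d t ht v h
    obtain ⟨t', ht', h'⟩ : γ d t ∈ Dr.curve (dedge d) '' Ioo 0 1 := gIoo d ▸ mem_image_of_mem _ ht
    exact Dr.interior_no_vertex _ t' ht' v (h'.trans h)
  have hfin : ∀ d d', dedge d ≠ dedge d' →
      {t | t ∈ Icc (0 : ℝ) 1 ∧ γ d t ∈ γ d' '' Icc 0 1}.Finite := by
    intro d d' h
    refine Set.Finite.of_finite_image (f := γ d) ((Dr.finite_meet _ _ h).subset ?_)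
      ((ginj d).mono fun t ht => ht.1)
    rintro _ ⟨t, ⟨ht, ht'⟩, rfl⟩
    exact ⟨gIcc d ▸ mem_image_of_mem _ ht, gIcc d' ▸ ht'⟩
  -- no curve meets another one at a parameter in `(0, 2 * η]`
  obtain ⟨η, hη0, hη1, hη⟩ : ∃ η : ℝ, 0 < η ∧ η < 1 / 4 ∧ ∀ d d', dedge d ≠ dedge d' →
      ∀ t ∈ Icc (0 : ℝ) 1, 0 < t → γ d t ∈ γ d' '' Icc 0 1 → 2 * η < t := by
    have ev : ∀ a > (0 : ℝ), ∀ᶠ η in nhdsWithin (0 : ℝ) (Ioi 0), 2 * η < a := by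
      intro a ha
      have : ∀ᶠ η in nhds (0 : ℝ), η < a / 2 := eventually_lt_nhds (by positivity)
      filter_upwards [mem_nhdsWithin_of_mem_nhds this] with η h
      have h' : η < a / 2 := h
      linarith
    have h1 : ∀ᶠ η in nhdsWithin (0 : ℝ) (Ioi 0), ∀ d d', dedge d ≠ dedge d' →
        ∀ t ∈ {t | t ∈ Icc (0 : ℝ) 1 ∧ γ d t ∈ γ d' '' Icc 0 1}, 0 < t → 2 * η < t := by
      rw [Filter.eventually_all]; intro d
      rw [Filter.eventually_all]; intro d'
      by_cases h : dedge d = dedge d'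
      · simp [h]
      · simp only [ne_eq, h, not_false_eq_true, forall_true_left]
        rw [Filter.eventually_all_finite (hfin d d' h)]
        intro t _
        by_cases ht : 0 < t
        · filter_upwards [ev t ht] with η h _; exact h
        · simp [ht]
    obtain ⟨η, ⟨h2, h3⟩, h4⟩ := ((h1.and (ev (1 / 2) (by norm_num))).and self_mem_nhdsWithin).exists
    exact ⟨η, h4, by linarith, fun d d' hd t ht h0 hm => h2 d d' hd t ⟨ht, hm⟩ h0⟩
  have coll : ∀ d d' t t', 0 < t → t ≤ 2 * η → t' ∈ Icc (0 : ℝ) 1 → γ d t = γ d' t' →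
      (d' = d ∧ t' = t) ∨ (d' = d.symm ∧ t' = 1 - t) := by
    intro d d' t t' h0 h1 ht' h
    have ht : t ∈ Icc (0 : ℝ) 1 := ⟨h0.le, by linarith⟩
    by_cases he : dedge d = dedge d'
    · rcases dedge_eq_iff.1 he with rfl | rfl
      · left; exact ⟨rfl, (ginj _ ht ht' h).symm⟩
      · right
        rw [gsymm] at h
        have := ginj _ ht ⟨by linarith [ht'.2], by linarith [ht'.1]⟩ h
        exact ⟨rfl, by linarith⟩
    · have := hη d d' he t ht h0 ⟨t', ht', h.symm⟩
      linarith
  have crossR : ∀ d d', dedge d ≠ dedge d' → ∀ t ∈ Ioo (0 : ℝ) 1, γ d t ∈ γ d' '' Icc 0 1 →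
      t ∈ Icc (2 * η) (1 - 2 * η) := by
    intro d d' h t ht hm
    have h1 := hη d d' h t ⟨ht.1.le, ht.2.le⟩ ht.1 hm
    have h2 := hη d.symm d' (by rwa [dedge_symm]) (1 - t) ⟨by linarith [ht.2], by linarith [ht.1]⟩
      (by linarith [ht.2]) (by rw [gsymm, sub_sub_cancel]; exact hm)
    exact ⟨h1.le, by linarith⟩
  -- the class of a dart: its edge and the edge crossing it
  let ω : G.Dart → Set G.edgeSet := fun d => {f | f = dedge d ∨ Dr.Crosses (dedge d) f}
  have crsymm : ∀ e f, Dr.Crosses e f → Dr.Crosses f e := fun e f h =>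
    ⟨h.1.symm, h.2.imp fun p hp => ⟨hp.2, hp.1⟩⟩
  have ωiff : ∀ d d', ω d = ω d' ↔ dedge d = dedge d' ∨ Dr.Crosses (dedge d) (dedge d') := by
    intro d d'
    constructor
    · intro h
      have : dedge d ∈ ω d' := h ▸ Or.inl rfl
      rcases this with h | h
      · exact Or.inl h
      · exact Or.inr (crsymm _ _ h)
    · rintro (h | h)
      · simp only [ω, h]
      · ext f
        constructor
        · rintro (rfl | hf)
          · exact Or.inr (crsymm _ _ h)
          · exact Or.inl (hDr _ _ _ hf h)
        · rintro (rfl | hf)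
          · exact Or.inr h
          · exact Or.inl (hDr _ _ _ hf (crsymm _ _ h))
  have meetω : ∀ d d', ∀ t ∈ Ioo (0 : ℝ) 1, ∀ t' ∈ Ioo (0 : ℝ) 1, γ d t = γ d' t' →
      ω d = ω d' := by
    intro d d' t ht t' ht' h
    rw [ωiff]
    by_cases he : dedge d = dedge d'
    · exact Or.inl he
    · exact Or.inr ⟨he, γ d t, gIoo d ▸ mem_image_of_mem _ ht,
        gIoo d' ▸ (h ▸ mem_image_of_mem _ ht')⟩
  -- stars around the vertices, middle parts of the edges, and the links between them
  let KA : V → Set (ℝ × ℝ) := fun v => {Dr.pos v} ∪ ⋃ d : {d : G.Dart // d.fst = v}, γ d '' Icc 0 η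
  let KB : Set G.edgeSet → Set (ℝ × ℝ) := fun x =>
    ⋃ d : {d : G.Dart // ω d = x}, γ d '' Icc (2 * η) (1 - 2 * η)
  let L : G.Dart → Set (ℝ × ℝ) := fun d => γ d '' Icc η (2 * η)
  have csub : ∀ d a b, 0 ≤ a → b ≤ 1 → ContinuousOn (γ d) (Icc a b) := fun d a b ha hb =>
    (gcont d).mono (Icc_subset_Icc ha hb)
  have hA : ∀ v p, p ∈ KA v → p = Dr.pos v ∨ ∃ d t, d.fst = v ∧ 0 < t ∧ t ≤ η ∧ p = γ d t := by
    rintro v p (h | h)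
    · exact Or.inl h
    · obtain ⟨⟨d, hd⟩, t, ht, rfl⟩ := mem_iUnion.1 h
      rcases ht.1.eq_or_lt with h0 | h0
      · left; subst h0; subst hd; exact g0 d
      · right; exact ⟨d, t, hd, h0, ht.2, rfl⟩
  have hB : ∀ x p, p ∈ KB x → ∃ d t, ω d = x ∧ 2 * η ≤ t ∧ t ≤ 1 - 2 * η ∧ p = γ d t := by
    intro v p h
    obtain ⟨⟨d, hd⟩, t, ht, rfl⟩ := mem_iUnion.1 h
    exact ⟨d, t, hd, ht.1, ht.2, rfl⟩
  have hBin : ∀ d, γ d '' Icc (2 * η) (1 - 2 * η) ⊆ KB (ω d) := fun d p hp =>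
    mem_iUnion.2 ⟨⟨d, rfl⟩, hp⟩
  obtain ⟨σ, q, h1, h2, h3⟩ := hypermap_of_sets KA KB L (fun d => d.fst) ω
    (fun v => isCompact_singleton.union (isCompact_iUnion fun d =>
      isCompact_Icc.image_of_continuousOn (csub d.1 _ _ le_rfl (by linarith))))
    (fun x => isCompact_iUnion fun d =>
      isCompact_Icc.image_of_continuousOn (csub d.1 _ _ (by linarith) (by linarith)))
    (fun d => isCompact_Icc.image_of_continuousOn (csub d _ _ (by linarith) (by linarith)))
    (by
      intro v
      refine isPreconnected_of_forall (Dr.pos v) ?_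
      rintro y (hy | hy)
      · exact ⟨{Dr.pos v}, subset_union_left, rfl, hy, isPreconnected_singleton⟩
      · obtain ⟨⟨d, hd⟩, hy'⟩ := mem_iUnion.1 hy
        refine ⟨γ d '' Icc 0 η, fun p hp => Or.inr (mem_iUnion.2 ⟨⟨d, hd⟩, hp⟩), ?_, hy',
          isPreconnected_Icc.image _ (csub d _ _ le_rfl (by linarith))⟩
        exact ⟨0, ⟨le_rfl, hη0.le⟩, by rw [g0, hd]⟩)
    (by
      intro x
      have pc : ∀ d, IsPreconnected (γ d '' Icc (2 * η) (1 - 2 * η)) := fun d =>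
        isPreconnected_Icc.image _ (csub d _ _ (by linarith) (by linarith))
      refine isPreconnected_of_forall_pair ?_
      intro p hp p' hp'
      obtain ⟨d, t, hd, ht1, ht2, rfl⟩ := hB x p hp
      obtain ⟨d', t', hd', ht1', ht2', rfl⟩ := hB x p' hp'
      subst hd
      rcases (ωiff d d').1 hd'.symm with he | hc
      · refine ⟨γ d '' Icc (2 * η) (1 - 2 * η), hBin d, mem_image_of_mem _ ⟨ht1, ht2⟩, ?_, pc d⟩
        rcases dedge_eq_iff.1 he with rfl | rfl
        · exact mem_image_of_mem _ ⟨ht1', ht2'⟩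
        · rw [gsymm]; exact mem_image_of_mem _ ⟨by linarith, by linarith⟩
      · refine ⟨γ d '' Icc (2 * η) (1 - 2 * η) ∪ γ d' '' Icc (2 * η) (1 - 2 * η),
          union_subset (hBin d) (hd' ▸ hBin d'), Or.inl (mem_image_of_mem _ ⟨ht1, ht2⟩),
          Or.inr (mem_image_of_mem _ ⟨ht1', ht2'⟩), ?_⟩
        obtain ⟨hne, r, hr, hr'⟩ := hc
        rw [← gIoo] at hr hr'
        obtain ⟨u, hu, rfl⟩ := hr
        obtain ⟨u', hu', huu⟩ := hr'
        refine IsPreconnected.union (γ d u) (mem_image_of_mem _ ?_) ?_ (pc d) (pc d')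
        · exact crossR d d' hne u hu ⟨u', Ioo_subset_Icc_self hu', huu⟩
        · rw [← huu]
          exact mem_image_of_mem _
            (crossR d' d hne.symm u' hu' ⟨u, Ioo_subset_Icc_self hu, huu.symm⟩))
    (fun d => isPreconnected_Icc.image _ (csub d _ _ (by linarith) (by linarith)))
    (by
      intro v v' hne
      rw [Set.disjoint_left]
      intro p hp hp'
      rcases hA v p hp with rfl | ⟨d, t, hd, h0, h1, rfl⟩
      · rcases hA v' _ hp' with h | ⟨d', t', hd', h0', h1', h⟩
        · exact hne (Dr.pos_inj h)
        · exact gint d' t' ⟨h0', by linarith⟩ v h.symm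
      · rcases hA v' _ hp' with h | ⟨d', t', hd', h0', h1', h⟩
        · exact gint d t ⟨h0, by linarith⟩ v' h
        · rcases coll d d' t t' h0 (by linarith) ⟨h0'.le, by linarith⟩ h with ⟨rfl, _⟩ | ⟨_, h2⟩
          · exact hne (hd.symm.trans hd')
          · linarith)
    (by
      intro v x
      rw [Set.disjoint_left]
      intro p hp hp'
      obtain ⟨d', t', hd', h0', h1', h⟩ := hB x p hp'
      rcases hA v p hp with rfl | ⟨d, t, hd, h0, h1, rfl⟩
      · exact gint d' t' ⟨by linarith, by linarith⟩ v h.symm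
      · rcases coll d d' t t' h0 (by linarith) ⟨by linarith, by linarith⟩ h with ⟨_, h2⟩ | ⟨_, h2⟩ <;>
          linarith)
    (by
      intro x x' hne
      rw [Set.disjoint_left]
      intro p hp hp'
      obtain ⟨d, t, rfl, h0, h1, rfl⟩ := hB x p hp
      obtain ⟨d', t', rfl, h0', h1', h⟩ := hB x' _ hp'
      exact hne (meetω d d' t ⟨by linarith, by linarith⟩ t' ⟨by linarith, by linarith⟩ h))
    (by
      intro d d' hne
      rw [Set.disjoint_left]
      rintro p ⟨t, ht, rfl⟩ ⟨t', ht', h⟩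
      rcases coll d d' t t' (by linarith [ht.1]) ht.2 ⟨by linarith [ht'.1], by linarith [ht'.2]⟩
        h.symm with ⟨h1, _⟩ | ⟨_, h2⟩
      · exact hne h1.symm
      · linarith [ht.2, ht'.2])
    (by
      intro d v hne
      rw [Set.disjoint_left]
      rintro p ⟨t, ht, rfl⟩ hp
      rcases hA v _ hp with h | ⟨d', t', hd', h0', h1', h⟩
      · exact gint d t ⟨by linarith [ht.1], by linarith [ht.2]⟩ v h
      · rcases coll d d' t t' (by linarith [ht.1]) ht.2 ⟨h0'.le, by linarith⟩ h with
          ⟨rfl, _⟩ | ⟨_, h2⟩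
        · exact hne hd'
        · linarith [ht.2])
    (by
      intro d x hne
      rw [Set.disjoint_left]
      rintro p ⟨t, ht, rfl⟩ hp
      obtain ⟨d', t', rfl, h0', h1', h⟩ := hB x _ hp
      exact hne (meetω d d' t ⟨by linarith [ht.1], by linarith [ht.2]⟩ t'
        ⟨by linarith, by linarith⟩ h))
    (fun d => ⟨γ d η, mem_image_of_mem _ ⟨le_rfl, by linarith⟩,
      Or.inr (mem_iUnion.2 ⟨⟨d, rfl⟩, mem_image_of_mem _ ⟨hη0.le, le_rfl⟩⟩)⟩)
    (fun d => ⟨γ d (2 * η), mem_image_of_mem _ ⟨by linarith, le_rfl⟩,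
      hBin d (mem_image_of_mem _ ⟨le_rfl, by linarith⟩)⟩)
  refine ⟨σ, q, h1, fun d => (h2 _ _).2 ((ωiff _ _).2 (Or.inl (dedge_symm d).symm)), ?_, h3⟩
  intro d d₁ d₂ e1 e2 n1 n2
  have c1 := ((ωiff _ _).1 ((h2 _ _).1 e1)).resolve_left n1
  have c2 := ((ωiff _ _).1 ((h2 _ _).1 e2)).resolve_left n2
  exact hDr _ _ _ c1 c2

/-! ### Making crossings clean -/

/-- A planar bipartite 1-planar map with clean crossings. The elements of `D` are the darts; `s d` is
the starting vertex of `d`, `rev d` its reversal and `x d` says that its edge is crossed. The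
cycles of `σ` are the vertices. The cycles of `τ` are the uncrossed edges, of length two, and the
crossings, where `τ` runs through the four darts that start at the ends of the two edges, so that
`τ (τ d) = rev d`. The colouring `col` is proper, there are no parallel edges (`inj`), and
crossing edges share no end (`s_tau_ne`, `s_tau_ne_rev`). -/
structure CrossMap {D V : Type*} [Fintype D] (σ τ : Perm D) (rev : D → D) (s : D → V)
    (col : V → ZMod 2) (x : D → Prop) : Prop where
  same : ∀ d d', σ.SameCycle d d' ↔ s d = s d'
  planar : HPlanar σ τ
  rev_rev : ∀ d, rev (rev d) = d
  col_rev : ∀ d, col (s (rev d)) ≠ col (s d)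
  inj : ∀ d d', s d = s d' → s (rev d) = s (rev d') → d = d'
  x_tau : ∀ d, x (τ d) ↔ x d
  tau_of_not : ∀ d, ¬ x d → τ d = rev d
  tau_tau : ∀ d, x d → τ (τ d) = rev d
  s_tau_ne : ∀ d, x d → s (τ d) ≠ s d
  s_tau_ne_rev : ∀ d, x d → s (τ d) ≠ s (rev d)

/-- Crossings are made clean without changing the graph. A cycle of `q` contains one edge or two.
If the darts of two edges do not alternate in it, the edges can be pulled apart. If they
alternate and share an end, the two edges are exchanged at the crossing, after which they no longer
cross; as they have a common end, the same pairs of vertices are joined as before. -/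
theorem resolve {D V : Type*} [Fintype D] {σ q : Perm D} {sy : D → D} {s : D → V}
    {col : V → ZMod 2} (same : ∀ d d', σ.SameCycle d d' ↔ s d = s d') (planar : HPlanar σ q)
    (sysy : ∀ d, sy (sy d) = d) (colsy : ∀ d, col (s (sy d)) ≠ col (s d))
    (inj : ∀ d d', s d = s d' → s (sy d) = s (sy d') → d = d')
    (hq1 : ∀ d, q.SameCycle d (sy d))
    (hq2 : ∀ d d₁ d₂, q.SameCycle d d₁ → q.SameCycle d d₂ → d₁ ≠ d → d₁ ≠ sy d →
      d₂ ≠ d → d₂ ≠ sy d → d₂ = d₁ ∨ d₂ = sy d₁) :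
    ∃ (τ : Perm D) (rev : D → D) (x : D → Prop), CrossMap σ τ rev s col x := by
  classical
  have syne : ∀ d, sy d ≠ d := fun d h => colsy d (by rw [h])
  have ssy : ∀ d, s (sy d) ≠ s d := fun d h => colsy d (by rw [h])
  have syinj : ∀ d d', sy d = sy d' → d = d' := fun d d' h => by rw [← sysy d, h, sysy]
  have st1 : ∀ d, q.SameCycle d (q d) := sameCycle_step q
  have st2 : ∀ d, q.SameCycle d (q (q d)) := fun d => (st1 d).trans (st1 _)
  have st3 : ∀ d, q.SameCycle d (q (q (q d))) := fun d => (st2 d).trans (st1 _)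
  have qI : ∀ d, q (q⁻¹ d) = d := fun d => by simp
  have Iq : ∀ d, q⁻¹ (q d) = d := fun d => by simp
  have stI : ∀ d, q.SameCycle d (q⁻¹ d) := fun d => by
    have := st1 (q⁻¹ d); rw [qI] at this; exact this.symm
  have qinj : ∀ d d', q d = q d' → d = d' := fun d d' h => q.injective h
  -- a set stable under `q` contains the whole cycle of each of its elements
  have closed : ∀ (S : Set D), (∀ d, d ∈ S → q d ∈ S) → ∀ d d', d ∈ S → q.SameCycle d d' →
      d' ∈ S := by
    intro S hS d d' hd h
    obtain ⟨n, rfl⟩ := h.exists_nat_pow_eq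
    clear h
    induction n with
    | zero => simpa using hd
    | succ n ih => rw [pow_succ', Perm.mul_apply]; exact hS _ ih
  have qne : ∀ d, q d ≠ d := fun d h => syne d (closed {d} (by
    rintro e rfl; exact h) d _ rfl (hq1 d))
  have tr1 : ∀ d, q (q d) = sy d → q (q (q d)) = sy (q d) := by
    intro d h
    have a1 : q d ≠ sy d := by rw [← h]; exact (qne _).symm
    have a2 : q (q (q d)) ≠ d := by
      intro h3
      have : sy (q d) ∈ ({d, q d, q (q d)} : Set D) := by
        refine closed _ ?_ (q d) _ (by simp) (hq1 (q d))
        rintro e (rfl | rfl | rfl) <;> simp [h3]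
      rcases this with h4 | h4 | h4
      · have := congrArg sy h4; rw [sysy] at this; exact a1 this
      · exact syne _ h4
      · rw [h] at h4; exact qne _ (syinj _ _ h4)
    have a3 : q (q (q d)) ≠ sy d := by rw [← h]; exact qne _
    rcases hq2 d (q d) (q (q (q d))) (st1 d) (st3 d) (qne d) a1 a2 a3 with h4 | h4
    · have := qinj _ _ h4
      rw [h] at this
      exact absurd this (syne d)
    · exact h4
  have tr4 : ∀ d, q (q d) = sy d → q (sy (q d)) = d := by
    intro d h
    have := tr1 (q d) (tr1 d h)
    rw [tr1 d h, h, sysy] at this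
    exact this
  have trI : ∀ d, q (q d) = sy d → q⁻¹ d = sy (q d) := by
    intro d h
    rw [inv_eq_iff_eq, tr4 d h]
  -- if the darts of two crossing edges do not alternate, `sy d` is next to `d`
  have ntr : ∀ d, q (q d) ≠ sy d → sy d = q d ∨ sy d = q⁻¹ d := by
    intro d h
    by_contra hno
    push Not at hno
    obtain ⟨n1, n2⟩ := hno
    have a0 : q⁻¹ d ≠ d := fun h => qne d (by rw [inv_eq_iff_eq] at h; exact h.symm)
    have a5 : q (q d) ≠ d := by
      intro h2
      have : sy d ∈ ({d, q d} : Set D) := by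
        refine closed _ ?_ d _ (by simp) (hq1 d)
        rintro e (rfl | rfl) <;> simp [h2]
      rcases this with h4 | h4
      · exact syne _ h4
      · exact n1 h4
    rcases hq2 d (q d) (q⁻¹ d) (st1 d) (stI d) (qne d) n1.symm a0 n2.symm with h3 | h3
    · rw [inv_eq_iff_eq] at h3; exact a5 h3.symm
    · rcases hq2 d (q d) (q (q d)) (st1 d) (st2 d) (qne d) n1.symm a5 h with h4 | h4
      · exact qne _ h4
      · have h5 : q (q (q d)) = d := by rw [h4, ← h3, qI]
        have : sy d ∈ ({d, q d, q (q d)} : Set D) := by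
          refine closed _ ?_ d _ (by simp) (hq1 d)
          rintro e (rfl | rfl | rfl) <;> simp [h5]
        rcases this with h6 | h6 | h6
        · exact syne _ h6
        · exact n1 h6
        · exact h h6.symm
  -- `tr` says that two edges alternate around a crossing; `A` and `B` are the two ways in which
  -- such edges can share an end
  let tr : D → Prop := fun d => q (q d) = sy d
  let A : D → Prop := fun d => tr d ∧ (s d = s (q d) ∨ s (sy d) = s (sy (q d)))
  let B : D → Prop := fun d => tr d ∧ (s d = s (sy (q d)) ∨ s (sy d) = s (q d))
  have trq : ∀ d, tr (q d) ↔ tr d := by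
    intro d
    refine ⟨fun h => ?_, tr1 d⟩
    have h6 : q (sy (q (q d))) = q d := tr4 _ h
    have h7 : sy (q (q d)) = d := qinj _ _ h6
    show q (q d) = sy d
    have := congrArg sy h7
    rwa [sysy] at this
  have Aq : ∀ d, A (q d) ↔ B d := by
    intro d
    show (tr (q d) ∧ _) ↔ (tr d ∧ _)
    rw [trq]
    refine and_congr_right fun h => ?_
    have h : q (q d) = sy d := h
    rw [h, sysy]
    constructor <;> (rintro (h | h) <;> simp [h])
  have Bq : ∀ d, B (q d) ↔ A d := by
    intro d
    show (tr (q d) ∧ _) ↔ (tr d ∧ _)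
    rw [trq]
    refine and_congr_right fun h => ?_
    have h : q (q d) = sy d := h
    rw [h, sysy]
    constructor <;> (rintro (h | h) <;> simp [h])
  have AB : ∀ d, A d → ¬ B d := by
    rintro d ⟨-, h1⟩ ⟨-, h2⟩
    have e1 := ssy d
    have e2 := ssy (q d)
    rcases h1 with h1 | h1 <;> rcases h2 with h2 | h2
    · exact e2 (by rw [← h1, ← h2])
    · exact e1 (by rw [h2, h1])
    · exact e1 (by rw [h2, h1])
    · exact e2 (by rw [← h1, ← h2])
  let rv : D → D := fun d => if A d then q⁻¹ d else if B d then q d else sy d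
  let X : D → Prop := fun d => tr d ∧ ¬ A d ∧ ¬ B d
  let t : D → D := fun d => if X d then q d else rv d
  have rvA : ∀ d, A d → rv d = q⁻¹ d := fun d h => if_pos h
  have rvB : ∀ d, B d → rv d = q d := fun d h => by
    simp only [rv, if_neg fun h' => AB d h' h, if_pos h]
  have rv0 : ∀ d, ¬ A d → ¬ B d → rv d = sy d := fun d h h' => by
    simp only [rv, if_neg h, if_neg h']
  have Xq : ∀ d, X (q d) ↔ X d := fun d => by
    simp only [X, trq, Aq, Bq]; tauto
  have trI' : ∀ d, tr (q⁻¹ d) ↔ tr d := fun d => by rw [← trq, qI]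
  have AI : ∀ d, A (q⁻¹ d) ↔ B d := fun d => by rw [← Bq, qI]
  have BI : ∀ d, B (q⁻¹ d) ↔ A d := fun d => by rw [← Aq, qI]
  have syX : ∀ d, (tr (sy d) ↔ tr d) ∧ (A (sy d) ↔ A d) ∧ (B (sy d) ↔ B d) := by
    intro d
    by_cases h : tr d
    · have h' : q (q d) = sy d := h
      rw [← h']; simp [trq, Aq, Bq]
    · have : ¬ tr (sy d) := by
        rcases ntr d h with h2 | h2 <;> rw [h2]
        · rwa [trq]
        · rwa [trI']
      simp only [A, B, h, this, false_and, and_self]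
  have rvrv : ∀ d, rv (rv d) = d := by
    intro d
    by_cases hA : A d
    · rw [rvA d hA, rvB _ ((BI d).2 hA), qI]
    by_cases hB : B d
    · rw [rvB d hB, rvA _ ((Aq d).2 hB), Iq]
    · rw [rv0 d hA hB, rv0 _ (by rwa [(syX d).2.1]) (by rwa [(syX d).2.2]), sysy]
  have Xrv : ∀ d, X (rv d) ↔ X d := by
    intro d
    by_cases hA : A d
    · rw [rvA d hA, ← Xq, qI]
    by_cases hB : B d
    · rw [rvB d hB, Xq]
    · rw [rv0 d hA hB]; simp only [X, syX]
  have tX : ∀ d, X d → t d = q d := fun d h => if_pos h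
  have tn : ∀ d, ¬ X d → t d = rv d := fun d h => if_neg h
  have Xt : ∀ d, X (t d) ↔ X d := by
    intro d
    by_cases h : X d
    · rw [tX d h, Xq]
    · rw [tn d h, Xrv]
  have tinj : Function.Injective t := by
    intro d d' h
    have hX : X d ↔ X d' := by rw [← Xt, h, Xt]
    by_cases hd : X d
    · rw [tX d hd, tX d' (hX.1 hd)] at h; exact qinj _ _ h
    · rw [tn d hd, tn d' (fun h => hd (hX.2 h))] at h
      rw [← rvrv d, h, rvrv]
  let τ : Perm D := Equiv.ofBijective t (Finite.injective_iff_bijective.1 tinj)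
  have τt : ∀ d, τ d = t d := fun d => rfl
  have hcyc : ∀ d, q.SameCycle d (τ d) := by
    intro d
    rw [τt]
    by_cases h : X d
    · rw [tX d h]; exact st1 d
    · rw [tn d h]
      by_cases hA : A d
      · rw [rvA d hA]; exact stI d
      by_cases hB : B d
      · rw [rvB d hB]; exact st1 d
      · rw [rv0 d hA hB]; exact hq1 d
  have hτ : ∀ d, τ d = q d ∨ (τ d = q⁻¹ d ∧ τ (τ d) = d) := by
    intro d
    simp only [τt]
    by_cases h : X d
    · left; rw [tX d h]
    · have htt : t (t d) = d := by rw [tn d h, tn _ (by rwa [Xrv]), rvrv]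
      rw [htt, tn d h]
      by_cases hA : A d
      · right; exact ⟨rvA d hA, rfl⟩
      by_cases hB : B d
      · left; exact rvB d hB
      · rw [rv0 d hA hB]
        have : ¬ tr d := fun h' => h ⟨h', hA, hB⟩
        rcases ntr d this with h | h
        · exact Or.inl h
        · exact Or.inr ⟨h, rfl⟩
  have hpl : HPlanar σ τ := by
    intro c hbσ hbτ
    obtain ⟨ℓ, h1, h2⟩ := planar c hbσ (by
      intro χ hχ
      refine hbτ χ fun d => ?_
      exact (sameCycle_induct (r := fun x y => χ x = χ y) ⟨fun _ => rfl, fun h => h.symm,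
          fun h h' => h.trans h'⟩ (fun x => (hχ x).symm) (hcyc d)).symm)
    refine ⟨ℓ, h1, fun d => ?_⟩
    rcases hτ d with h | ⟨h, h'⟩
    · rw [h, h2]
    · have hne : τ d ≠ d := by
        rw [h]; intro h; rw [inv_eq_iff_eq] at h; exact qne _ h.symm
      have hb := hbτ (fun e => if e = d ∨ e = τ d then 1 else 0) (by
        intro e
        have : (τ e = d ∨ τ e = τ d) ↔ (e = d ∨ e = τ d) := by
          rw [τ.injective.eq_iff]
          constructor
          · rintro (h3 | h3)
            · right; exact τ.injective (by rw [h', h3])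
            · exact Or.inl h3
          · rintro (h3 | h3)
            · exact Or.inr h3
            · left; rw [h3, h']
        simp only [this])
      have hs : ∑ e, (if e = d ∨ e = τ d then (1 : ZMod 2) else 0) * c e = c d + c (τ d) := by
        have : ∀ e, (if e = d ∨ e = τ d then (1 : ZMod 2) else 0) * c e =
            (if e = d then c d else 0) + (if e = τ d then c (τ d) else 0) := by
          intro e
          by_cases e1 : e = d
          · subst e1; simp [hne.symm]
          by_cases e2 : e = τ d
          · subst e2; simp [e1]
          simp [e1, e2]
        rw [Finset.sum_congr rfl fun e _ => this e, Finset.sum_add_distrib]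
        simp
      rw [hs] at hb
      have h3 := h2 (τ d)
      rw [show q (τ d) = d by rw [h, qI]] at h3
      linear_combination -h3 - hb
  refine ⟨τ, rv, X, same, hpl, rvrv, ?_, ?_, Xt, tn, ?_, ?_, ?_⟩
  · intro d
    by_cases hA : A d
    · rw [rvA d hA, trI d hA.1]
      rcases hA.2 with h | h
      · rw [h]; exact colsy _
      · rw [← h]; exact colsy _
    by_cases hB : B d
    · rw [rvB d hB]
      rcases hB.2 with h | h
      · rw [h]; exact (colsy _).symm
      · rw [← h]; exact colsy _
    · rw [rv0 d hA hB]; exact colsy d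
  · -- each dart is parallel, with its new reversal, to an old dart of the same crossing
    have par : ∀ d, ∃ e, s e = s d ∧ s (sy e) = s (rv d) ∧
        (e = d ∨ (A d ∧ e = q d ∧ s d = s (q d)) ∨ (B d ∧ e = sy (q d) ∧ s d = s (sy (q d)))) := by
      intro d
      by_cases hA : A d
      · rw [rvA d hA, trI d hA.1]
        rcases hA.2 with h | h
        · exact ⟨q d, h.symm, rfl, Or.inr (Or.inl ⟨hA, rfl, h⟩)⟩
        · exact ⟨d, rfl, h, Or.inl rfl⟩
      by_cases hB : B d
      · rw [rvB d hB]
        rcases hB.2 with h | h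
        · exact ⟨sy (q d), h.symm, by rw [sysy], Or.inr (Or.inr ⟨hB, rfl, h⟩)⟩
        · exact ⟨d, rfl, h, Or.inl rfl⟩
      · rw [rv0 d hA hB]
        exact ⟨d, rfl, rfl, Or.inl rfl⟩
    intro d d' h h'
    obtain ⟨e, he1, he2, he3⟩ := par d
    obtain ⟨e', he1', he2', he3'⟩ := par d'
    have hee : e = e' := inj _ _ (by rw [he1, he1', h]) (by rw [he2, he2', h'])
    subst hee
    have no : ∀ d, tr d → s d = s (q d) → s (rv d) = s (rv (q d)) → False := by
      intro d ht e1 e2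
      have hA : A d := ⟨ht, Or.inl e1⟩
      rw [rvA d hA, trI d ht, rvB _ ((Bq d).2 hA), show q (q d) = sy d from ht] at e2
      exact qne d (inj _ _ e1 e2.symm).symm
    rcases he3 with h1 | ⟨h1, h2, h3⟩ | ⟨h1, h2, h3⟩ <;>
      rcases he3' with h1' | ⟨h1', h2', h3'⟩ | ⟨h1', h2', h3'⟩
    · exact h1.symm.trans h1'
    · have e4 : d = q d' := h1.symm.trans h2'
      exact (no d' h1'.1 h3' (by rw [← e4]; exact h'.symm)).elim
    · have e4 : q d = d' := by rw [h1.symm.trans h2']; exact tr4 d' h1'.1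
      exact (no d ((trq d).1 (by rw [e4]; exact h1'.1)) (by rw [e4]; exact h)
        (by rw [e4]; exact h')).elim
    · have e4 : d' = q d := h1'.symm.trans h2
      exact (no d h1.1 h3 (by rw [← e4]; exact h')).elim
    · rw [h2] at h2'; exact qinj _ _ h2'
    · have e4 : sy d = d' := by
        rw [← show q (q d) = sy d from h1.1, ← h2, h2']; exact tr4 d' h1'.1
      exact (ssy d (by rw [e4]; exact h.symm)).elim
    · have e4 : q d' = d := by rw [h1'.symm.trans h2]; exact tr4 d h1.1
      exact (no d' ((trq d').1 (by rw [e4]; exact h1.1)) (by rw [e4]; exact h.symm)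
        (by rw [e4]; exact h'.symm)).elim
    · have e4 : sy d' = d := by
        rw [← show q (q d') = sy d' from h1'.1, ← h2', h2]; exact tr4 d h1.1
      exact (ssy d' (by rw [e4]; exact h)).elim
    · rw [h2] at h2'; exact qinj _ _ (syinj _ _ h2')
  · intro d hX
    show t (t d) = rv d
    rw [tX d hX, tX _ ((Xq d).2 hX), rv0 d hX.2.1 hX.2.2]
    exact hX.1
  · intro d hX h
    rw [τt, tX d hX] at h
    exact hX.2.1 ⟨hX.1, Or.inl h.symm⟩
  · intro d hX h
    rw [τt, tX d hX, rv0 d hX.2.1 hX.2.2] at h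
    exact hX.2.2 ⟨hX.1, Or.inr h.symm⟩

/-! ### The Euler inequality -/

/-- The set of cycles of a permutation, fixed points included. -/
abbrev Orb {D : Type*} (σ : Perm D) : Type _ := Quotient (SameCycle.setoid σ)

lemma orb_eq {D : Type*} (σ : Perm D) (d d' : D) :
    (Quotient.mk (SameCycle.setoid σ) d : Orb σ) = Quotient.mk _ d' ↔ σ.SameCycle d d' :=
  Quotient.eq

noncomputable instance {D : Type*} [Fintype D] (σ : Perm D) : Fintype (Orb σ) :=
  Fintype.ofFinite _

open Classical in
/-- The map adding up a `ZMod 2`-valued function along the cycles of `σ`. -/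
noncomputable def orbSum {D : Type*} [Fintype D] (σ : Perm D) :
    (D → ZMod 2) →ₗ[ZMod 2] (Orb σ → ZMod 2) where
  toFun c o := ∑ d with (Quotient.mk _ d : Orb σ) = o, c d
  map_add' c c' := by ext o; simp [Finset.sum_add_distrib]
  map_smul' a c := by ext o; simp [Finset.mul_sum]

lemma sum_orbSum {D : Type*} [Fintype D] (σ : Perm D) (c : D → ZMod 2) (χ : Orb σ → ZMod 2) :
    ∑ o, χ o * orbSum σ c o = ∑ d, χ (Quotient.mk _ d) * c d := by
  classical
  rw [← Finset.sum_fiberwise (Finset.univ) (fun d => (Quotient.mk _ d : Orb σ))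
    (fun d => χ (Quotient.mk _ d) * c d)]
  refine Finset.sum_congr rfl fun o _ => ?_
  simp only [orbSum, LinearMap.coe_mk, AddHom.coe_mk]
  rw [Finset.mul_sum]
  refine Finset.sum_congr (by congr) fun d hd => ?_
  rw [(Finset.mem_filter.1 hd).2]

lemma bal_of_orbSum {D : Type*} [Fintype D] {σ : Perm D} {c : D → ZMod 2}
    (h : orbSum σ c = 0) : Bal σ c := by
  intro χ hχ
  have h1 : ∀ d d', σ.SameCycle d d' → χ d = χ d' := fun d d' hd =>
    sameCycle_induct (r := fun x y => χ x = χ y) ⟨fun _ => rfl, fun h => h.symm,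
      fun h h' => h.trans h'⟩ (fun x => (hχ x).symm) hd
  have := sum_orbSum σ c (Quotient.lift χ h1)
  rw [h] at this
  simpa using this.symm

/-- The Euler inequality for a planar hypermap. The map `T` of sums over black and white vertices has
rank at most the number of vertices minus one, since both kinds of sums have the same total.
Planarity puts its kernel inside the range of the boundary map `S` of faces, whose rank is at most
the number of faces minus one, since the sum of all faces has no boundary. -/
theorem euler {D : Type*} [Fintype D] [Nonempty D] {σ τ : Perm D} (h : HPlanar σ τ) :
    Fintype.card D + 2 ≤ Fintype.card (Orb σ) + Fintype.card (Orb τ) +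
      Fintype.card (Orb (σ⁻¹ * τ)) := by
  classical
  obtain ⟨d0⟩ := ‹Nonempty D›
  let φ : Perm D := σ⁻¹ * τ
  let T := (orbSum σ).prod (orbSum τ)
  let Λ : ((Orb σ → ZMod 2) × (Orb τ → ZMod 2)) →ₗ[ZMod 2] ZMod 2 :=
    LinearMap.coprod (∑ o, LinearMap.proj o) (∑ o, LinearMap.proj o)
  have hΛ : ∀ p, Λ p = ∑ o, p.1 o + ∑ o, p.2 o := fun p => by
    simp [Λ, LinearMap.coprod_apply]
  let S : (Orb φ → ZMod 2) →ₗ[ZMod 2] (D → ZMod 2) :=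
    { toFun := fun g d => g (Quotient.mk _ d) + g (Quotient.mk _ (σ⁻¹ d))
      map_add' := fun g g' => by ext d; simp; ring
      map_smul' := fun a g => by ext d; simp; ring }
  have hT : LinearMap.range T ≤ LinearMap.ker Λ := by
    rintro _ ⟨c, rfl⟩
    rw [LinearMap.mem_ker, hΛ]
    have e1 := sum_orbSum σ c (fun _ => 1)
    have e2 := sum_orbSum τ c (fun _ => 1)
    simp only [one_mul] at e1 e2
    show ∑ o, orbSum σ c o + ∑ o, orbSum τ c o = 0
    rw [e1, e2]; exact CharTwo.add_self_eq_zero _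
  have hΛlt : Module.finrank (ZMod 2) (LinearMap.ker Λ) <
      Module.finrank (ZMod 2) ((Orb σ → ZMod 2) × (Orb τ → ZMod 2)) := by
    apply Submodule.finrank_lt
    intro ht
    have : ((Pi.single (Quotient.mk _ d0) 1, 0) : (Orb σ → ZMod 2) × (Orb τ → ZMod 2)) ∈
        LinearMap.ker Λ := by rw [ht]; trivial
    rw [LinearMap.mem_ker, hΛ] at this
    simp at this
  have hrT := Submodule.finrank_mono hT
  have hS : LinearMap.ker T ≤ LinearMap.range S := by
    intro c hc
    rw [LinearMap.mem_ker] at hc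
    have c1 : orbSum σ c = 0 := congrArg Prod.fst hc
    have c2 : orbSum τ c = 0 := congrArg Prod.snd hc
    obtain ⟨ℓ, l1, l2⟩ := h c (bal_of_orbSum c1) (bal_of_orbSum c2)
    have hℓ : ∀ d, ℓ (φ d) = ℓ d := by
      intro d
      have := l1 (φ d)
      rw [show σ (φ d) = τ d by simp [φ], l2] at this
      exact (add_right_cancel this).symm
    have h1 : ∀ d d', φ.SameCycle d d' → ℓ d = ℓ d' := fun d d' hd =>
      sameCycle_induct (r := fun x y => ℓ x = ℓ y) ⟨fun _ => rfl, fun h => h.symm,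
        fun h h' => h.trans h'⟩ (fun x => (hℓ x).symm) hd
    refine ⟨Quotient.lift ℓ h1, ?_⟩
    ext d
    show ℓ d + ℓ (σ⁻¹ d) = c d
    have := l1 (σ⁻¹ d)
    rw [show σ (σ⁻¹ d) = d by simp] at this
    rw [this]
    linear_combination CharTwo.add_self_eq_zero (ℓ (σ⁻¹ d))
  have hrS := Submodule.finrank_mono hS
  have hkS : 1 ≤ Module.finrank (ZMod 2) (LinearMap.ker S) := by
    rw [Submodule.one_le_finrank_iff]
    intro hb
    have : (fun _ => 1 : Orb φ → ZMod 2) ∈ LinearMap.ker S := by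
      rw [LinearMap.mem_ker]
      ext d
      exact CharTwo.add_self_eq_zero (1 : ZMod 2)
    rw [hb, Submodule.mem_bot] at this
    exact one_ne_zero (congrFun this (Quotient.mk _ d0))
  have e1 := LinearMap.finrank_range_add_finrank_ker T
  have e2 := LinearMap.finrank_range_add_finrank_ker S
  rw [Module.finrank_prod, Module.finrank_fintype_fun_eq_card,
    Module.finrank_fintype_fun_eq_card] at hΛlt
  rw [Module.finrank_fintype_fun_eq_card] at e1 e2
  show _ ≤ _ + Fintype.card (Orb φ)
  omega

/-! ### Sums over cycles -/

open Classical in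
/-- The cycle of `π` through `d`, as a finite set. -/
noncomputable def fib {D : Type*} [Fintype D] (π : Perm D) (d : D) : Finset D :=
  Finset.univ.filter (π.SameCycle d)

lemma pow_injOn {D : Type*} (π : Perm D) {d : D} {k : ℕ} (h : ∀ i, 0 < i → i < k → (π ^ i) d ≠ d) :
    Set.InjOn (fun i => (π ^ i) d) (Finset.range k : Set ℕ) := by
  have key : ∀ i j, i < j → j < k → (π ^ i) d ≠ (π ^ j) d := by
    intro i j hij hj he
    obtain ⟨m, rfl⟩ := Nat.exists_eq_add_of_lt hij
    refine h (m + 1) (by omega) (by omega) ?_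
    rw [add_assoc, pow_add, Perm.mul_apply] at he
    exact ((π ^ i).injective he).symm
  intro i hi j hj he
  simp only [Finset.coe_range, Set.mem_Iio] at hi hj
  rcases lt_trichotomy i j with h1 | h1 | h1
  · exact (key i j h1 hj he).elim
  · exact h1
  · exact (key j i h1 hi he.symm).elim

section fib
variable {D : Type*} [Fintype D] (π : Perm D)

lemma mem_fib {d e : D} : e ∈ fib π d ↔ π.SameCycle d e := by
  classical
  simp [fib]

lemma fib_congr {d e : D} (h : π.SameCycle d e) : fib π d = fib π e := by
  ext a
  rw [mem_fib, mem_fib]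
  exact ⟨fun h' => h.symm.trans h', fun h' => h.trans h'⟩

/-- Summing over all darts is summing over the cycles of `π`, each represented by one dart. -/
lemma sum_fib {M : Type*} [AddCommMonoid M] (f : D → M) :
    ∑ o : Orb π, ∑ e ∈ fib π o.out, f e = ∑ d, f d := by
  classical
  rw [← Finset.sum_fiberwise Finset.univ (fun d => (Quotient.mk _ d : Orb π)) f]
  refine Finset.sum_congr rfl fun o _ => Finset.sum_congr ?_ fun _ _ => rfl
  ext e
  rw [mem_fib, Finset.mem_filter, ← orb_eq, Quotient.out_eq]
  simp [eq_comm]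

lemma sum_fib_perm {M : Type*} [AddCommMonoid M] (f : D → M) (d : D) :
    ∑ e ∈ fib π d, f (π e) = ∑ e ∈ fib π d, f e := by
  refine Finset.sum_bij (fun e _ => π e) ?_ (fun _ _ _ _ h => π.injective h) ?_ fun _ _ => rfl
  · intro e he
    rw [mem_fib] at *
    exact he.trans (sameCycle_step _ _)
  · intro e he
    refine ⟨π⁻¹ e, ?_, by simp⟩
    rw [mem_fib] at *
    refine he.trans (SameCycle.symm ?_)
    simpa using sameCycle_step π (π⁻¹ e)

lemma fib_partial (f : D → ℕ) {d : D} {k : ℕ} (h : ∀ i, 0 < i → i < k → (π ^ i) d ≠ d) :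
    ∑ i ∈ Finset.range k, f ((π ^ i) d) ≤ ∑ e ∈ fib π d, f e := by
  classical
  rw [← Finset.sum_image (f := f) (g := fun i => (π ^ i) d) (pow_injOn π h)]
  refine Finset.sum_le_sum_of_subset ?_
  intro e he
  obtain ⟨i, -, rfl⟩ := Finset.mem_image.1 he
  rw [mem_fib]
  exact ⟨i, by simp⟩

lemma fib_closed (f : D → ℕ) {d : D} {k : ℕ} (hk : 0 < k)
    (h : ∀ i, 0 < i → i < k → (π ^ i) d ≠ d) (hd : (π ^ k) d = d) :
    ∑ i ∈ Finset.range k, f ((π ^ i) d) = ∑ e ∈ fib π d, f e := by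
  classical
  rw [← Finset.sum_image (f := f) (g := fun i => (π ^ i) d) (pow_injOn π h)]
  refine Finset.sum_congr ?_ fun _ _ => rfl
  ext e
  rw [mem_fib, Finset.mem_image]
  constructor
  · rintro ⟨i, -, rfl⟩
    exact ⟨i, by simp⟩
  · intro he
    obtain ⟨n, rfl⟩ := he.exists_nat_pow_eq
    refine ⟨n % k, Finset.mem_range.2 (Nat.mod_lt _ hk), ?_⟩
    have : ∀ m, (π ^ (k * m)) d = d := by
      intro m
      induction m with
      | zero => simp
      | succ m ih => rw [mul_add, mul_one, pow_add, Perm.mul_apply, hd, ih]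
    show (π ^ (n % k)) d = (π ^ n) d
    conv_rhs => rw [← Nat.mod_add_div n k, pow_add, Perm.mul_apply, this]

variable (f : D → ℕ) (d : D)

lemma fib_le2 (h1 : π d ≠ d) : f d + f (π d) ≤ ∑ e ∈ fib π d, f e := by
  have := fib_partial π f (d := d) (k := 2) (by
    intro i hi hk; interval_cases i; simpa using h1)
  simpa [Finset.sum_range_succ, pow_succ] using this

lemma fib_le3 (h1 : π d ≠ d) (h2 : π (π d) ≠ d) :
    f d + f (π d) + f (π (π d)) ≤ ∑ e ∈ fib π d, f e := by
  have := fib_partial π f (d := d) (k := 3) (by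
    intro i hi hk; interval_cases i
    · simpa using h1
    · simpa [pow_succ] using h2)
  simpa [Finset.sum_range_succ, pow_succ] using this

lemma fib_le4 (h1 : π d ≠ d) (h2 : π (π d) ≠ d) (h3 : π (π (π d)) ≠ d) :
    f d + f (π d) + f (π (π d)) + f (π (π (π d))) ≤ ∑ e ∈ fib π d, f e := by
  have := fib_partial π f (d := d) (k := 4) (by
    intro i hi hk; interval_cases i
    · simpa using h1
    · simpa [pow_succ] using h2
    · simpa [pow_succ] using h3)
  simpa [Finset.sum_range_succ, pow_succ] using this

lemma fib_le5 (h1 : π d ≠ d) (h2 : π (π d) ≠ d) (h3 : π (π (π d)) ≠ d)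
    (h4 : π (π (π (π d))) ≠ d) :
    f d + f (π d) + f (π (π d)) + f (π (π (π d))) + f (π (π (π (π d)))) ≤
      ∑ e ∈ fib π d, f e := by
  have := fib_partial π f (d := d) (k := 5) (by
    intro i hi hk; interval_cases i
    · simpa using h1
    · simpa [pow_succ] using h2
    · simpa [pow_succ] using h3
    · simpa [pow_succ] using h4)
  simpa [Finset.sum_range_succ, pow_succ] using this

lemma fib_eq1 (h1 : π d = d) : f d = ∑ e ∈ fib π d, f e := by
  have := fib_closed π f (d := d) (k := 1) (by omega) (by omega) (by simpa using h1)
  simpa using this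

lemma fib_eq2 (h1 : π d ≠ d) (h2 : π (π d) = d) : f d + f (π d) = ∑ e ∈ fib π d, f e := by
  have := fib_closed π f (d := d) (k := 2) (by omega) (by
    intro i hi hk; interval_cases i; simpa using h1) (by simpa [pow_succ] using h2)
  simpa [Finset.sum_range_succ, pow_succ] using this

lemma fib_eq3 (h1 : π d ≠ d) (h2 : π (π d) ≠ d) (h3 : π (π (π d)) = d) :
    f d + f (π d) + f (π (π d)) = ∑ e ∈ fib π d, f e := by
  have := fib_closed π f (d := d) (k := 3) (by omega) (by
    intro i hi hk; interval_cases i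
    · simpa using h1
    · simpa [pow_succ] using h2) (by simpa [pow_succ] using h3)
  simpa [Finset.sum_range_succ, pow_succ] using this

end fib

/-! ### Faces of weight four -/

/-- The local shape, seen from the side `d`, of a face of weight four: the face is a cycle of `φ`, of
length two, three or four, and the weights `z` of its sides add up to four. -/
structure Face4 {D : Type*} (φ : D → D) (z : D → ℕ) (d : D) : Prop where
  le : z d + z (φ d) ≤ 4
  four : z d + z (φ d) = 4 → φ (φ d) = d
  three : z d + z (φ d) = 3 → z (φ (φ d)) = 1 ∧ φ (φ (φ d)) = d
  two : z d + z (φ d) = 2 → (z (φ (φ d)) = 2 ∧ φ (φ (φ d)) = d) ∨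
    (z (φ (φ d)) = 1 ∧ z (φ (φ (φ d))) = 1 ∧ φ (φ (φ (φ d))) = d)

lemma face4_of_sum {D : Type*} [Fintype D] {φ : Perm D} {z : D → ℕ} (hz : ∀ d, 1 ≤ z d)
    (hφ : ∀ d, φ d ≠ d) {d : D} (hd : ∑ e ∈ fib φ d, z e = 4) : Face4 φ z d := by
  have l2 := fib_le2 φ z d (hφ d)
  rw [hd] at l2
  have e2 : φ (φ d) = d → z d + z (φ d) = 4 := fun h => by
    rw [← hd]; exact fib_eq2 φ z d (hφ d) h
  have l3 : φ (φ d) ≠ d → z d + z (φ d) + z (φ (φ d)) ≤ 4 := fun h => by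
    rw [← hd]; exact fib_le3 φ z d (hφ d) h
  have z0 := hz d
  have z1 := hz (φ d)
  have z2 := hz (φ (φ d))
  have z3 := hz (φ (φ (φ d)))
  have z4 := hz (φ (φ (φ (φ d))))
  have e3 : φ (φ d) ≠ d → φ (φ (φ d)) = d → z d + z (φ d) + z (φ (φ d)) = 4 := fun h h' => by
    rw [← hd]; exact fib_eq3 φ z d (hφ d) h h'
  have l4 : φ (φ d) ≠ d → φ (φ (φ d)) ≠ d →
      z d + z (φ d) + z (φ (φ d)) + z (φ (φ (φ d))) ≤ 4 := fun h h' => by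
    rw [← hd]; exact fib_le4 φ z d (hφ d) h h'
  have l5 : φ (φ d) ≠ d → φ (φ (φ d)) ≠ d → φ (φ (φ (φ d))) ≠ d →
      z d + z (φ d) + z (φ (φ d)) + z (φ (φ (φ d))) + z (φ (φ (φ (φ d)))) ≤ 4 :=
    fun h h' h'' => by
      rw [← hd]; exact fib_le5 φ z d (hφ d) h h' h''
  refine ⟨l2, fun h => ?_, fun h => ?_, fun h => ?_⟩
  · by_contra hn; have := l3 hn; omega
  · have n2 : φ (φ d) ≠ d := fun h' => by have := e2 h'; omega
    have := l3 n2
    refine ⟨by omega, ?_⟩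
    by_contra n3
    have := l4 n2 n3; omega
  · have n2 : φ (φ d) ≠ d := fun h' => by have := e2 h'; omega
    have := l3 n2
    by_cases h3 : φ (φ (φ d)) = d
    · have := e3 n2 h3
      exact Or.inl ⟨by omega, h3⟩
    · have := l4 n2 h3
      refine Or.inr ⟨by omega, by omega, ?_⟩
      by_contra h4
      have := l5 n2 h3 h4; omega

lemma perm_inv {D : Type*} (π : Perm D) (d : D) : π (π⁻¹ d) = d := π.apply_symm_apply d

lemma inv_perm {D : Type*} (π : Perm D) (d : D) : π⁻¹ (π d) = d := π.symm_apply_apply d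

namespace CrossMap
variable {D V : Type*} [Fintype D] {σ τ : Perm D} {rev : D → D} {s : D → V}
  {col : V → ZMod 2} {x : D → Prop}

lemma s_rev_ne (C : CrossMap σ τ rev s col x) (d : D) : s (rev d) ≠ s d :=
  fun h => C.col_rev d (by rw [h])

lemma rev_eq (C : CrossMap σ τ rev s col x) {d e : D} (h : rev d = e) : d = rev e := by
  rw [← h, C.rev_rev]

lemma x_inv (C : CrossMap σ τ rev s col x) (d : D) : x (τ⁻¹ d) ↔ x d := by
  rw [← C.x_tau, perm_inv]

lemma x_rev (C : CrossMap σ τ rev s col x) (d : D) : x (rev d) ↔ x d := by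
  by_cases h : x d
  · rw [← C.tau_tau d h, C.x_tau, C.x_tau]
  · rw [← C.tau_of_not d h, C.x_tau]

lemma inv_of_not (C : CrossMap σ τ rev s col x) {d : D} (h : ¬ x d) : τ⁻¹ d = rev d := by
  have := C.tau_of_not (τ⁻¹ d) (by rwa [C.x_inv])
  rw [perm_inv] at this
  exact C.rev_eq this.symm

lemma tau_eq_rev_inv (C : CrossMap σ τ rev s col x) {d : D} (h : x d) : τ d = rev (τ⁻¹ d) := by
  have := C.tau_tau (τ⁻¹ d) (by rwa [C.x_inv])
  rwa [perm_inv] at this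

lemma s_sigma (C : CrossMap σ τ rev s col x) (d : D) : s (σ d) = s d :=
  ((C.same d (σ d)).1 (sameCycle_step _ _)).symm

lemma s_sigma_inv (C : CrossMap σ τ rev s col x) (d : D) : s (σ⁻¹ d) = s d := by
  rw [← C.s_sigma, perm_inv]

/-- The mirror image of a map. -/
lemma mirror (C : CrossMap σ τ rev s col x) : CrossMap σ⁻¹ τ⁻¹ rev s col x where
  same d d' := by rw [sameCycle_inv, C.same]
  planar := by
    intro c h1 h2
    obtain ⟨ℓ, l1, l2⟩ := C.planar c
      (fun χ hχ => h1 χ fun d => by simpa using (hχ (σ⁻¹ d)).symm)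
      (fun χ hχ => h2 χ fun d => by simpa using (hχ (τ⁻¹ d)).symm)
    refine ⟨fun d => ℓ d + c d, fun d => ?_, fun d => ?_⟩
    · have := l1 (σ⁻¹ d)
      rw [perm_inv] at this
      simp only [this]
      linear_combination -CharTwo.add_self_eq_zero (c d)
    · have := l2 (τ⁻¹ d)
      rw [perm_inv] at this
      simp only [this]
      linear_combination -CharTwo.add_self_eq_zero (c d)
  rev_rev := C.rev_rev
  col_rev := C.col_rev
  inj := C.inj
  x_tau := C.x_inv
  tau_of_not d hd := C.inv_of_not hd
  tau_tau d hd := by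
    have := C.tau_tau (τ⁻¹ (τ⁻¹ d)) (by rwa [C.x_inv, C.x_inv])
    rw [perm_inv, perm_inv] at this
    exact C.rev_eq this.symm
  s_tau_ne d hd h := by
    refine C.s_tau_ne (τ⁻¹ d) (by rwa [C.x_inv]) ?_
    rw [perm_inv, h]
  s_tau_ne_rev d hd h := by
    refine C.s_tau_ne (rev d) (by rwa [C.x_rev]) ?_
    rw [← h, C.tau_eq_rev_inv (by rwa [C.x_rev])]
    have := C.tau_tau d hd
    rw [← this, inv_perm, C.tau_eq_rev_inv hd, C.rev_rev]

end CrossMap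

/-- Weights `1` on the uncrossed darts and `2`, `3` alternately around each crossing. -/
structure Weighted {D : Type*} (τ : Perm D) (x : D → Prop) (z : D → ℕ) : Prop where
  un : ∀ d, ¬ x d → z d = 1
  cr : ∀ d, x d → z d = 2 ∨ z d = 3
  pair : ∀ d, x d → z d + z (τ⁻¹ d) = 5

lemma not_x_of_wt {D : Type*} {τ : Perm D} {x : D → Prop} {z : D → ℕ} (W : Weighted τ x z)
    {d : D} (h : z d < 2) : ¬ x d := fun hx => by
  rcases W.cr d hx with h' | h' <;> omega

lemma phi_corner {D : Type*} {σ τ φ : Perm D} (hφ : ∀ d, σ (φ d) = τ d) (d : D) :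
    φ (τ⁻¹ (σ d)) = d :=
  σ.injective (by rw [hφ, perm_inv])

/-- The corner between `d` and `σ d` belongs to the face having `τ⁻¹ (σ d)` and `d` as consecutive
sides. -/
lemma corner_le {D : Type*} {σ τ φ : Perm D} {z : D → ℕ} (hφ : ∀ d, σ (φ d) = τ d)
    {d : D} (F : Face4 φ z (τ⁻¹ (σ d))) :
    z d + z (τ⁻¹ (σ d)) ≤ 4 := by
  have := F.le; rw [phi_corner hφ] at this; omega

lemma corner_four {D : Type*} {σ τ φ : Perm D} {z : D → ℕ} (hφ : ∀ d, σ (φ d) = τ d)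
    {d : D} (F : Face4 φ z (τ⁻¹ (σ d)))
    (h : z d + z (τ⁻¹ (σ d)) = 4) : φ d = τ⁻¹ (σ d) := by
  have := F.four; rw [phi_corner hφ] at this; exact this (by omega)

section loc
variable {D V : Type*} [Fintype D] {σ τ φ : Perm D} {rev : D → D} {s : D → V}
  {col : V → ZMod 2} {x : D → Prop} {z : D → ℕ}

/-- Next to a crossed dart all of whose corners have weight four there is an uncrossed dart, on
the side of the heavier corner. -/
lemma cross_nbr (C : CrossMap σ τ rev s col x) (W : Weighted τ x z)
    (hφ : ∀ d, σ (φ d) = τ d) {v : V} (F : ∀ d, s d = v → Face4 φ z (τ⁻¹ (σ d)))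
    {h : D} (hv : s h = v) (hx : x h) :
    (z h = 3 ∧ z (τ⁻¹ h) = 2 ∧ ¬ x (σ h)) ∨ (z h = 2 ∧ z (τ⁻¹ h) = 3 ∧ ¬ x (σ⁻¹ h)) := by
  have hp := W.pair h hx
  rcases W.cr h hx with h2 | h3
  · right
    refine ⟨h2, by omega, ?_⟩
    have := corner_le hφ (F (σ⁻¹ h) (by rw [C.s_sigma_inv, hv]))
    rw [perm_inv] at this
    exact not_x_of_wt W (by omega)
  · left
    refine ⟨h3, by omega, ?_⟩
    have := corner_le hφ (F h hv)
    have h4 : ¬ x (τ⁻¹ (σ h)) := not_x_of_wt W (by omega)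
    rwa [C.x_inv] at h4

lemma s_phi (C : CrossMap σ τ rev s col x) (hφ : ∀ d, σ (φ d) = τ d) (d : D) :
    s (φ d) = s (τ d) := by rw [← hφ, C.s_sigma]

/-- A vertex of degree at least three all of whose faces have weight four is on at least two
uncrossed edges. With a single uncrossed dart `a` the degree would be three, and the edges crossing
the other two edges at the vertex would be parallel. -/
lemma two_uncrossed (C : CrossMap σ τ rev s col x) (W : Weighted τ x z)
    (hφ : ∀ d, σ (φ d) = τ d) {v : V} (F : ∀ d, s d = v → Face4 φ z (τ⁻¹ (σ d)))
    (h1 : ∀ d, σ d ≠ d) (h2 : ∀ d, σ (σ d) ≠ d) {d0 : D} (hd0 : s d0 = v) :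
    ∃ a b, s a = v ∧ s b = v ∧ a ≠ b ∧ ¬ x a ∧ ¬ x b := by
  have ex : ∃ a, s a = v ∧ ¬ x a := by
    by_cases hx : x d0
    · rcases cross_nbr C W hφ F hd0 hx with h | h
      · exact ⟨_, by rw [C.s_sigma, hd0], h.2.2⟩
      · exact ⟨_, by rw [C.s_sigma_inv, hd0], h.2.2⟩
    · exact ⟨d0, hd0, hx⟩
  obtain ⟨a, ha, hxa⟩ := ex
  by_contra hno
  have un : ∀ b, s b = v → ¬ x b → b = a := by
    intro b hb hxb
    by_contra hne
    exact hno ⟨a, b, ha, hb, fun h => hne h.symm, hxa, hxb⟩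
  obtain ⟨p, hp⟩ : ∃ p, p = σ a := ⟨_, rfl⟩
  obtain ⟨r, hr⟩ : ∃ r, r = σ p := ⟨_, rfl⟩
  have sp : s p = v := by rw [hp, C.s_sigma, ha]
  have sr : s r = v := by rw [hr, C.s_sigma, sp]
  have xp : x p := by
    by_contra h; exact h1 a (by rw [← hp]; exact un p sp h)
  have xr : x r := by
    by_contra h; exact h2 a (by rw [← hp, ← hr]; exact un r sr h)
  obtain ⟨zp, zp', -⟩ := (cross_nbr C W hφ F sp xp).resolve_left
    (fun h => h.2.2 (by rw [← hr]; exact xr))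
  obtain ⟨zr, zr', hxr⟩ := (cross_nbr C W hφ F sr xr).resolve_right
    (fun h => h.2.2 (by rw [hr, inv_perm]; exact xp))
  have hra : σ r = a := un _ (by rw [C.s_sigma, sr]) hxr
  have za := W.un a hxa
  have c0 := corner_four hφ (F a ha) (by rw [← hp]; omega)
  have c1 := corner_four hφ (F p sp) (by rw [← hr]; omega)
  have c2 := corner_four hφ (F r sr) (by
    rw [hra, C.inv_of_not hxa, zr, W.un _ (by rwa [C.x_rev])])
  rw [← hp] at c0
  rw [← hr] at c1
  rw [hra, C.inv_of_not hxa] at c2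
  -- the darts `τ⁻¹ p` and `τ r` are parallel
  have e : τ⁻¹ p = τ r := by
    apply C.inj
    · rw [← c0, s_phi C hφ, C.tau_of_not a hxa, ← s_phi C hφ r, c2]
    · rw [← C.tau_eq_rev_inv xp, ← s_phi C hφ, c1, C.tau_eq_rev_inv xr, C.rev_rev]
  have e2 : p = rev r := by rw [← C.tau_tau r xr, ← e, perm_inv]
  exact C.s_rev_ne r (by rw [← e2, sp, sr])

/-- The equality case excludes a vertex of degree three with exactly one crossed dart `h`, of weight
three. The faces around it have weight four and (`hu`) each vertex is on at most two uncrossed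
edges; then the far end of `b = σ (σ h)` has either three uncrossed darts, or a crossed one whose
crossing edge would be parallel to the edge crossing `h`. -/
lemma no_three (C : CrossMap σ τ rev s col x) (W : Weighted τ x z)
    (hφ : ∀ d, σ (φ d) = τ d) (F : ∀ d, Face4 φ z (τ⁻¹ (σ d)))
    (h1 : ∀ d, σ d ≠ d) (h2 : ∀ d, σ (σ d) ≠ d)
    (hu : ∀ a b c, s a = s b → s a = s c → ¬ x a → ¬ x b → ¬ x c → a ≠ b → a ≠ c → b = c)
    {h : D} (hx : x h) (zh : z h = 3) (hb : ¬ x (σ (σ h))) (h4 : σ (σ (σ h)) = h) : False := by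
  obtain ⟨-, zh', hxa⟩ := (cross_nbr C W hφ (fun d _ => F d) rfl hx).resolve_right
    (fun h => by omega)
  obtain ⟨a, ha⟩ : ∃ a, a = σ h := ⟨_, rfl⟩
  obtain ⟨b, hb'⟩ : ∃ b, b = σ a := ⟨_, rfl⟩
  rw [← ha] at hxa
  rw [← ha, ← hb'] at hb h4
  have ph : φ h = rev a := by
    have := corner_four hφ (F h) (by
      rw [← ha, C.inv_of_not hxa, zh, W.un _ (by rwa [C.x_rev])])
    rw [this, ← ha, C.inv_of_not hxa]
  -- the triangular face at the corner `b`
  have fb := (F b).three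
  rw [phi_corner hφ, h4] at fb
  obtain ⟨zk, pk⟩ := fb (by rw [zh', W.un b hb])
  obtain ⟨k, hk⟩ : ∃ k, k = φ b := ⟨_, rfl⟩
  rw [← hk] at zk pk
  have xk : ¬ x k := not_x_of_wt W (by omega)
  have sk : σ k = rev b := by rw [hk, hφ, C.tau_of_not b hb]
  have xrb : ¬ x (rev b) := by rwa [C.x_rev]
  -- the face at the corner `a`
  obtain ⟨j, hj⟩ : ∃ j, j = σ (rev b) := ⟨_, rfl⟩
  have fa := (F a).two
  rw [phi_corner hφ, ← hb', C.inv_of_not hb] at fa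
  have hj' : ∀ e, φ e = rev b → τ e = j := fun e he => by rw [← hφ, he, hj]
  rcases fa (by rw [W.un _ xrb, W.un a hxa]) with ⟨zw, pw⟩ | ⟨-, zy, py⟩
  · have tw := hj' _ pw
    have xw : x (φ a) := by
      by_contra hn; rw [W.un _ hn] at zw; omega
    have xj : x j := by rw [← tw, C.x_tau]; exact xw
    have wj : τ⁻¹ j = φ a := by rw [← tw, inv_perm]
    obtain ⟨zj, -, xsj⟩ := (cross_nbr C W hφ (fun d _ => F d) rfl xj).resolve_right
      (fun h => by rw [wj] at h; omega)
    have hsjk : σ j = k := by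
      apply hu (rev b) (σ j) k
      · rw [C.s_sigma, hj, C.s_sigma]
      · rw [← sk, C.s_sigma]
      · exact xrb
      · exact xsj
      · exact xk
      · intro h; rw [hj] at h; exact h2 _ h.symm
      · intro h; rw [← sk] at h; exact h1 _ h
    have pj : φ j = rev k := by
      have := corner_four hφ (F j) (by
        rw [hsjk, C.inv_of_not xk, zj, W.un _ (by rwa [C.x_rev])])
      rw [this, hsjk, C.inv_of_not xk]
    have e : τ⁻¹ j = τ h := by
      apply C.inj
      · rw [wj, s_phi C hφ, C.tau_of_not a hxa, ← s_phi C hφ h, ph]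
      · rw [← C.tau_eq_rev_inv xj, ← s_phi C hφ, pj, C.tau_eq_rev_inv hx, C.rev_rev, ← pk,
          s_phi C hφ, C.tau_of_not k xk]
    have e2 : j = rev h := by rw [← C.tau_tau h hx, ← e, perm_inv]
    have e3 : h = b := by
      apply C.inj
      · rw [hb', C.s_sigma, ha, C.s_sigma]
      · rw [← e2, hj, C.s_sigma]
    exact hb (e3 ▸ hx)
  · have tw := hj' _ py
    have xj : ¬ x j := by
      rw [← tw, C.x_tau]; exact not_x_of_wt W (by omega)
    have e : rev b = j := by
      apply hu k (rev b) j
      · rw [← sk, C.s_sigma]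
      · rw [hj, C.s_sigma, ← sk, C.s_sigma]
      · exact xk
      · exact xrb
      · exact xj
      · rw [← sk]; exact (h1 k).symm
      · rw [hj, ← sk]; exact (h2 k).symm
    exact h1 (rev b) (hj.symm.trans e.symm)

end loc

/-- Reversing the orientation of the surface keeps the shape of the faces of weight four. -/
lemma face4_mirror {D : Type*} {σ τ φ : Perm D} {z : D → ℕ} (hφ : ∀ d, σ (φ d) = τ d)
    (F : ∀ d, Face4 φ z d) (d : D) :
    Face4 (σ * τ⁻¹ : Perm D) (fun e => z (τ⁻¹ e)) d := by
  obtain ⟨e, rfl⟩ : ∃ e, σ (φ (φ e)) = d :=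
    ⟨φ⁻¹ (φ⁻¹ (σ⁻¹ d)), by rw [perm_inv, perm_inv, perm_inv]⟩
  have p : ∀ e, (σ * τ⁻¹ : Perm D) (σ (φ e)) = σ e := fun e => by
    rw [hφ, Perm.mul_apply, inv_perm]
  have q : ∀ e, τ⁻¹ (σ (φ e)) = e := fun e => by rw [hφ, inv_perm]
  have G := F e
  refine ⟨?_, ?_, ?_, ?_⟩ <;> simp only [p, q]
  · have := G.le; omega
  · intro h; rw [G.four (by omega)]
  · intro h
    obtain ⟨g1, g2⟩ := G.three (by omega)
    have p' := p (φ (φ e))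
    have q' := q (φ (φ e))
    rw [g2] at p' q'
    rw [p', q']
    exact ⟨g1, rfl⟩
  · intro h
    rcases G.two (by omega) with ⟨g1, g2⟩ | ⟨g1, g2, g3⟩
    · have p' := p (φ (φ e))
      have q' := q (φ (φ e))
      rw [g2] at p' q'
      rw [p', q']
      exact Or.inl ⟨g1, rfl⟩
    · have p' := p (φ (φ (φ e)))
      have q' := q (φ (φ (φ e)))
      rw [g3] at p' q'
      rw [p', q', p, q]
      exact Or.inr ⟨g2, g1, rfl⟩

section loc
variable {D V : Type*} [Fintype D] {σ τ φ : Perm D} {rev : D → D} {s : D → V}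
  {col : V → ZMod 2} {x : D → Prop} {z : D → ℕ}

/-- As `no_three`, without a condition on the weight of `h`: pass to the mirror image if it is two. -/
lemma no_three_two (C : CrossMap σ τ rev s col x) (W : Weighted τ x z)
    (hφ : ∀ d, σ (φ d) = τ d) (F : ∀ d, Face4 φ z d)
    (h1 : ∀ d, σ d ≠ d) (h2 : ∀ d, σ (σ d) ≠ d)
    (hu : ∀ a b c, s a = s b → s a = s c → ¬ x a → ¬ x b → ¬ x c → a ≠ b → a ≠ c → b = c)
    {h : D} (hx : x h) (hx1 : ¬ x (σ h)) (hx2 : ¬ x (σ (σ h))) (h4 : σ (σ (σ h)) = h) :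
    False := by
  rcases W.cr h hx with zh | zh
  · have i1 : σ⁻¹ h = σ (σ h) := by rw [inv_eq_iff_eq, h4]
    have i2 : σ⁻¹ (σ (σ h)) = σ h := inv_perm _ _
    refine no_three (φ := σ * τ⁻¹) (z := fun e => z (τ⁻¹ e)) C.mirror ⟨?_, ?_, ?_⟩ ?_
      (fun d => face4_mirror hφ F _) ?_ ?_ hu hx ?_ ?_ ?_
    · intro d hd; exact W.un _ (by rwa [C.x_inv])
    · intro d hd; exact W.cr _ (by rwa [C.x_inv])
    · intro d hd
      have := W.pair d hd
      rw [inv_inv, inv_perm]; omega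
    · intro d; rw [Perm.mul_apply, inv_perm]
    · intro d hd; rw [inv_eq_iff_eq] at hd; exact h1 d hd.symm
    · intro d hd; rw [inv_eq_iff_eq, inv_eq_iff_eq] at hd; exact h2 d hd.symm
    · have := W.pair h hx; show z (τ⁻¹ h) = 3; omega
    · rw [i1, i2]; exact hx1
    · rw [i1, i2, inv_perm]
  · exact no_three C W hφ (fun d => F _) h1 h2 hu hx zh hx2 h4
end loc

/-! ### Discharging -/

open Classical in
/-- The weight of a dart: `1` if it is uncrossed, and otherwise `2` or `3` according as the next
dart around the crossing starts at a vertex of the same colour or of the other colour. -/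
noncomputable def wt {D V : Type*} (τ : Perm D) (s : D → V) (col : V → ZMod 2) (x : D → Prop)
    (d : D) : ℕ :=
  if x d then (if col (s (τ d)) = col (s d) then 2 else 3) else 1

lemma zmod2_sum {a b c : ZMod 2} (h : c ≠ a) : b = a ↔ ¬ c = b := by
  revert a b c; decide

lemma zmod2_one {a b : ZMod 2} (h : a ≠ b) : 1 = a + b := by
  revert a b; decide

lemma weighted_wt {D V : Type*} [Fintype D] {σ τ : Perm D} {rev : D → D} {s : D → V}
    {col : V → ZMod 2} {x : D → Prop} (C : CrossMap σ τ rev s col x) :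
    Weighted τ x (wt τ s col x) where
  un d hd := by simp [wt, hd]
  cr d hd := by
    simp only [wt, hd, if_true]; split <;> simp
  pair d hd := by
    have hx : x (τ⁻¹ d) := by rwa [C.x_inv]
    have := zmod2_sum (b := col (s d)) (C.col_rev (τ⁻¹ d))
    rw [← C.tau_eq_rev_inv hd] at this
    simp only [wt, hd, hx, if_true, perm_inv, this]
    by_cases h : col (s (τ d)) = col (s d) <;> simp [h]

/-- The weight of a dart has the parity of the change of colour along that side of its face. -/
lemma wt_parity {D V : Type*} [Fintype D] {σ τ : Perm D} {rev : D → D} {s : D → V}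
    {col : V → ZMod 2} {x : D → Prop} (C : CrossMap σ τ rev s col x) (d : D) :
    (wt τ s col x d : ZMod 2) = col (s (τ d)) + col (s d) := by
  by_cases hx : x d
  · simp only [wt, hx, if_true]
    by_cases h : col (s (τ d)) = col (s d)
    · simp only [h, if_true]; rw [CharTwo.add_self_eq_zero]; rfl
    · simp only [h, if_false]; rw [← zmod2_one h]; rfl
  · simp only [wt, hx, if_false]
    rw [C.tau_of_not d hx, ← zmod2_one (C.col_rev d)]; rfl

/-- The discharging argument: a clean map of minimum degree at least three with `n` vertices and `m`
edges satisfies `2m + 16 ≤ 6n`, and equality requires minimum degree at least four. -/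
theorem discharge {D V : Type*} [Fintype D] [Nonempty D] {σ τ : Perm D} {rev : D → D} {s : D → V}
    {col : V → ZMod 2} {x : D → Prop} (C : CrossMap σ τ rev s col x)
    (hdeg : ∀ d, 3 ≤ (fib σ d).card) :
    Fintype.card D + 16 ≤ 6 * Fintype.card (Orb σ) ∧
    (Fintype.card D + 16 = 6 * Fintype.card (Orb σ) → ∀ d, 4 ≤ (fib σ d).card) := by
  classical
  obtain ⟨z, hz⟩ : ∃ z, z = wt τ s col x := ⟨_, rfl⟩
  obtain ⟨φ, hφ'⟩ : ∃ φ : Perm D, φ = σ⁻¹ * τ := ⟨_, rfl⟩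
  have W : Weighted τ x z := hz ▸ weighted_wt C
  have hφ : ∀ d, σ (φ d) = τ d := fun d => by rw [hφ', Perm.mul_apply, perm_inv]
  have σ1 : ∀ d, σ d ≠ d := by
    intro d h
    have := fib_eq1 σ (fun _ => 1) d h
    have h3 := hdeg d
    simp at this; omega
  have σ2 : ∀ d, σ (σ d) ≠ d := by
    intro d h
    have := fib_eq2 σ (fun _ => 1) d (σ1 d) h
    have h3 := hdeg d
    simp at this; omega
  have z1 : ∀ d, 1 ≤ z d := fun d => by
    by_cases h : x d
    · rcases W.cr d h with h | h <;> omega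
    · rw [W.un d h]
  have stne : ∀ d, s (τ d) ≠ s d := fun d => by
    by_cases h : x d
    · exact C.s_tau_ne d h
    · rw [C.tau_of_not d h]; exact C.s_rev_ne d
  have φne : ∀ d, φ d ≠ d := fun d h => stne d (by rw [← s_phi C hφ, h])
  have φinv : ∀ d, φ⁻¹ d = τ⁻¹ (σ d) := fun d => by rw [inv_eq_iff_eq, phi_corner hφ]
  -- the weight of the face containing `d`, which is even and at least four
  obtain ⟨Z, hZ⟩ : ∃ Z : D → ℕ, Z = fun d => ∑ e ∈ fib φ d, z e := ⟨_, rfl⟩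
  have Zd : ∀ d, Z d = ∑ e ∈ fib φ d, z e := fun d => by rw [hZ]
  have Zeven : ∀ d, Even (Z d) := by
    intro d
    rw [← ZMod.natCast_eq_zero_iff_even, Zd]
    push_cast
    have : ∀ e, (z e : ZMod 2) = col (s (φ e)) + col (s e) := fun e => by
      rw [hz, wt_parity C, s_phi C hφ]
    rw [Finset.sum_congr rfl fun e _ => this e, Finset.sum_add_distrib,
      sum_fib_perm φ (fun e => col (s e)), CharTwo.add_self_eq_zero]
  have Z4 : ∀ d, 4 ≤ Z d := by
    intro d
    have l2 := fib_le2 φ z d (φne d)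
    rw [← Zd] at l2
    have a := z1 d
    have b := z1 (φ d)
    obtain ⟨k, hk⟩ := Zeven d
    by_contra hlt
    have xd : ¬ x d := not_x_of_wt W (by omega)
    have xd' : ¬ x (φ d) := not_x_of_wt W (by omega)
    have p2 : φ (φ d) = d := by
      by_contra h
      have l3 := fib_le3 φ z d (φne d) h
      rw [← Zd] at l3
      have c := z1 (φ (φ d))
      omega
    have e : φ d = rev d := by
      apply C.inj
      · rw [s_phi C hφ, C.tau_of_not d xd]
      · rw [C.rev_rev, ← C.tau_of_not _ xd', ← s_phi C hφ, p2]
    refine σ1 (φ d) ?_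
    rw [hφ, C.tau_of_not d xd, e]
  have Zsame : ∀ d e, φ.SameCycle d e → Z d = Z e := fun d e h => by
    rw [Zd, Zd, fib_congr φ h]
  have Zφ : ∀ d, Z (φ⁻¹ d) = Z d := fun d => Zsame _ _ (by
    simpa [perm_inv] using sameCycle_step φ (φ⁻¹ d))
  have face : ∀ d, Z d = 4 → Face4 φ z (τ⁻¹ (σ d)) := by
    intro d h
    rw [← φinv]
    exact face4_of_sum z1 φne (by rw [← Zd, Zφ, h])
  -- the charge of the corner between the sides `φ⁻¹ d` and `d` of a face, based at `s d`
  let ch : D → ℤ := fun d => if Z d = 4 then 4 - z d - z (φ⁻¹ d) else 4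
  have ch4 : ∀ d, Z d = 4 → ch d = 4 - z d - z (φ⁻¹ d) := fun d h => if_pos h
  have ch6 : ∀ d, Z d ≠ 4 → ch d = 4 := fun d h => if_neg h
  have ch0 : ∀ d, 0 ≤ ch d := by
    intro d
    by_cases h : Z d = 4
    · have := corner_le hφ (face d h)
      rw [ch4 d h, φinv]
      omega
    · rw [ch6 d h]; norm_num
  have hface : ∀ d, ∑ e ∈ fib φ d, ch e ≤ ∑ e ∈ fib φ d, (4 * (z e : ℤ) + 4) - 24 := by
    intro d
    have c1 : ∑ e ∈ fib φ d, (4 * (z e : ℤ) + 4) = 4 * Z d + 4 * (fib φ d).card := by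
      rw [Finset.sum_add_distrib, ← Finset.mul_sum, Zd]; push_cast; simp [mul_comm]
    rw [c1]
    by_cases h : Z d = 4
    · have : ∑ e ∈ fib φ d, ch e = ∑ e ∈ fib φ d, (4 - (z e : ℤ) - z (φ⁻¹ e)) :=
        Finset.sum_congr rfl fun e he => ch4 e (by rw [← Zsame d e ((mem_fib φ).1 he), h])
      rw [this, Finset.sum_sub_distrib, Finset.sum_sub_distrib]
      have c2 := sum_fib_perm φ (fun e => (z (φ⁻¹ e) : ℤ)) d
      simp only [inv_perm] at c2
      rw [← c2]
      have c3 : ∑ e ∈ fib φ d, (z e : ℤ) = 4 := by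
        have := Zd d; rw [h] at this; exact_mod_cast this.symm
      rw [c3, h]
      simp; omega
    · have : ∑ e ∈ fib φ d, ch e = ∑ e ∈ fib φ d, 4 :=
        Finset.sum_congr rfl fun e he => ch6 e (by rw [← Zsame d e ((mem_fib φ).1 he)]; exact h)
      rw [this]
      have := Z4 d
      obtain ⟨k, hk⟩ := Zeven d
      simp; omega
  have hface' : ∑ d, ch d ≤ ∑ d, (4 * (z d : ℤ) + 4) - 24 * Fintype.card (Orb φ) := by
    rw [← sum_fib φ ch, ← sum_fib φ]
    have := Finset.sum_le_sum (s := (Finset.univ : Finset (Orb φ))) fun o _ => hface o.out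
    rw [Finset.sum_sub_distrib] at this
    simp only [Finset.sum_const, Finset.card_univ, nsmul_eq_mul] at this
    linarith
  have hpair : ∀ d, (z d : ℤ) + z (τ⁻¹ d) = if x d then 5 else 2 := by
    intro d
    by_cases h : x d
    · rw [if_pos h]; have := W.pair d h; omega
    · rw [if_neg h, W.un d h, W.un _ (by rwa [C.x_inv])]; norm_num
  have hz2 : 2 * ∑ d, (z d : ℤ) = ∑ d, (if x d then (5 : ℤ) else 2) := by
    rw [← Finset.sum_congr rfl fun d _ => hpair d, Finset.sum_add_distrib]
    have : ∑ d, (z (τ⁻¹ d) : ℤ) = ∑ d, (z d : ℤ) := Equiv.sum_comp τ⁻¹ (fun d => (z d : ℤ))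
    rw [this]; ring
  -- cycles of `τ` have two uncrossed or four crossed darts
  have hτ : 4 * (Fintype.card (Orb τ) : ℤ) ≤ ∑ d, (if x d then (1 : ℤ) else 2) := by
    have key : ∀ d, 4 ≤ ∑ e ∈ fib τ d, (if x e then 1 else 2) := by
      intro d
      have t1 : τ d ≠ d := fun h => stne d (by rw [h])
      by_cases h : x d
      · have t2 : τ (τ d) ≠ d := fun h' => C.s_rev_ne d (by rw [← C.tau_tau d h, h'])
        have t3 : τ (τ (τ d)) ≠ d := by
          intro h'
          have := C.tau_tau _ ((C.x_tau _).2 ((C.x_tau d).2 h))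
          rw [h', C.tau_tau d h, C.rev_rev] at this
          exact t1 this
        have := fib_le4 τ (fun e => if x e then 1 else 2) d t1 t2 t3
        simp only [C.x_tau, h, if_true] at this
        exact this
      · have := fib_le2 τ (fun e => if x e then 1 else 2) d t1
        simp only [C.x_tau, h, if_false] at this
        exact this
    have k2 : ∑ o : Orb τ, 4 ≤ ∑ o : Orb τ, ∑ e ∈ fib τ o.out, (if x e then 1 else 2) :=
      Finset.sum_le_sum fun o _ => key o.out
    rw [sum_fib τ] at k2
    simp only [Finset.sum_const, Finset.card_univ, smul_eq_mul] at k2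
    have k3 : ((∑ d, (if x d then 1 else 2) : ℕ) : ℤ) = ∑ d, (if x d then (1 : ℤ) else 2) := by
      push_cast; rfl
    rw [← k3]; omega
  have hE := euler C.planar
  rw [← hφ'] at hE
  -- every vertex receives charge at least six minus its degree
  have hvert0 : ∀ d, (∀ e, s e = s d → Z e = 4) →
      ∑ e ∈ fib σ d, (ch e + 1) = 3 * ((fib σ d).filter (fun e => ¬ x e)).card := by
    intro d h
    have hs : ∀ e ∈ fib σ d, s e = s d := fun e he => ((C.same _ _).1 ((mem_fib σ).1 he)).symm
    have e1 : ∑ e ∈ fib σ d, (ch e + 1) = ∑ e ∈ fib σ d, ((5 - (z e : ℤ)) - z (τ⁻¹ (σ e))) :=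
      Finset.sum_congr rfl fun e he => by rw [ch4 e (h e (hs e he)), φinv]; ring
    rw [e1, Finset.sum_sub_distrib, sum_fib_perm σ (fun e => (z (τ⁻¹ e) : ℤ)),
      ← Finset.sum_sub_distrib, Finset.card_filter]
    push_cast
    rw [Finset.mul_sum]
    refine Finset.sum_congr rfl fun e _ => ?_
    have := hpair e
    by_cases hx : x e <;> simp only [hx, if_true, if_false, not_true, not_false_iff] at * <;> omega
  have hvert : ∀ d, 6 ≤ ∑ e ∈ fib σ d, (ch e + 1) ∧ (∑ e ∈ fib σ d, (ch e + 1) = 6 →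
      (∀ e, s e = s d → Z e = 4) ∧ ((fib σ d).filter (fun e => ¬ x e)).card = 2) := by
    intro d
    by_cases h : ∀ e, s e = s d → Z e = 4
    · have hv := hvert0 d h
      rw [hv]
      obtain ⟨a, b, sa, sb, hab, xa, xb⟩ :=
        two_uncrossed C W hφ (fun e he => face e (h e he)) σ1 σ2 (d0 := d) rfl
      have : 2 ≤ ((fib σ d).filter (fun e => ¬ x e)).card := by
        rw [← Finset.card_pair hab]
        apply Finset.card_le_card
        intro e he
        rw [Finset.mem_insert, Finset.mem_singleton] at he
        rw [Finset.mem_filter, mem_fib, C.same]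
        rcases he with rfl | rfl
        · exact ⟨sa.symm, xa⟩
        · exact ⟨sb.symm, xb⟩
      refine ⟨by omega, fun h6 => ⟨h, by omega⟩⟩
    · push Not at h
      obtain ⟨e, he, hZe⟩ := h
      have e1 : ch e ≤ ∑ e ∈ fib σ d, ch e := Finset.single_le_sum (fun i _ => ch0 i)
        ((mem_fib σ).2 ((C.same _ _).2 he.symm))
      rw [ch6 e hZe] at e1
      have e2 : ∑ e ∈ fib σ d, (ch e + 1) = ∑ e ∈ fib σ d, ch e + (fib σ d).card := by
        rw [Finset.sum_add_distrib]; simp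
      have := hdeg d
      refine ⟨by omega, fun h6 => by omega⟩
  have hsum : ∑ o : Orb σ, ∑ e ∈ fib σ o.out, (ch e + 1) = ∑ d, ch d + Fintype.card D := by
    rw [sum_fib σ, Finset.sum_add_distrib]; simp
  have hle : ∑ o : Orb σ, (6 : ℤ) ≤ ∑ o : Orb σ, ∑ e ∈ fib σ o.out, (ch e + 1) :=
    Finset.sum_le_sum fun o _ => (hvert o.out).1
  have six : ∑ o : Orb σ, (6 : ℤ) = 6 * Fintype.card (Orb σ) := by simp [mul_comm]
  -- all sums in terms of the numbers of darts and of crossed darts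
  have s5 : ∑ d, (if x d then (5 : ℤ) else 2) =
      3 * ∑ d, (if x d then (1 : ℤ) else 0) + 2 * Fintype.card D := by
    rw [Finset.mul_sum, show (2 * Fintype.card D : ℤ) = ∑ d : D, 2 by simp [mul_comm],
      ← Finset.sum_add_distrib]
    exact Finset.sum_congr rfl fun d _ => by split <;> norm_num
  have s1 : ∑ d, (if x d then (1 : ℤ) else 2) =
      2 * Fintype.card D - ∑ d, (if x d then (1 : ℤ) else 0) := by
    rw [show (2 * Fintype.card D : ℤ) = ∑ d : D, 2 by simp [mul_comm],
      ← Finset.sum_sub_distrib]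
    exact Finset.sum_congr rfl fun d _ => by split <;> norm_num
  have s4 : ∑ d, (4 * (z d : ℤ) + 4) = 4 * ∑ d, (z d : ℤ) + 4 * Fintype.card D := by
    rw [Finset.sum_add_distrib, ← Finset.mul_sum]; simp [mul_comm]
  rw [s5] at hz2
  rw [s1] at hτ
  rw [s4] at hface'
  have hE' : (Fintype.card D : ℤ) + 2 ≤ Fintype.card (Orb σ) + Fintype.card (Orb τ) +
      Fintype.card (Orb φ) := by exact_mod_cast hE
  have main : (Fintype.card D : ℤ) + 16 ≤ 6 * Fintype.card (Orb σ) := by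
    rw [hsum, six] at hle
    linarith
  refine ⟨by exact_mod_cast main, fun heq d => ?_⟩
  have heq' : (Fintype.card D : ℤ) + 16 = 6 * Fintype.card (Orb σ) := by exact_mod_cast heq
  have hEq : ∑ o : Orb σ, (6 : ℤ) = ∑ o : Orb σ, ∑ e ∈ fib σ o.out, (ch e + 1) := by
    apply le_antisymm hle
    rw [hsum, six]; linarith
  have tight : ∀ d, (∀ e, s e = s d → Z e = 4) ∧
      ((fib σ d).filter (fun e => ¬ x e)).card = 2 := by
    intro d
    apply (hvert d).2
    have h1 := (Finset.sum_eq_sum_iff_of_le (fun o _ => (hvert o.out).1)).1 hEq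
      (Quotient.mk _ d : Orb σ) (Finset.mem_univ _)
    rw [h1]
    have : σ.SameCycle d (Quotient.mk _ d : Orb σ).out := by
      rw [← orb_eq, Quotient.out_eq]
    rw [fib_congr σ this]
  by_contra hlt
  have hd := hdeg d
  have h3 : (fib σ d).card = 3 := by omega
  -- three darts at the vertex, exactly two of them uncrossed
  obtain ⟨h, hh, hxh⟩ : ∃ h ∈ fib σ d, x h := by
    by_contra hno
    push Not at hno
    have := (tight d).2
    rw [Finset.filter_true_of_mem hno] at this
    omega
  have hcard : (fib σ h).card = 3 := by rw [← fib_congr σ ((mem_fib σ).1 hh), h3]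
  have h4 : σ (σ (σ h)) = h := by
    by_contra hne
    have := fib_le4 σ (fun _ => 1) h (σ1 h) (σ2 h) hne
    simp at this; omega
  have hcnt := (tight h).2
  rw [Finset.card_filter, ← fib_eq3 σ (fun e => if ¬ x e then 1 else 0) h (σ1 h) (σ2 h) h4] at hcnt
  have hx12 : ¬ x (σ h) ∧ ¬ x (σ (σ h)) := by
    by_cases e1 : x (σ h) <;> by_cases e2 : x (σ (σ h)) <;> simp [hxh, e1, e2] at hcnt ⊢
  refine no_three_two C W hφ (fun d => ?_) σ1 σ2 ?_ hxh hx12.1 hx12.2 h4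
  · have := face (φ d) ((tight (φ d)).1 _ rfl)
    rwa [hφ, inv_perm] at this
  · intro a b c hab hac xa xb xc nab nac
    by_contra nbc
    have : 3 ≤ ((fib σ a).filter (fun e => ¬ x e)).card := by
      rw [← Finset.card_eq_three.2 ⟨a, b, c, nab, nac, nbc, rfl⟩]
      apply Finset.card_le_card
      intro e he
      simp only [Finset.mem_insert, Finset.mem_singleton] at he
      rw [Finset.mem_filter, mem_fib, C.same]
      rcases he with rfl | rfl | rfl
      · exact ⟨rfl, xa⟩
      · exact ⟨hab, xb⟩
      · exact ⟨hac, xc⟩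
    have := (tight a).2
    omega

/-! ### The edge bound -/

lemma almostPlanar_mono {V : Type*} {G G' : SimpleGraph V} (h : G' ≤ G) (hG : G.AlmostPlanar) :
    G'.AlmostPlanar := by
  obtain ⟨Dr, hDr⟩ := hG
  let ι : G'.edgeSet → G.edgeSet := fun e => ⟨e, SimpleGraph.edgeSet_mono h e.2⟩
  have hι : ∀ e f, ι e = ι f → e = f := fun e f hef => by
    have h' : (ι e : Sym2 V) = ι f := congrArg Subtype.val hef
    exact Subtype.ext h'
  have hι' : ∀ e f, e ≠ f → ι e ≠ ι f := fun e f hn he => hn (hι e f he)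
  refine ⟨⟨Dr.pos, Dr.pos_inj, fun e => Dr.curve (ι e), fun e => Dr.curve_cont _,
    fun e => Dr.curve_inj _, fun e => Dr.curve_ends (ι e), fun e => Dr.interior_no_vertex _,
    fun e f hn => Dr.finite_meet _ _ (hι' e f hn), fun p e f g h1 h2 h3 =>
      Dr.no_triple_point p _ _ _ (hι' _ _ h1) (hι' _ _ h2) (hι' _ _ h3)⟩, ?_⟩
  intro e f g hf hg
  exact hι _ _ (hDr (ι e) (ι f) (ι g) ⟨hι' _ _ hf.1, hf.2⟩ ⟨hι' _ _ hg.1, hg.2⟩)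

open Classical in
/-- The extremal bound for minimum degree at least three on the vertex set `U`, with its
equality case. -/
theorem core {V : Type*} [Fintype V] (G : SimpleGraph V) (U : Finset V) (hne : U.Nonempty)
    (hU : ∀ a b, G.Adj a b → a ∈ U) (hdeg : ∀ v ∈ U, 3 ≤ G.degree v) (hcol : G.Colorable 2)
    (hap : G.AlmostPlanar) :
    G.edgeFinset.card + 8 ≤ 3 * U.card ∧
      (G.edgeFinset.card + 8 = 3 * U.card → ∀ v ∈ U, 4 ≤ G.degree v) := by
  obtain ⟨Dr, hDr⟩ := hap
  obtain ⟨c⟩ := hcol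
  obtain ⟨σ, q, same, hq1, hq2, planar⟩ := hypermap_of_drawing Dr hDr
  obtain ⟨τ, rev, x, C⟩ := resolve (sy := SimpleGraph.Dart.symm) (s := fun d => d.fst)
    (col := fun v => (c v : ZMod 2)) same planar (fun d => d.symm_symm)
    (fun d h => c.valid d.adj h.symm)
    (fun d d' h h' => by
      ext
      · exact h
      · exact h')
    hq1
    (fun d d₁ d₂ h1 h2 n1 n2 n3 n4 => by
      refine dedge_eq_iff.1 (hq2 d d₁ d₂ h1 h2 ?_ ?_)
      · intro h; rcases dedge_eq_iff.1 h with h | h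
        · exact n1 h
        · exact n2 h
      · intro h; rcases dedge_eq_iff.1 h with h | h
        · exact n3 h
        · exact n4 h)
  have hfib : ∀ d, (fib σ d).card = G.degree d.fst := by
    intro d
    rw [← G.dart_fst_fiber_card_eq_degree d.fst]
    congr 1
    ext e
    rw [mem_fib, same, Finset.mem_filter]
    simp [eq_comm]
  have hdart : ∀ v ∈ U, ∃ d : G.Dart, d.fst = v := by
    intro v hv
    have : 0 < G.degree v := by have := hdeg v hv; omega
    obtain ⟨w, hw⟩ := (G.degree_pos_iff_exists_adj v).1 this
    exact ⟨⟨(v, w), hw⟩, rfl⟩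
  obtain ⟨v0, hv0⟩ := hne
  obtain ⟨d0, -⟩ := hdart v0 hv0
  have : Nonempty G.Dart := ⟨d0⟩
  have hdU : ∀ d : G.Dart, d.fst ∈ U := fun d => hU _ _ d.adj
  obtain ⟨h1, h2⟩ := discharge C (fun d => by rw [hfib]; exact hdeg _ (hdU d))
  have hO : Fintype.card (Orb σ) ≤ U.card := by
    rw [← Fintype.card_coe U]
    refine Fintype.card_le_of_injective (fun o => ⟨o.out.fst, hdU _⟩) ?_
    intro o o' h
    have h' : o.out.fst = o'.out.fst := congrArg Subtype.val h
    rw [← same, ← orb_eq, Quotient.out_eq, Quotient.out_eq] at h'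
    exact h'
  have hD := G.dart_card_eq_twice_card_edges
  refine ⟨by omega, fun heq v hv => ?_⟩
  obtain ⟨d, rfl⟩ := hdart v hv
  rw [← hfib]
  exact h2 (by omega) d

open Classical in
/-- A bipartite graph on four vertices has at most four edges. -/
lemma card_le_four {V : Type*} [Fintype V] (G : SimpleGraph V) (U : Finset V)
    (hU : ∀ a b, G.Adj a b → a ∈ U) (hcol : G.Colorable 2) (h4 : U.card = 4) :
    G.edgeFinset.card ≤ 4 := by
  obtain ⟨c⟩ := hcol
  have hb : G.IsBipartiteWith (U.filter (fun v => c v = 0) : Finset V)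
      (U.filter (fun v => ¬ c v = 0) : Finset V) := by
    constructor
    · rw [Finset.disjoint_coe]
      exact Finset.disjoint_filter_filter_not _ _ _
    · intro a b hab
      have ha := hU a b hab
      have hb := hU b a hab.symm
      have hc := c.valid hab
      simp only [Finset.coe_filter, Set.mem_ofPred_eq, ha, hb, true_and]
      generalize c a = p at hc
      generalize c b = q at hc
      revert p q
      decide
  have hs := SimpleGraph.isBipartiteWith_sum_degrees_eq_card_edges hb
  have hle := Finset.sum_le_card_nsmul _ _ _
    (fun v hv => SimpleGraph.isBipartiteWith_degree_le hb (Finset.mem_coe.2 hv))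
  rw [hs, smul_eq_mul] at hle
  have hc := Finset.card_filter_add_card_filter_not (s := U) (fun v => c v = 0)
  rw [h4] at hc
  generalize (U.filter (fun v => c v = 0)).card = p at *
  generalize (U.filter (fun v => ¬ c v = 0)).card = q at *
  have : p ≤ 4 := by omega
  interval_cases p <;> omega

open Classical in
/-- A bipartite almost planar graph whose edges lie in a set `U` of at least four vertices has at most
`3 * U.card - 8` edges, by deleting vertices of degree at most two. -/
theorem bound {V : Type*} [Fintype V] (n : ℕ) : ∀ (G : SimpleGraph V) (U : Finset V),
    (∀ a b, G.Adj a b → a ∈ U) → G.Colorable 2 → G.AlmostPlanar → U.card = n + 4 →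
    G.edgeFinset.card + 8 ≤ 3 * U.card := by
  induction n with
  | zero =>
    intro G U hU hcol _ h4
    have := card_le_four G U hU hcol h4
    omega
  | succ n ih =>
    intro G U hU hcol hap hn
    by_cases hdeg : ∀ v ∈ U, 3 ≤ G.degree v
    · exact (core G U (Finset.card_pos.1 (by omega)) hU hdeg hcol hap).1
    · push Not at hdeg
      obtain ⟨v, hv, hlt⟩ := hdeg
      have hle := G.deleteIncidenceSet_le v
      have := ih (G.deleteIncidenceSet v) (U.erase v) (fun a b hab => by
          rw [SimpleGraph.deleteIncidenceSet_adj] at hab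
          exact Finset.mem_erase.2 ⟨hab.2.1, hU a b hab.1⟩)
        (hcol.mono_left hle) (almostPlanar_mono hle hap)
        (by rw [Finset.card_erase_of_mem hv]; omega)
      have hc := G.card_edgeFinset_deleteIncidenceSet v
      have hce := Finset.card_erase_of_mem hv
      have : (G.deleteIncidenceSet v).edgeFinset.card + 8 ≤ 3 * (U.erase v).card := by
        convert this
      omega

end AP

/-- There is no bipartite almost planar simple graph on `v ≥ 5` vertices with exactly
`3v - 8` edges containing a vertex of degree at most `3`. -/
theorem no_extremal_with_small_degree {V : Type*} [Fintype V] (H : SimpleGraph V)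
    (hcard : 5 ≤ Fintype.card V) (hbip : H.Colorable 2) (hap : H.AlmostPlanar)
    (hedges : H.edgeSet.ncard = 3 * Fintype.card V - 8) :
    ¬ ∃ x : V, (H.neighborSet x).ncard ≤ 3 := by
  classical
  rintro ⟨x, hx⟩
  rw [Set.ncard_eq_toFinset_card'] at hx hedges
  have hx : H.degree x ≤ 3 := hx
  have hedges : H.edgeFinset.card = 3 * Fintype.card V - 8 := hedges
  have hU := Finset.card_univ (α := V)
  by_cases hdeg : ∀ v ∈ (Finset.univ : Finset V), 3 ≤ H.degree v
  · have := (AP.core H Finset.univ (Finset.card_pos.1 (by omega)) (fun _ _ _ => Finset.mem_univ _)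
      (by convert hdeg) hbip hap).2 (by
        have : H.edgeFinset.card + 8 = 3 * Fintype.card V := by omega
        rw [hU]; convert this) x (Finset.mem_univ _)
    have : 4 ≤ H.degree x := by convert this
    omega
  · push Not at hdeg
    obtain ⟨v, hv, hlt⟩ := hdeg
    have hle := H.deleteIncidenceSet_le v
    have hce := Finset.card_erase_of_mem hv
    have := AP.bound (Fintype.card V - 5) (H.deleteIncidenceSet v) (Finset.univ.erase v)
      (fun a b hab => by
        rw [SimpleGraph.deleteIncidenceSet_adj] at hab
        exact Finset.mem_erase.2 ⟨hab.2.1, Finset.mem_univ _⟩)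
      (hbip.mono_left hle) (AP.almostPlanar_mono hle hap) (by rw [hce]; omega)
    have hc := H.card_edgeFinset_deleteIncidenceSet v
    have : (H.deleteIncidenceSet v).edgeFinset.card + 8 ≤ 3 * (Finset.univ.erase v).card := by
      convert this
    omega
end

section
/- For every even integer v ≥ 4 with v ≠ 6, there exists a bipartite almost planar simple graph on v vertices with exactly 3v − 8 edges. -/
open Set

/-!
Write `v = 2 m`. The cycle `0, 1, …, v - 1` has `v` edges. Inside it, add all chords `{i, j}` with
`i + j ≡ ±1 (mod v)`: they form a ladder in which every chord crosses exactly one other, and there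
are `2 (m - 2)` of them. Outside it, add the rotated ladder of all chords with
`i + j ≡ 3, 5 (mod v)`. For `m ≥ 4` the residues `-1, 1, 3, 5` are distinct modulo `v`, so the two
ladders are disjoint and the graph has `2 m + 4 (m - 2) = 3 v - 8` edges; for `m = 2` there are no
chords and the cycle has the required `4` edges. All edges join vertices of different parity.

To draw the graph, cut the cycle open and put the vertices at the points `(i, 0)`; the edge
`{a, b}` becomes the arc of the parabola `y = ±(x - a)(b - x)`, above the axis for the first ladder
and below it for the second. All these parabolas are congruent, so two of them on the same side
meet at most once, and inner points can be shared only if the end points interleave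
(`interleaved_of_mem`). This reduces almost planarity to a condition on pairs of integers
(`almostPlanar_of_pages`), which `crossing_pairs` settles. The edge count is an explicit
enumeration of the pairs (`arcEnum`).
-/

/-! ### Parabolic arcs -/

/-- The arc over the interval `[a, b]` of the parabola `y = σ (x - a) (b - x)`, drawn above the
`x`-axis for `σ = 1` and below it for `σ = -1`. -/
def parabolicArc (σ a b t : ℝ) : ℝ × ℝ :=
  (a + (b - a) * t, σ * ((b - a) ^ 2 * (t * (1 - t))))

lemma continuous_parabolicArc (σ a b : ℝ) : Continuous (parabolicArc σ a b) := by
  unfold parabolicArc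
  fun_prop

lemma parabolicArc_injective (σ : ℝ) {a b : ℝ} (h : a < b) :
    Function.Injective (parabolicArc σ a b) := by
  intro s t hst
  have h1 : a + (b - a) * s = a + (b - a) * t := congrArg Prod.fst hst
  exact mul_left_cancel₀ (sub_ne_zero.2 h.ne') (add_left_cancel h1)

lemma mem_closed_arc {σ a b : ℝ} (h : a < b) {p : ℝ × ℝ}
    (hp : p ∈ parabolicArc σ a b '' Icc 0 1) :
    a ≤ p.1 ∧ p.1 ≤ b ∧ p.2 = σ * ((p.1 - a) * (b - p.1)) := by
  obtain ⟨t, ⟨h0, h1⟩, rfl⟩ := hp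
  refine ⟨?_, ?_, ?_⟩ <;> simp only [parabolicArc]
  · nlinarith
  · nlinarith
  · ring

lemma mem_open_arc {σ a b : ℝ} (h : a < b) {p : ℝ × ℝ}
    (hp : p ∈ parabolicArc σ a b '' Ioo 0 1) :
    a < p.1 ∧ p.1 < b ∧ p.2 = σ * ((p.1 - a) * (b - p.1)) := by
  obtain ⟨t, ⟨h0, h1⟩, rfl⟩ := hp
  refine ⟨?_, ?_, ?_⟩ <;> simp only [parabolicArc]
  · nlinarith [mul_pos (sub_pos.2 h) h0]
  · nlinarith [mul_pos (sub_pos.2 h) (sub_pos.2 h1)]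
  · ring

/-- The endpoints `a, b` and `c, d` alternate strictly. -/
def Interleaved {α : Type*} [LT α] (a b c d : α) : Prop :=
  (a < c ∧ c < b ∧ b < d) ∨ (c < a ∧ a < d ∧ d < b)

/-- Of two nested arcs on one side of the axis, the one over the larger interval lies strictly
farther from the axis; hence arcs whose interiors meet have interleaved endpoints. -/
lemma interleaved_of_mem {σ τ a b c d : ℝ} (hσ : σ = 1 ∨ σ = -1) (hτ : τ = 1 ∨ τ = -1)
    (hab : a < b) (hcd : c < d) (hne : ¬ (a = c ∧ b = d)) {p : ℝ × ℝ}
    (hp : p ∈ parabolicArc σ a b '' Ioo 0 1) (hq : p ∈ parabolicArc τ c d '' Ioo 0 1) :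
    σ = τ ∧ Interleaved a b c d := by
  obtain ⟨ha, hb, hy⟩ := mem_open_arc hab hp
  obtain ⟨hc, hd, hy'⟩ := mem_open_arc hcd hq
  set x := p.1
  have P1 : 0 < (x - a) * (b - x) := mul_pos (by linarith) (by linarith)
  have P2 : 0 < (x - c) * (d - x) := mul_pos (by linarith) (by linarith)
  have hστ : σ = τ := by
    rcases hσ with rfl | rfl <;> rcases hτ with rfl | rfl <;> first | rfl | (exfalso; linarith)
  refine ⟨hστ, ?_⟩
  have heq : (x - a) * (b - x) = (x - c) * (d - x) := by
    subst hστ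
    rcases hσ with rfl | rfl <;> linarith
  rcases lt_trichotomy a c with h | h | h
  · have : b < d := by
      by_contra! hbd
      nlinarith [mul_pos (sub_pos.2 h) (sub_pos.2 hd),
        mul_nonneg (sub_nonneg.2 hbd) (sub_nonneg.2 ha.le)]
    exact Or.inl ⟨h, hc.trans hb, this⟩
  · subst h
    exact absurd ⟨rfl, by linarith [mul_left_cancel₀ (sub_ne_zero.2 ha.ne') heq]⟩ hne
  · have : d < b := by
      by_contra! hbd
      nlinarith [mul_pos (sub_pos.2 h) (sub_pos.2 hb),
        mul_nonneg (sub_nonneg.2 hbd) (sub_nonneg.2 hc.le)]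
    exact Or.inr ⟨h, ha.trans hd, this⟩

lemma finite_arc_inter {σ τ a b c d : ℝ} (hσ : σ = 1 ∨ σ = -1) (hτ : τ = 1 ∨ τ = -1)
    (hab : a < b) (hcd : c < d) (hne : ¬ (a = c ∧ b = d)) :
    (parabolicArc σ a b '' Icc 0 1 ∩ parabolicArc τ c d '' Icc 0 1).Finite := by
  by_cases hστ : σ = τ
  · -- The two quadratics have the same leading coefficient, so their difference is linear.
    subst hστ
    refine Set.Subsingleton.finite ?_
    rintro p ⟨hp, hp'⟩ q ⟨hq, hq'⟩
    obtain ⟨ha, hb, hy⟩ := mem_closed_arc hab hp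
    obtain ⟨hc, hd, hy'⟩ := mem_closed_arc hcd hp'
    obtain ⟨ha1, hb1, hz⟩ := mem_closed_arc hab hq
    obtain ⟨hc1, hd1, hz'⟩ := mem_closed_arc hcd hq'
    have e1 : (p.1 - a) * (b - p.1) = (p.1 - c) * (d - p.1) := by
      rcases hσ with rfl | rfl <;> linarith
    have e2 : (q.1 - a) * (b - q.1) = (q.1 - c) * (d - q.1) := by
      rcases hσ with rfl | rfl <;> linarith
    have hx : p.1 = q.1 := by
      have e3 : (a + b - c - d) * (p.1 - q.1) = 0 := by linear_combination e1 - e2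
      rcases mul_eq_zero.1 e3 with h | h
      · exfalso
        apply hne
        have hd' : d = a + b - c := by linarith
        have e4 : (c - a) * (c - b) = 0 := by subst hd'; linear_combination -e1
        rcases mul_eq_zero.1 e4 with h' | h'
        · constructor <;> linarith
        · exfalso; linarith
      · linarith
    exact Prod.ext hx (by rw [hy, hz, hx])
  · -- On opposite sides the arcs can meet only on the axis, at the ends of either arc.
    refine Set.Finite.subset (Set.toFinite {((a, 0) : ℝ × ℝ), (b, 0)}) ?_
    rintro p ⟨hp, hp'⟩
    obtain ⟨ha, hb, hy⟩ := mem_closed_arc hab hp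
    obtain ⟨hc, hd, hy'⟩ := mem_closed_arc hcd hp'
    have P1 : 0 ≤ (p.1 - a) * (b - p.1) := mul_nonneg (by linarith) (by linarith)
    have P2 : 0 ≤ (p.1 - c) * (d - p.1) := mul_nonneg (by linarith) (by linarith)
    have hz : (p.1 - a) * (b - p.1) = 0 := by
      rcases hσ with rfl | rfl <;> rcases hτ with rfl | rfl <;>
        first | exact absurd rfl hστ | linarith
    have hy0 : p.2 = 0 := by rw [hy, hz, mul_zero]
    rcases mul_eq_zero.1 hz with h | h
    · exact Or.inl (Prod.ext (by simpa using sub_eq_zero.1 h) hy0)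
    · exact Or.inr (Prod.ext (by simpa using (sub_eq_zero.1 h).symm) hy0)

/-! ### Two-page drawings -/

/-- The side of the axis used by an edge: above if `P` holds, below otherwise. -/
noncomputable def side (P : Prop) : ℝ := open Classical in if P then 1 else -1

lemma side_eq (P : Prop) : side P = 1 ∨ side P = -1 := by
  unfold side; split_ifs <;> simp

lemma side_inj {P Q : Prop} (h : side P = side Q) : P ↔ Q := by
  unfold side at h
  split_ifs at h <;> first | tauto | norm_num at h

/-- Placing the vertices `0, …, v - 1` on a line in this order and every edge on one of the two
half-planes, as prescribed by `up`, two edges can cross only when they lie on the same side and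
have interleaved ends. If each edge has at most one such partner, the graph is almost planar. -/
theorem almostPlanar_of_pages {v : ℕ} (G : SimpleGraph (Fin v)) (up : Fin v → Fin v → Prop)
    (H : ∀ a b c d c' d' : Fin v, a < b → c < d → c' < d' → G.Adj a b → G.Adj c d → G.Adj c' d' →
      (up a b ↔ up c d) → Interleaved a b c d →
      (up a b ↔ up c' d') → Interleaved a b c' d' → c = c' ∧ d = d') :
    G.AlmostPlanar := by
  have hends : ∀ e : G.edgeSet, ∃ a b : Fin v, a < b ∧ (e : Sym2 (Fin v)) = s(a, b) := by
    rintro ⟨e, he⟩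
    induction e using Sym2.ind with
    | _ x y =>
      have hxy : G.Adj x y := he
      rcases lt_or_gt_of_ne hxy.ne with h | h
      · exact ⟨x, y, h, rfl⟩
      · exact ⟨y, x, h, Sym2.eq_swap⟩
  choose lo hi hlt heq using hends
  have hadj : ∀ e, G.Adj (lo e) (hi e) := fun e => by
    have := e.2
    rwa [heq e] at this
  have hlt' : ∀ e, ((lo e : ℕ) : ℝ) < ((hi e : ℕ) : ℝ) := fun e => by exact_mod_cast hlt e
  have hne : ∀ e f, e ≠ f →
      ¬ (((lo e : ℕ) : ℝ) = ((lo f : ℕ) : ℝ) ∧ ((hi e : ℕ) : ℝ) = ((hi f : ℕ) : ℝ)) := by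
    rintro e f hef ⟨h1, h2⟩
    apply hef
    apply Subtype.ext
    rw [heq e, heq f, Fin.ext (Nat.cast_injective h1), Fin.ext (Nat.cast_injective h2)]
  let crv : G.edgeSet → ℝ → ℝ × ℝ := fun e =>
    parabolicArc (side (up (lo e) (hi e))) ((lo e : ℕ) : ℝ) ((hi e : ℕ) : ℝ)
  have hcross : ∀ e f, e ≠ f → ∀ p, p ∈ crv e '' Ioo 0 1 → p ∈ crv f '' Ioo 0 1 →
      (up (lo e) (hi e) ↔ up (lo f) (hi f)) ∧ Interleaved (lo e) (hi e) (lo f) (hi f) := by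
    intro e f hef p hp hq
    obtain ⟨h1, h2⟩ := interleaved_of_mem (side_eq _) (side_eq _) (hlt' e) (hlt' f)
      (hne e f hef) hp hq
    refine ⟨side_inj h1, ?_⟩
    simpa only [Interleaved, Nat.cast_lt, Fin.val_fin_lt] using h2
  have huniq : ∀ e f g, e ≠ f → e ≠ g → ∀ p q, p ∈ crv e '' Ioo 0 1 → p ∈ crv f '' Ioo 0 1 →
      q ∈ crv e '' Ioo 0 1 → q ∈ crv g '' Ioo 0 1 → f = g := by
    intro e f g hef heg p q hpe hpf hqe hqg
    obtain ⟨u1, i1⟩ := hcross e f hef p hpe hpf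
    obtain ⟨u2, i2⟩ := hcross e g heg q hqe hqg
    obtain ⟨h1, h2⟩ := H _ _ _ _ _ _ (hlt e) (hlt f) (hlt g) (hadj e) (hadj f) (hadj g) u1 i1 u2 i2
    apply Subtype.ext
    rw [heq f, heq g, h1, h2]
  refine ⟨{ pos := fun i => (((i : ℕ) : ℝ), 0)
            pos_inj := fun i j h => Fin.ext (Nat.cast_injective (congrArg Prod.fst h))
            curve := crv
            curve_cont := fun e => (continuous_parabolicArc _ _ _).continuousOn
            curve_inj := fun e => (parabolicArc_injective _ (hlt' e)).injOn
            curve_ends := fun e => ⟨lo e, hi e, heq e, by simp [crv, parabolicArc],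
              by simp [crv, parabolicArc]⟩
            interior_no_vertex := ?_
            finite_meet := fun e f hef =>
              finite_arc_inter (side_eq _) (side_eq _) (hlt' e) (hlt' f) (hne e f hef)
            -- Three concurrent edges would give one of them two crossing partners.
            no_triple_point := fun p e f g hef heg hfg he hf hg =>
              hfg (huniq e f g hef heg p p he hf he hg) }, ?_⟩
  · intro e t ht i h
    obtain ⟨ha, hb, hy⟩ := mem_open_arc (hlt' e) (mem_image_of_mem (crv e) ht)
    have P : 0 < ((crv e t).1 - ((lo e : ℕ) : ℝ)) * (((hi e : ℕ) : ℝ) - (crv e t).1) :=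
      mul_pos (by linarith) (by linarith)
    have h0 : (crv e t).2 = 0 := congrArg Prod.snd h
    rcases side_eq (up (lo e) (hi e)) with hs | hs <;> rw [hs] at hy <;> linarith
  · rintro e f g ⟨hef, p, hpe, hpf⟩ ⟨heg, q, hqe, hqg⟩
    exact huniq e f g hef heg p q hpe hpf hqe hqg

/-! ### The extremal graph -/

/-- The pair `a < b` is drawn above the axis. -/
def IsUpper (v a b : ℕ) : Prop := a + b = v - 1 ∨ a + b = v + 1

/-- The pairs `a < b` joined by an edge: those of the path `0, 1, …, v - 1`, those with
sum `v ± 1` (among them `0, v - 1`, which closes the path to a Hamiltonian cycle), and those whose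
sum is congruent to `3` or `5` modulo `v`. -/
def IsArc (v a b : ℕ) : Prop :=
  a < b ∧ (b = a + 1 ∨ IsUpper v a b ∨ a + b = 3 ∨ a + b = 5 ∨ a + b = v + 3 ∨ a + b = v + 5)

/-- The graph on `0, …, v - 1` whose edges are the pairs described by `IsArc`. -/
def ladderGraph (v : ℕ) : SimpleGraph (Fin v) where
  Adj x y := IsArc v x y ∨ IsArc v y x
  symm := ⟨fun _ _ h => h.symm⟩
  loopless := ⟨fun x h => by
    rcases h with h | h <;> exact absurd h.1 (lt_irrefl _)⟩

lemma ladderGraph_colorable {v : ℕ} (hv : 4 ≤ v) (heven : Even v) :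
    (ladderGraph v).Colorable 2 := by
  refine ⟨SimpleGraph.Coloring.mk (fun x => (⟨x.1 % 2, Nat.mod_lt _ (by norm_num)⟩ : Fin 2)) ?_⟩
  intro x y h hxy
  have hxy' : x.1 % 2 = y.1 % 2 := congrArg Fin.val hxy
  obtain ⟨m, rfl⟩ := heven
  rcases h with ⟨_, h⟩ | ⟨_, h⟩ <;> unfold IsUpper at h <;> omega

/-- On either side of the axis, interleaved arcs have sums `s` and `s + 2` and are translates of
one another by `1`, except for the pair `{0, 5}`, `{4, v - 1}`, whose sums `5` and `v + 3` differ
by `2` only modulo `v`. -/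
lemma crossing_pairs {m a b c d : ℕ} (hv : 4 ≤ m + m) (hd : d < m + m)
    (hac : a < c) (hcb : c < b) (hbd : b < d)
    (e1 : b = a + 1 ∨ (a + b = m + m - 1 ∨ a + b = m + m + 1) ∨
      a + b = 3 ∨ a + b = 5 ∨ a + b = m + m + 3 ∨ a + b = m + m + 5)
    (e2 : d = c + 1 ∨ (c + d = m + m - 1 ∨ c + d = m + m + 1) ∨
      c + d = 3 ∨ c + d = 5 ∨ c + d = m + m + 3 ∨ c + d = m + m + 5)
    (u : (a + b = m + m - 1 ∨ a + b = m + m + 1) ↔ (c + d = m + m - 1 ∨ c + d = m + m + 1)) :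
    (c = a + 1 ∧ d = b + 1 ∧ (a + b = m + m - 1 ∨ a + b = 3 ∨ a + b = m + m + 3)) ∨
      (a = 0 ∧ b = 5 ∧ c = 4 ∧ d + 1 = m + m) := by
  rcases e1 with e | (e | e) | e | e | e | e <;> rcases e2 with f | (f | f) | f | f | f | f <;>
    omega

lemma ladderGraph_almostPlanar {v : ℕ} (hv : 4 ≤ v) (heven : Even v) :
    (ladderGraph v).AlmostPlanar := by
  refine almostPlanar_of_pages _ (fun a b => IsUpper v a b) ?_
  have key : ∀ a b : Fin v, a < b → (ladderGraph v).Adj a b → IsArc v a b := by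
    rintro a b hab (h | h)
    · exact h
    · exact absurd h.1 (not_lt.2 (Fin.le_def.1 hab.le))
  intro a b c d c' d' hab hcd hcd' h1 h2 h3 u1 i1 u2 i2
  obtain ⟨l1, e1⟩ := key a b hab h1
  obtain ⟨l2, e2⟩ := key c d hcd h2
  obtain ⟨l3, e3⟩ := key c' d' hcd' h3
  obtain ⟨m, rfl⟩ := heven
  simp only [Interleaved, Fin.lt_def, IsUpper, Fin.ext_iff] at *
  have := b.2
  have := d.2
  have := d'.2
  generalize a.1 = a at *
  generalize b.1 = b at *
  generalize c.1 = c at *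
  generalize d.1 = d at *
  generalize c'.1 = c' at *
  generalize d'.1 = d' at *
  clear h1 h2 h3 key
  rcases i1 with ⟨p1, p2, p3⟩ | ⟨p1, p2, p3⟩ <;> rcases i2 with ⟨q1, q2, q3⟩ | ⟨q1, q2, q3⟩
  · have r1 := crossing_pairs hv ‹d < m + m› p1 p2 p3 e1 e2 u1
    have r2 := crossing_pairs hv ‹d' < m + m› q1 q2 q3 e1 e3 u2
    omega
  · have r1 := crossing_pairs hv ‹d < m + m› p1 p2 p3 e1 e2 u1
    have r2 := crossing_pairs hv ‹b < m + m› q1 q2 q3 e3 e1 u2.symm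
    omega
  · have r1 := crossing_pairs hv ‹b < m + m› p1 p2 p3 e2 e1 u1.symm
    have r2 := crossing_pairs hv ‹d' < m + m› q1 q2 q3 e1 e3 u2
    omega
  · have r1 := crossing_pairs hv ‹b < m + m› p1 p2 p3 e2 e1 u1.symm
    have r2 := crossing_pairs hv ‹b < m + m› q1 q2 q3 e3 e1 u2.symm
    omega

/-- An enumeration of the arcs: first the path, then the nonconsecutive pairs with sums `v - 1`,
`v + 1`, the three such pairs with sums `3` and `5`, and those with sums `v + 3`, `v + 5`,
where `v = 2 m` and `k < 3 v - 8`. -/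
def arcEnum (m k : ℕ) : ℕ × ℕ :=
  if k < 2 * m - 1 then (k, k + 1)
  else if k < 3 * m - 2 then (k - (2 * m - 1), 4 * m - 2 - k)
  else if k < 4 * m - 4 then (k - (3 * m - 4), 5 * m - 3 - k)
  else if k = 4 * m - 4 then (0, 3)
  else if k = 4 * m - 3 then (0, 5)
  else if k = 4 * m - 2 then (1, 4)
  else if k < 5 * m - 4 then (k - (4 * m - 5), 6 * m - 2 - k)
  else (k - (5 * m - 10), 7 * m - 5 - k)

set_option maxHeartbeats 2000000 in
/-- For `m = 3` this fails: the pair `(0, 5)` is listed twice, for the sums `v - 1` and `5`. -/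
lemma arcEnum_injOn {m : ℕ} (hm : 2 ≤ m) (hm3 : m ≠ 3) :
    InjOn (arcEnum m) (Finset.range (6 * m - 8) : Set ℕ) := by
  intro k hk l hl h
  simp only [Finset.coe_range, mem_Iio] at hk hl
  unfold arcEnum at h
  split_ifs at h <;> simp only [Prod.mk.injEq] at h <;> omega

lemma arcEnum_mem {m k : ℕ} (hm : 2 ≤ m) (hk : k < 6 * m - 8) :
    (arcEnum m k).2 < 2 * m ∧ IsArc (2 * m) (arcEnum m k).1 (arcEnum m k).2 := by
  unfold arcEnum IsArc IsUpper
  split_ifs <;> dsimp only <;> omega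

set_option maxHeartbeats 2000000 in
lemma exists_arcEnum {m a b : ℕ} (hm : 2 ≤ m) (hb : b < 2 * m)
    (h : IsArc (2 * m) a b) : ∃ k < 6 * m - 8, arcEnum m k = (a, b) := by
  unfold arcEnum
  obtain ⟨hab, h⟩ := h
  unfold IsUpper at h
  by_cases hc : b = a + 1
  · refine ⟨a, by omega, ?_⟩
    rw [if_pos (by omega), hc]
  by_cases h1 : a + b = 2 * m - 1
  · refine ⟨a + (2 * m - 1), by omega, ?_⟩
    split_ifs <;> simp only [Prod.mk.injEq] <;> omega
  by_cases h2 : a + b = 2 * m + 1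
  · refine ⟨a + (3 * m - 4), by omega, ?_⟩
    split_ifs <;> simp only [Prod.mk.injEq] <;> omega
  by_cases h3 : a + b = 3
  · refine ⟨4 * m - 4, by omega, ?_⟩
    split_ifs <;> simp only [Prod.mk.injEq] <;> omega
  by_cases h4 : a + b = 5
  · refine ⟨4 * m - 3 + a, by omega, ?_⟩
    split_ifs <;> simp only [Prod.mk.injEq] <;> omega
  by_cases h5 : a + b = 2 * m + 3
  · refine ⟨a + (4 * m - 5), by omega, ?_⟩
    split_ifs <;> simp only [Prod.mk.injEq] <;> omega
  · refine ⟨a + 5 * m - 10, by omega, ?_⟩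
    split_ifs <;> simp only [Prod.mk.injEq] <;> omega

lemma ncard_edgeSet_ladderGraph {v : ℕ} (hv : 4 ≤ v) (heven : Even v) (hv6 : v ≠ 6) :
    (ladderGraph v).edgeSet.ncard = 3 * v - 8 := by
  obtain ⟨m, rfl⟩ := heven.exists_two_nsmul
  rw [smul_eq_mul] at *
  have hm : 2 ≤ m := by omega
  have hm3 : m ≠ 3 := by omega
  have hcard : {p : ℕ × ℕ | p.2 < 2 * m ∧ IsArc (2 * m) p.1 p.2}.ncard = 3 * (2 * m) - 8 := by
    have himg : {p : ℕ × ℕ | p.2 < 2 * m ∧ IsArc (2 * m) p.1 p.2} =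
        arcEnum m '' (Finset.range (6 * m - 8) : Set ℕ) := by
      ext ⟨a, b⟩
      simp only [mem_ofPred_eq, Finset.coe_range, mem_image, mem_Iio]
      constructor
      · rintro ⟨hb, h⟩
        exact exists_arcEnum hm hb h
      · rintro ⟨k, hk, h⟩
        have := arcEnum_mem hm hk
        rwa [h] at this
    rw [himg, (arcEnum_injOn hm hm3).ncard_image, ncard_coe_finset, Finset.card_range]
    omega
  rw [← hcard]
  symm
  refine ncard_congr (fun p hp => s(⟨p.1, hp.2.1.trans hp.1⟩, ⟨p.2, hp.1⟩)) ?_ ?_ ?_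
  · rintro ⟨a, b⟩ ⟨hb, h⟩
    exact Or.inl h
  · rintro ⟨a, b⟩ ⟨c, d⟩ ⟨hb, h⟩ ⟨hd, h'⟩ heq
    have l1 := h.1
    have l2 := h'.1
    simp only [Sym2.eq_iff, Fin.mk.injEq] at heq
    simp only [Prod.mk.injEq]
    simp only at l1 l2
    omega
  · intro e he
    induction e using Sym2.ind with
    | _ x y =>
      rcases he with h | h
      · exact ⟨(x, y), ⟨y.2, h⟩, rfl⟩
      · exact ⟨(y, x), ⟨x.2, h⟩, Sym2.eq_swap⟩

/-- For every even `v ≥ 4` with `v ≠ 6` there is a bipartite almost planar simple graph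
on `v` vertices with exactly `3v - 8` edges. -/
theorem exists_extremal_bipartite_almostPlanar_even (v : ℕ) (hv : 4 ≤ v)
    (heven : Even v) (hv6 : v ≠ 6) :
    ∃ G : SimpleGraph (Fin v), G.Colorable 2 ∧ G.AlmostPlanar ∧
      G.edgeSet.ncard = 3 * v - 8 := by
  exact ⟨ladderGraph v, ladderGraph_colorable hv heven, ladderGraph_almostPlanar hv heven,
    ncard_edgeSet_ladderGraph hv heven hv6⟩
end
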